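/- arXiv:1011.5707 — 3 statements merged into one kernel-verified Lean document; each statement's English description precedes it below -/
import Mathlib

section
/- For every integer n ≥ 2 and every integer i ≥ 1, the topological n-th homotopy group π_n^top(Y_i^{(n)}, 0) of the union of the first i spheres of the n-dimensional Hawaiian earring carries the discrete topology. -/
open scoped Topology Topology.Homotopy unitInterval

noncomputable section

/-- The quotient topology on the `N`-th homotopy group, induced from the compact-open
topology on the space of generalized loops. -/
instance homotopyGroupTopology (N X : Type*) [TopologicalSpace X] (x : X) :
    TopologicalSpace (HomotopyGroup N X x) :=
  inferInstanceAs (TopologicalSpace (Quotient (GenLoop.Homotopic.setoid N x)))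

/-- The `n`-sphere of radius `1/j` centered at `(1/j, 0, …, 0)` in `ℝ^{n+1}`
(it passes through the origin). -/
def hawSphere (n j : ℕ) : Set (EuclideanSpace ℝ (Fin (n+1))) :=
  Metric.sphere (EuclideanSpace.single (0 : Fin (n+1)) ((1 : ℝ)/j)) (1/j)

/-- The `n`-dimensional Hawaiian earring: the union of the spheres `hawSphere n j`, `j ≥ 1`. -/
def hawaiian (n : ℕ) : Set (EuclideanSpace ℝ (Fin (n+1))) :=
  ⋃ j ∈ {j : ℕ | 1 ≤ j}, hawSphere n j

/-- The union `Y_i^{(n)}` of the first `i` spheres of the `n`-dimensional Hawaiian earring. -/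
def Ysub (n i : ℕ) : Set (EuclideanSpace ℝ (Fin (n+1))) :=
  ⋃ j ∈ Finset.Icc 1 i, hawSphere n j

lemma zero_mem_hawSphere (n j : ℕ) : (0 : EuclideanSpace ℝ (Fin (n+1))) ∈ hawSphere n j := by
  have : dist (0 : EuclideanSpace ℝ (Fin (n+1)))
      (EuclideanSpace.single (0 : Fin (n+1)) ((1 : ℝ)/j)) = 1/j := by
    rw [dist_zero_left, EuclideanSpace.norm_single, Real.norm_eq_abs,
      abs_of_nonneg (one_div_nonneg.mpr (Nat.cast_nonneg j))]
  exact Metric.mem_sphere.mpr this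

lemma zero_mem_hawaiian (n : ℕ) : (0 : EuclideanSpace ℝ (Fin (n+1))) ∈ hawaiian n :=
  Set.mem_biUnion (by simp : (1 : ℕ) ∈ {j : ℕ | 1 ≤ j}) (zero_mem_hawSphere n 1)

lemma zero_mem_Ysub (n i : ℕ) : (0 : EuclideanSpace ℝ (Fin (n+1))) ∈ Ysub n (i+1) :=
  Set.mem_biUnion (by simp : (1 : ℕ) ∈ Finset.Icc 1 (i+1)) (zero_mem_hawSphere n 1)

/-- The basepoint (the origin) of the Hawaiian earring. -/
def hawaiianPt (n : ℕ) : ↥(hawaiian n) := ⟨0, zero_mem_hawaiian n⟩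

/-- The basepoint (the origin) of `Y_{i+1}^{(n)}`. -/
def YsubPt (n i : ℕ) : ↥(Ysub n (i+1)) := ⟨0, zero_mem_Ysub n i⟩

/-!
A neighbourhood retract `S` of a normed space has discrete homotopy groups: loops uniformly close
to a given loop are joined to it by segments that stay in the neighbourhood, and the retraction
pushes this straight-line homotopy into `S`, so homotopy classes are open.

A sphere is a neighbourhood retract, by radial projection. If closed neighbourhood retracts `A` and
`B` meet in the single point `p`, so is `A ∪ B`: contract each point towards `p`, the more so the
closer its distances to `A` and `B` are, until `p` is reached on the equidistant set; the points
nearer to `A` and those nearer to `B` can then be retracted independently of each other.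
-/

section NeighborhoodRetract

open Set Metric

/-- `S` is a neighbourhood retract of the ambient space: some open `U ⊇ S` retracts onto `S`.
The retraction is a total map whose values off `U` are irrelevant. -/
def IsNeighborhoodRetract {X : Type*} [TopologicalSpace X] (S : Set X) : Prop :=
  ∃ U, IsOpen U ∧ S ⊆ U ∧ ∃ r : X → X, ContinuousOn r U ∧ MapsTo r U S ∧ EqOn r id S

variable {E : Type*} [NormedAddCommGroup E] [NormedSpace ℝ E] {A B : Set E} {p x : E}

theorem isNeighborhoodRetract_sphere (c : E) {R : ℝ} (hR : 0 < R) :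
    IsNeighborhoodRetract (sphere c R) := by
  have norm_sub_ne_zero : ∀ x ∈ ({c}ᶜ : Set E), ‖x - c‖ ≠ 0 := fun x hx =>
    norm_ne_zero_iff.mpr (sub_ne_zero.mpr hx)
  refine ⟨{c}ᶜ, isOpen_compl_singleton, fun x hx => ne_of_mem_sphere hx hR.ne',
    fun x => c + (R / ‖x - c‖) • (x - c), ?_, fun x hx => ?_, fun x hx => ?_⟩
  · exact continuousOn_const.add
      ((continuousOn_const.div (by fun_prop) norm_sub_ne_zero).smul (by fun_prop))
  · rw [mem_sphere_iff_norm, add_sub_cancel_left, norm_smul, norm_div, norm_norm,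
      div_mul_cancel₀ _ (norm_sub_ne_zero x hx), Real.norm_of_nonneg hR.le]
  · rw [mem_sphere_iff_norm] at hx
    simp only [hx, div_self hR.ne', one_smul, add_sub_cancel, id]

/-- The contraction towards `p` that retracts `A ∪ B` separately on the two sides of the set of
points equidistant from `A` and `B`: it fixes `A` and sends every point at least as close to `B`
as to `A` to `p`. The quotient is `0 / 0 = 0` at a common point of `A` and `B`. -/
def pinch (A B : Set E) (p x : E) : E :=
  AffineMap.lineMap p x (max 0 ((infDist x B - infDist x A) / (infDist x A + infDist x B)))

theorem pinch_of_infDist_le (h : infDist x B ≤ infDist x A) : pinch A B p x = p := by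
  have weight_nonpos : (infDist x B - infDist x A) / (infDist x A + infDist x B) ≤ 0 :=
    div_nonpos_of_nonpos_of_nonneg (sub_nonpos.mpr h) (add_nonneg infDist_nonneg infDist_nonneg)
  rw [pinch, max_eq_left weight_nonpos, AffineMap.lineMap_apply_zero]

theorem pinch_of_mem_right (hx : x ∈ B) : pinch A B p x = p :=
  pinch_of_infDist_le ((infDist_zero_of_mem hx).trans_le infDist_nonneg)

theorem pinch_self (A B : Set E) (p : E) : pinch A B p p = p :=
  AffineMap.lineMap_same_apply _ _

theorem pinch_of_mem_left (hB : IsClosed B) (hAB : A ∩ B = {p}) (hx : x ∈ A) :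
    pinch A B p x = x := by
  by_cases hxB : x ∈ B
  · obtain rfl : x = p := hAB.subset ⟨hx, hxB⟩
    exact pinch_self A B x
  · have hpB : p ∈ B := (hAB.superset rfl).2
    have infDist_pos : 0 < infDist x B := (hB.notMem_iff_infDist_pos ⟨p, hpB⟩).mp hxB
    rw [pinch, infDist_zero_of_mem hx, sub_zero, zero_add, div_self infDist_pos.ne',
      max_eq_right zero_le_one, AffineMap.lineMap_apply_one]

theorem dist_pinch_le (A B : Set E) (p x : E) : dist (pinch A B p x) p ≤ dist x p := by
  have hA : 0 ≤ infDist x A := infDist_nonneg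
  have hB : 0 ≤ infDist x B := infDist_nonneg
  have weight_le_one : max 0 ((infDist x B - infDist x A) / (infDist x A + infDist x B)) ≤ 1 :=
    max_le zero_le_one (div_le_one_of_le₀ (by linarith) (by positivity))
  rw [pinch, dist_lineMap_left, Real.norm_of_nonneg (le_max_left _ _), dist_comm p]
  exact mul_le_of_le_one_left dist_nonneg weight_le_one

theorem continuous_pinch (hA : IsClosed A) (hB : IsClosed B) (hAB : A ∩ B = {p}) :
    Continuous (pinch A B p) := by
  obtain ⟨hpA, hpB⟩ : p ∈ A ∩ B := hAB.superset rfl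
  refine continuous_iff_continuousAt.mpr fun x => ?_
  by_cases hxp : x = p
  · subst hxp
    rw [ContinuousAt, pinch_self, tendsto_iff_dist_tendsto_zero]
    exact squeeze_zero (fun _ => dist_nonneg) (dist_pinch_le A B x)
      (tendsto_iff_dist_tendsto_zero.mp Filter.tendsto_id)
  · have denom_ne_zero : infDist x A + infDist x B ≠ 0 := fun h => by
      obtain ⟨hxA, hxB⟩ := (add_eq_zero_iff_of_nonneg infDist_nonneg infDist_nonneg).mp h
      exact hxp <| hAB.subset
        ⟨(hA.mem_iff_infDist_zero ⟨p, hpA⟩).mpr hxA, (hB.mem_iff_infDist_zero ⟨p, hpB⟩).mpr hxB⟩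
    have continuousAt_weight : ContinuousAt
        (fun y => (infDist y B - infDist y A) / (infDist y A + infDist y B)) x :=
      ((continuous_infDist_pt B).sub (continuous_infDist_pt A)).continuousAt.div
        ((continuous_infDist_pt A).add (continuous_infDist_pt B)).continuousAt denom_ne_zero
    exact continuousAt_const.lineMap continuousAt_id (continuousAt_const.max continuousAt_weight)

theorem IsNeighborhoodRetract.union_of_inter_eq_singleton (hA : IsNeighborhoodRetract A)
    (hB : IsNeighborhoodRetract B) (hAc : IsClosed A) (hBc : IsClosed B) (hAB : A ∩ B = {p}) :
    IsNeighborhoodRetract (A ∪ B) := by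
  obtain ⟨U, hU, hAU, r, hr, hrA, hr_id⟩ := hA
  obtain ⟨V, hV, hBV, s, hs, hsB, hs_id⟩ := hB
  obtain ⟨hpA, hpB⟩ : p ∈ A ∩ B := hAB.superset rfl
  have hBA : B ∩ A = {p} := inter_comm A B ▸ hAB
  have hrp : r p = p := hr_id hpA
  have hsp : s p = p := hs_id hpB
  have hf : Continuous (pinch A B p) := continuous_pinch hAc hBc hAB
  have hg : Continuous (pinch B A p) := continuous_pinch hBc hAc hBA
  -- At every point one of the two pinches is `p`, so the sum reduces to the other retracted value.
  refine ⟨pinch A B p ⁻¹' U ∩ pinch B A p ⁻¹' V, (hU.preimage hf).inter (hV.preimage hg), ?_,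
    fun x => r (pinch A B p x) + s (pinch B A p x) - p, ?_, ?_, ?_⟩
  · rintro x (hx | hx)
    · simp only [mem_inter_iff, mem_preimage, pinch_of_mem_left hBc hAB hx, pinch_of_mem_right hx]
      exact ⟨hAU hx, hBV hpB⟩
    · simp only [mem_inter_iff, mem_preimage, pinch_of_mem_left hAc hBA hx, pinch_of_mem_right hx]
      exact ⟨hAU hpA, hBV hx⟩
  · exact ((hr.comp hf.continuousOn fun _ hx => hx.1).add
      (hs.comp hg.continuousOn fun _ hx => hx.2)).sub continuousOn_const
  · intro x ⟨hxU, hxV⟩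
    rcases le_total (infDist x A) (infDist x B) with h | h
    · simp only [pinch_of_infDist_le h, hsp, add_sub_cancel_right]
      exact Or.inl (hrA hxU)
    · simp only [pinch_of_infDist_le h, hrp, add_sub_cancel_left]
      exact Or.inr (hsB hxV)
  · rintro x (hx | hx)
    · simp only [pinch_of_mem_left hBc hAB hx, pinch_of_mem_right hx, hsp, add_sub_cancel_right]
      exact hr_id hx
    · simp only [pinch_of_mem_left hAc hBA hx, pinch_of_mem_right hx, hrp, add_sub_cancel_left]
      exact hs_id hx

theorem IsNeighborhoodRetract.biUnion_finset {ι : Type*} {s : Finset ι} (hs : s.Nonempty)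
    {S : ι → Set E} (hS : ∀ j ∈ s, IsNeighborhoodRetract (S j)) (hSc : ∀ j ∈ s, IsClosed (S j))
    (hp : (s : Set ι).Pairwise fun j k => S j ∩ S k = {p}) :
    IsNeighborhoodRetract (⋃ j ∈ s, S j) := by
  induction hs using Finset.Nonempty.cons_induction with
  | singleton j => simpa using hS
  | cons j s hj hs ih =>
    simp only [Finset.forall_mem_cons] at hS hSc
    rw [Finset.coe_cons, pairwise_insert] at hp
    have inter_eq : S j ∩ ⋃ k ∈ s, S k = {p} :=
      calc S j ∩ ⋃ k ∈ s, S k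
        _ = ⋃ k ∈ s, S j ∩ S k := inter_iUnion₂ _ _
        _ = ⋃ k ∈ s, {p} :=
          iUnion₂_congr fun k hk => (hp.2 k hk (ne_of_mem_of_not_mem hk hj).symm).1
        _ = {p} := biUnion_const hs {p}
    simp only [Finset.mem_cons, iUnion_iUnion_eq_or_left]
    exact hS.1.union_of_inter_eq_singleton (ih hS.2 hSc.2 hp.1) hSc.1
      (s.finite_toSet.isClosed_biUnion hSc.2) inter_eq

end NeighborhoodRetract

section HomotopyGroup

variable {N : Type*}

theorem discreteTopology_homotopyGroup_of_eventually_homotopic {X : Type*} [TopologicalSpace X]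
    {x : X} (h : ∀ f : Ω^ N X x, ∀ᶠ g in 𝓝 f, GenLoop.Homotopic f g) :
    DiscreteTopology (HomotopyGroup N X x) := by
  refine discreteTopology_iff_isOpen_singleton.mpr fun a => isOpen_coinduced.mpr <|
    isOpen_iff_eventually.mpr fun f hf => (h f).mono fun g hfg => ?_
  exact (Quotient.sound (s := GenLoop.Homotopic.setoid N x) hfg.symm).trans hf

variable {E : Type*} [NormedAddCommGroup E] [NormedSpace ℝ E] {S U : Set E} {p : S} {r : E → E}

theorem genLoop_homotopic_of_segment_subset (hr : ContinuousOn r U) (hrS : Set.MapsTo r U S)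
    (hr_id : Set.EqOn r id S) {f g : Ω^ N S p} (hfg : ∀ t, segment ℝ (f t : E) (g t) ⊆ U) :
    GenLoop.Homotopic f g := by
  let line : I × (N → I) → E := fun q => AffineMap.lineMap (f q.2 : E) (g q.2 : E) (q.1 : ℝ)
  have continuous_line : Continuous line :=
    (by fun_prop : Continuous fun q : I × (N → I) => (f q.2 : E)).lineMap
      (by fun_prop : Continuous fun q : I × (N → I) => (g q.2 : E)) (by fun_prop)
  have line_mem : ∀ q, line q ∈ U := fun q =>
    hfg q.2 (segment_eq_image_lineMap ℝ (f q.2 : E) (g q.2) ▸ Set.mem_image_of_mem _ q.1.2)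
  refine ⟨⟨⟨⟨fun q => ⟨r (line q), hrS (line_mem q)⟩,
    (hr.comp_continuous continuous_line line_mem).subtype_mk _⟩, fun t => ?_, fun t => ?_⟩,
    fun τ t ht => ?_⟩⟩
  · exact Subtype.ext ((congrArg r (AffineMap.lineMap_apply_zero _ _)).trans (hr_id (f t).2))
  · exact Subtype.ext ((congrArg r (AffineMap.lineMap_apply_one _ _)).trans (hr_id (g t).2))
  · have line_eq : line (τ, t) = f t := by
      simp only [line, GenLoop.boundary f t ht, GenLoop.boundary g t ht,
         AffineMap.lineMap_same_apply]
    exact Subtype.ext ((congrArg r line_eq).trans (hr_id (f t).2))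

theorem eventually_segment_subset (hU : IsOpen U) (hSU : S ⊆ U) (f : Ω^ N S p) :
    ∀ᶠ g in 𝓝 f, ∀ t, segment ℝ (f t : E) (g t : E) ⊆ U := by
  have compact_range : IsCompact (Set.range fun t => (f t : E)) :=
    isCompact_range (by fun_prop)
  obtain ⟨δ, hδ, thickening_subset⟩ := compact_range.exists_thickening_subset_open hU
    (Set.range_subset_iff.mpr fun t => hSU (f t).2)
  filter_upwards [Metric.ball_mem_nhds f hδ] with g hg t
  have hgt : dist (g t : E) (f t) < δ :=
    (ContinuousMap.dist_apply_le_dist (f := g.1) (g := f.1) t).trans_lt hg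
  calc segment ℝ (f t : E) (g t)
    _ ⊆ Metric.ball (f t : E) δ :=
      (convex_ball _ δ).segment_subset (Metric.mem_ball_self hδ) hgt
    _ ⊆ Metric.thickening δ (Set.range fun t => (f t : E)) :=
      Metric.ball_subset_thickening (Set.mem_range_self (f := fun t => (f t : E)) t) δ
    _ ⊆ U := thickening_subset

theorem IsNeighborhoodRetract.discreteTopology_homotopyGroup (hS : IsNeighborhoodRetract S) :
    DiscreteTopology (HomotopyGroup N S p) := by
  obtain ⟨U, hU, hSU, r, hr, hrS, hr_id⟩ := hS
  exact discreteTopology_homotopyGroup_of_eventually_homotopic fun f =>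
    (eventually_segment_subset hU hSU f).mono fun _ =>
      genLoop_homotopic_of_segment_subset hr hrS hr_id

end HomotopyGroup

theorem mem_hawSphere_iff {n j : ℕ} (hj : 1 ≤ j) {x : EuclideanSpace ℝ (Fin (n + 1))} :
    x ∈ hawSphere n j ↔ j * ‖x‖ ^ 2 = 2 * x 0 := by
  have : (0 : ℝ) < j := by exact_mod_cast hj
  rw [hawSphere, mem_sphere_iff_norm, ← sq_eq_sq₀ (norm_nonneg _) (by positivity),
    norm_sub_sq_real, EuclideanSpace.inner_single_right, PiLp.norm_single,
    Real.norm_of_nonneg (by positivity), conj_trivial, add_eq_right, sub_eq_zero]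
  field_simp

theorem hawSphere_inter_hawSphere {n j k : ℕ} (hj : 1 ≤ j) (hk : 1 ≤ k) (hjk : j ≠ k) :
    hawSphere n j ∩ hawSphere n k = {0} := by
  refine Set.Subset.antisymm (fun x ⟨hxj, hxk⟩ => ?_)
    (Set.singleton_subset_iff.mpr ⟨zero_mem_hawSphere n j, zero_mem_hawSphere n k⟩)
  have mul_norm_sq : (j : ℝ) * ‖x‖ ^ 2 = k * ‖x‖ ^ 2 :=
    ((mem_hawSphere_iff hj).mp hxj).trans ((mem_hawSphere_iff hk).mp hxk).symm
  have norm_sq : ‖x‖ ^ 2 = 0 :=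
    (mul_eq_mul_right_iff.mp mul_norm_sq).resolve_left (Nat.cast_injective.ne hjk)
  exact norm_eq_zero.mp (sq_eq_zero_iff.mp norm_sq)

theorem isNeighborhoodRetract_Ysub (n : ℕ) {i : ℕ} (hi : 1 ≤ i) :
    IsNeighborhoodRetract (Ysub n i) := by
  refine IsNeighborhoodRetract.biUnion_finset (p := 0) (Finset.nonempty_Icc.mpr hi)
    (fun j hj => ?_) (fun j _ => Metric.isClosed_sphere) (fun j hj k hk hjk => ?_)
  · have hj_pos : (0 : ℝ) < j := by exact_mod_cast (Finset.mem_Icc.mp hj).1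
    exact isNeighborhoodRetract_sphere _ (one_div_pos.mpr hj_pos)
  · exact hawSphere_inter_hawSphere (Finset.mem_Icc.mp hj).1 (Finset.mem_Icc.mp hk).1 hjk

theorem piTop_Ysub_discrete_general (N : Type*) (n i : ℕ) (p : Ysub n i) :
    DiscreteTopology (HomotopyGroup N (Ysub n i) p) := by
  obtain ⟨j, hj, -⟩ := Set.mem_iUnion₂.mp p.2
  have hi : 1 ≤ i := Finset.nonempty_Icc.mp ⟨j, hj⟩
  exact (isNeighborhoodRetract_Ysub n hi).discreteTopology_homotopyGroup

/-- For `n = m+2 ≥ 2` and `i+1 ≥ 1`, the topological `n`-th homotopy group of the union of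
the first `i+1` spheres of the `n`-dimensional Hawaiian earring is discrete. -/
theorem piTop_Ysub_discrete (m i : ℕ) :
    DiscreteTopology (HomotopyGroup (Fin (m+2)) (Ysub (m+2) (i+1)) (YsubPt (m+2) i)) := by
  exact piTop_Ysub_discrete_general (Fin (m+2)) (m+2) (i+1) (YsubPt (m+2) i)
end
end

section
/- For every integer n ≥ 2, the topological n-th homotopy group π_n^top(ℋ_n, 0) of the n-dimensional Hawaiian earring is metrizable. -/
open scoped Topology Topology.Homotopy unitInterval

noncomputable section

/-!
The `n`-dimensional Hawaiian earring is the shrinking wedge of a sequence of `n`-spheres, that is,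
the points of the product of the spheres with at most one coordinate off the basepoint, and each
sphere is the one-point compactification of `ℝⁿ`.

Fix a summand `k`. The coordinates of an `n`-loop in the wedge can be deformed independently, as
long as a coordinate at the basepoint stays there. Approximate each coordinate, a map to
`OnePoint ℝⁿ`, by a smooth map near its finite points: the image of the walls of a fine grid, a
null set, then misses a small ball, and expanding this ball radially onto `ℝⁿ` sends the walls to
`∞`. The deformed loop maps the walls to the basepoint, and each cell either into the `k`-th
summand or into the wedge of the others. As `πₙ` is commutative for `n ≥ 2`, its class is the
product of the class of its `k`-th coordinate and the class with that coordinate collapsed.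

Hence the topology on `πₙ` is induced by the projections to the groups `πₙ` of the spheres, which
are discrete: a class that is trivial on the first summands is represented by a loop in a far tail
of the wedge, and such loops are uniformly close to the constant one; if it is trivial on all
summands, concatenating the homotopies that remove one summand after another contracts the loop.
So `πₙ` embeds in a countable product of discrete groups.
-/

section Functoriality

variable {N X Y Z : Type*} [TopologicalSpace X] [TopologicalSpace Y] [TopologicalSpace Z]
  {x : X} {y : Y} {z : Z}

/-- The class of a generalized loop in the homotopy group. -/
def homotopyClass (f : Ω^ N X x) : HomotopyGroup N X x :=
  Quotient.mk (GenLoop.Homotopic.setoid N x) f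

lemma homotopyClass_surjective : Function.Surjective (homotopyClass (N := N) (x := x)) :=
  Quotient.exists_rep

lemma homotopyClass_eq_iff {f g : Ω^ N X x} :
    homotopyClass f = homotopyClass g ↔ GenLoop.Homotopic f g :=
  Quotient.eq (r := GenLoop.Homotopic.setoid N x)

lemma isQuotientMap_homotopyClass :
    Topology.IsQuotientMap (homotopyClass (N := N) (x := x)) :=
  isQuotientMap_quotient_mk'

lemma homotopyClass_eq_of_homotopy {f g : Ω^ N X x} (F : C(I × (I^N), X))
    (hf : ∀ t, F (0, t) = f t) (hg : ∀ t, F (1, t) = g t)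
    (hF : ∀ s, ∀ t ∈ Cube.boundary N, F (s, t) = x) : homotopyClass f = homotopyClass g :=
  homotopyClass_eq_iff.2 ⟨⟨⟨F, hf, hg⟩, fun s t ht ↦ (hF s t ht).trans (f.2 t ht).symm⟩⟩

/-- The generalized loop `φ ∘ f`. -/
def genLoopMap (φ : C(X, Y)) (hφ : φ x = y) (f : Ω^ N X x) : Ω^ N Y y :=
  ⟨φ.comp f.1, fun t ht ↦ (congrArg φ (f.2 t ht)).trans hφ⟩

lemma continuous_genLoopMap (φ : C(X, Y)) (hφ : φ x = y) :
    Continuous (genLoopMap (N := N) φ hφ) :=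
  ((ContinuousMap.continuous_postcomp φ).comp continuous_subtype_val).subtype_mk _

variable [DecidableEq N] [Nonempty N]

lemma homotopyClass_mul (i : N) (f g : Ω^ N X x) :
    homotopyClass f * homotopyClass g = homotopyClass (GenLoop.transAt i g f) :=
  HomotopyGroup.mul_spec

variable (N) in
/-- The homomorphism induced on homotopy groups by a pointed map. -/
def homotopyGroupMap (φ : C(X, Y)) (hφ : φ x = y) : HomotopyGroup N X x →* HomotopyGroup N Y y :=
  MonoidHom.mk'
    (Quotient.map (genLoopMap φ hφ) fun f g hfg ↦
      (hfg.comp_continuousMap φ : (φ.comp f.1).HomotopicRel (φ.comp g.1) (Cube.boundary N)))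
    fun a b ↦ by
      obtain ⟨f, rfl⟩ := homotopyClass_surjective a
      obtain ⟨g, rfl⟩ := homotopyClass_surjective b
      have i : N := Classical.arbitrary N
      rw [homotopyClass_mul i]
      refine Eq.trans ?_ (homotopyClass_mul i (genLoopMap φ hφ f) (genLoopMap φ hφ g)).symm
      refine congrArg homotopyClass (GenLoop.ext _ _ fun t ↦ ?_)
      exact apply_ite φ _ _ _

lemma homotopyGroupMap_homotopyClass (φ : C(X, Y)) (hφ : φ x = y) (f : Ω^ N X x) :
    homotopyGroupMap N φ hφ (homotopyClass f) = homotopyClass (genLoopMap φ hφ f) :=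
  rfl

lemma homotopyGroupMap_comp_apply (φ : C(X, Y)) (hφ : φ x = y) (ψ : C(Y, Z)) (hψ : ψ y = z)
    (a : HomotopyGroup N X x) :
    homotopyGroupMap N ψ hψ (homotopyGroupMap N φ hφ a) =
      homotopyGroupMap N (ψ.comp φ) ((congrArg ψ hφ).trans hψ) a := by
  obtain ⟨f, rfl⟩ := homotopyClass_surjective a
  rfl

lemma homotopyGroupMap_eq_self {φ : C(X, X)} (hφ : ∀ w, φ w = w) (a : HomotopyGroup N X x) :
    homotopyGroupMap N φ (hφ x) a = a := by
  obtain ⟨f, rfl⟩ := homotopyClass_surjective a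
  exact congrArg homotopyClass (GenLoop.ext _ _ fun t ↦ hφ (f t))

lemma continuous_homotopyGroupMap (φ : C(X, Y)) (hφ : φ x = y) :
    Continuous (homotopyGroupMap N φ hφ) :=
  isQuotientMap_homotopyClass.continuous_iff.2 <|
    isQuotientMap_homotopyClass.continuous.comp (continuous_genLoopMap φ hφ)

lemma isEmbedding_homotopyGroupMap (e : X ≃ₜ Y) (he : e x = y) :
    Topology.IsEmbedding (homotopyGroupMap N (e : C(X, Y)) he) := by
  refine .of_leftInverse (f := homotopyGroupMap N (e.symm : C(Y, X)) (e.symm_apply_eq.2 he.symm))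
    (fun a ↦ ?_) (continuous_homotopyGroupMap _ _) (continuous_homotopyGroupMap _ _)
  rw [homotopyGroupMap_comp_apply]
  exact homotopyGroupMap_eq_self e.symm_apply_apply a

lemma continuous_homotopyGroup_mul_left (a : HomotopyGroup N X x) : Continuous (a * ·) := by
  obtain ⟨f, rfl⟩ := homotopyClass_surjective a
  have i : N := Classical.arbitrary N
  refine isQuotientMap_homotopyClass.continuous_iff.2 ?_
  have hmul : (homotopyClass f * ·) ∘ homotopyClass = fun g : Ω^ N X x ↦
      homotopyClass (GenLoop.fromLoop i ((GenLoop.toLoop i g).trans (GenLoop.toLoop i f))) := by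
    ext g
    rw [Function.comp_apply, homotopyClass_mul i, GenLoop.fromLoop_trans_toLoop]
  rw [hmul]
  exact isQuotientMap_homotopyClass.continuous.comp <| (GenLoop.continuous_fromLoop i).comp <|
    Path.continuous_trans.comp <| (GenLoop.continuous_toLoop i).prodMk continuous_const

end Functoriality

section Cells

variable {N X : Type*} [TopologicalSpace X] {x : X}

/-- The part of the cube lying on the hyperplanes `t i = c`, for `(i, c)` in `L`. -/
def wall (L : Finset (N × I)) : Set (I^N) :=
  {t | ∃ q ∈ L, t q.1 = q.2}

/-- Two points of the cube lie in the same cell of the subdivision of the cube by the hyperplanes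
`t i = c`, for `(i, c)` in `L`; cells are closed from above. -/
def SameCell (L : Finset (N × I)) (t u : I^N) : Prop :=
  ∀ q ∈ L, t q.1 ≤ q.2 ↔ u q.1 ≤ q.2

lemma exists_sameCell_dist_lt [Fintype N] {δ : ℝ} (hδ : 0 < δ) :
    ∃ L : Finset (N × I), ∀ t u, SameCell L t u → dist t u < δ := by
  obtain ⟨P, -, hP, hcover⟩ := Metric.finite_approx_of_totallyBounded
    (isCompact_univ (X := I)).totallyBounded (δ / 2) (half_pos hδ)
  refine ⟨Finset.univ ×ˢ hP.toFinset, fun t u htu ↦ (dist_pi_lt_iff hδ).2 fun i ↦ ?_⟩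
  by_contra! hdist
  wlog hle : t i ≤ u i generalizing t u
  · exact this u t (fun q hq ↦ (htu q hq).symm) (by rwa [dist_comm]) (le_of_not_ge hle)
  have hgap : δ ≤ (u i : ℝ) - t i := by
    rwa [Subtype.dist_eq, dist_comm, Real.dist_eq,
      abs_of_nonneg (sub_nonneg.2 (Subtype.coe_le_coe.2 hle))] at hdist
  let mid : I := ⟨((t i : ℝ) + u i) / 2, by
    constructor <;> linarith [(t i).2.1, (u i).2.1, (t i).2.2, (u i).2.2]⟩
  obtain ⟨p, hp, hmid⟩ : ∃ p ∈ P, dist mid p < δ / 2 := by simpa using hcover (Set.mem_univ mid)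
  obtain ⟨hlower, hupper⟩ : ((t i : ℝ) + u i) / 2 - p < δ / 2 ∧ -(δ / 2) < (t i + u i) / 2 - p :=
    (abs_lt.1 hmid).symm
  have htp : t i ≤ p := Subtype.coe_le_coe.1 (by linarith)
  have hpu : ¬ u i ≤ p := fun h ↦ by linarith [Subtype.coe_le_coe.2 h]
  exact hpu ((htu (i, p) (by simp [hp])).1 htp)

lemma exists_mem_of_sameCell_of_cons {Y : Type*} {f : (I^N) → Y} {𝒮 : Set (Set Y)} {q : N × I}
    {L : Finset (N × I)} {hq : q ∉ L}
    (hcell : ∀ t, ∃ S ∈ 𝒮, ∀ u, SameCell (L.cons q hq) t u → f u ∈ S) (P : (I^N) → Prop)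
    (hP : ∀ u v, P u → P v → (u q.1 ≤ q.2 ↔ v q.1 ≤ q.2)) (t : I^N) :
    ∃ S ∈ 𝒮, ∀ u, SameCell L t u → P u → f u ∈ S := by
  by_cases h : ∃ v, SameCell L t v ∧ P v
  · obtain ⟨v, htv, hv⟩ := h
    obtain ⟨S, hS, hfS⟩ := hcell v
    exact ⟨S, hS, fun u htu hu ↦ hfS u ((Finset.forall_mem_cons _ _).2
      ⟨hP v u hv hu, fun r hr ↦ (htv r hr).symm.trans (htu r hr)⟩)⟩
  · obtain ⟨S, hS, -⟩ := hcell t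
    exact ⟨S, hS, fun u htu hu ↦ absurd ⟨u, htu, hu⟩ h⟩

variable [DecidableEq N]

lemma update_mem_boundary {t : I^N} (ht : t ∈ Cube.boundary N) (i : N) {c : I}
    (h0 : t i = 0 → c = 0) (h1 : t i = 1 → c = 1) :
    Function.update t i c ∈ Cube.boundary N := by
  obtain ⟨j, hj⟩ := ht
  refine ⟨j, ?_⟩
  rcases eq_or_ne j i with rfl | hji
  · simpa using hj.imp h0 h1
  · simpa [hji] using hj

/-- The map `a ↦ (1 + s) * a - r` of the interval, truncated to `[0, 1]`. For `r = 0` and `r = s`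
these stretch the interval while fixing, respectively, its lower and its upper end. -/
def stretch (s r : ℝ) (a : I) : I :=
  Set.projIcc 0 1 zero_le_one ((1 + s) * a - r)

lemma continuous_stretch {Z : Type*} [TopologicalSpace Z] {s r : Z → ℝ} {a : Z → I}
    (hs : Continuous s) (hr : Continuous r) (ha : Continuous a) :
    Continuous fun z ↦ stretch (s z) (r z) (a z) :=
  continuous_projIcc.comp (by fun_prop)

lemma stretch_zero_zero (a : I) : stretch 0 0 a = a := by
  simp [stretch]

lemma stretch_eq_zero {s r : ℝ} {a : I} (h : (1 + s) * a ≤ r) : stretch s r a = 0 :=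
  Set.projIcc_of_le_left _ (by linarith)

lemma stretch_eq_one {s r : ℝ} {a : I} (h : 1 + r ≤ (1 + s) * a) : stretch s r a = 1 :=
  Set.projIcc_of_right_le _ (by linarith)

lemma stretch_anti {s r r' : ℝ} (h : r ≤ r') (a : I) : stretch s r' a ≤ stretch s r a :=
  Set.monotone_projIcc _ (by linarith)

lemma stretch_one_left (r : ℝ) (a : I) :
    stretch 1 r a = Set.projIcc 0 1 zero_le_one (2 * a - r) := by
  norm_num [stretch]

lemma update_stretch_mem_boundary {t : I^N} (ht : t ∈ Cube.boundary N) (i : N) {s r : ℝ}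
    (hr : 0 ≤ r) (hrs : r ≤ s) : Function.update t i (stretch s r (t i)) ∈ Cube.boundary N :=
  update_mem_boundary ht i (fun h ↦ stretch_eq_zero (by simpa [h]))
    fun h ↦ stretch_eq_one (by simpa [h])

variable [Nonempty N]

lemma homotopyClass_eq_mul_of_split (i : N) (c : I) {α β γ : Ω^ N X x}
    (hβ : ∀ t, c ≤ t i → β t = x) (hγ : ∀ t, t i ≤ c → γ t = x)
    (hα : ∀ t, α t = if t i ≤ c then β t else γ t) :
    homotopyClass α = homotopyClass γ * homotopyClass β := by
  have hβcont : Continuous β := β.1.continuous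
  have hγcont : Continuous γ := γ.1.continuous
  let φ (p : I × (I^N)) : I := stretch p.1 0 (p.2 i)
  let ψ (p : I × (I^N)) : I := stretch p.1 p.1 (p.2 i)
  have hφ : Continuous φ := continuous_stretch (by fun_prop) (by fun_prop) (by fun_prop)
  have hψ : Continuous ψ := continuous_stretch (by fun_prop) (by fun_prop) (by fun_prop)
  let F (p : I × (I^N)) : X :=
    if φ p ≤ c then β (Function.update p.2 i (φ p)) else γ (Function.update p.2 i (ψ p))
  have hF : Continuous F := by
    refine Continuous.if_le (hβcont.comp (continuous_snd.update i hφ))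
      (hγcont.comp (continuous_snd.update i hψ)) hφ continuous_const fun p hp ↦ ?_
    rw [hβ _ (by simp [hp]), hγ _ (by simpa [← hp] using stretch_anti p.1.2.1 _)]
  rw [homotopyClass_mul i]
  refine homotopyClass_eq_of_homotopy ⟨F, hF⟩ (fun t ↦ ?_) (fun t ↦ ?_) (fun s t ht ↦ ?_)
  · simp [F, φ, ψ, stretch_zero_zero, hα]
  · have hφt : φ (1, t) = Set.projIcc 0 1 zero_le_one (2 * (t i : ℝ)) := by
      simp [φ, stretch_one_left]
    have hψt : ψ (1, t) = Set.projIcc 0 1 zero_le_one (2 * (t i : ℝ) - 1) :=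
      stretch_one_left 1 (t i)
    change (if φ (1, t) ≤ c then _ else _) = (if (t i : ℝ) ≤ 1 / 2 then _ else _ : X)
    rw [← hφt, ← hψt]
    split_ifs with hc h2 h2
    · rfl
    · have : φ (1, t) = 1 := stretch_eq_one (by norm_num; linarith)
      rw [hβ _ (by simp [this, unitInterval.le_one']), hγ _ ?_]
      simpa [ψ] using (stretch_anti zero_le_one _).trans hc
    · have : ψ (1, t) = 0 := stretch_eq_zero (by norm_num; linarith)
      rw [hβ _ (by simpa using (not_le.1 hc).le), hγ _ (by simp [this])]
    · rfl
  · change ite _ (β _) (γ _) = x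
    rw [GenLoop.boundary β _ (update_stretch_mem_boundary ht i le_rfl s.2.1),
      GenLoop.boundary γ _ (update_stretch_mem_boundary ht i s.2.1 le_rfl), ite_self]

lemma exists_genLoop_split (i : N) (c : I) (α : Ω^ N X x) (hα : ∀ t, t i = c → α t = x) :
    ∃ β γ : Ω^ N X x, (∀ t, β t = if t i ≤ c then α t else x) ∧
      (∀ t, γ t = if t i ≤ c then x else α t) ∧
      homotopyClass α = homotopyClass γ * homotopyClass β := by
  have hαcont : Continuous α := α.1.continuous
  let β : Ω^ N X x := ⟨⟨fun t ↦ if t i ≤ c then α t else x,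
    hαcont.if_le continuous_const (by fun_prop) continuous_const hα⟩, fun t ht ↦ by
      change ite _ (α t) x = x
      rw [GenLoop.boundary α t ht, ite_self]⟩
  let γ : Ω^ N X x := ⟨⟨fun t ↦ if t i ≤ c then x else α t,
    continuous_const.if_le hαcont (by fun_prop) continuous_const fun t ht ↦ (hα t ht).symm⟩,
    fun t ht ↦ by
      change ite _ x (α t) = x
      rw [GenLoop.boundary α t ht, ite_self]⟩
  have hβ (t : I^N) : β t = if t i ≤ c then α t else x := rfl
  have hγ (t : I^N) : γ t = if t i ≤ c then x else α t := rfl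
  refine ⟨β, γ, hβ, hγ, homotopyClass_eq_mul_of_split i c (fun t ht ↦ ?_) (fun t ht ↦ ?_)
    fun t ↦ ?_⟩
  · rw [hβ]
    split_ifs with h
    exacts [hα t (h.antisymm ht), rfl]
  · rw [hγ, if_pos ht]
  · rw [hβ, hγ]
    split_ifs <;> rfl

theorem homotopyClass_mem_of_cellwise_mem (M : Subgroup (HomotopyGroup N X x)) (𝒮 : Set (Set X))
    (hx : ∀ S ∈ 𝒮, x ∈ S) (hM : ∀ S ∈ 𝒮, ∀ f : Ω^ N X x, (∀ t, f t ∈ S) → homotopyClass f ∈ M)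
    (L : Finset (N × I)) (α : Ω^ N X x) (hwall : ∀ t ∈ wall L, α t = x)
    (hcell : ∀ t, ∃ S ∈ 𝒮, ∀ u, SameCell L t u → α u ∈ S) : homotopyClass α ∈ M := by
  induction L using Finset.cons_induction generalizing α with
  | empty =>
    obtain ⟨S, hS, hαS⟩ := hcell 0
    exact hM S hS α fun u ↦ hαS u (by simp [SameCell])
  | cons q L _ ih =>
    have hwallL (t : I^N) (ht : t ∈ wall L) : α t = x := by
      obtain ⟨r, hr, htr⟩ := ht
      exact hwall t ⟨r, Finset.mem_cons_of_mem hr, htr⟩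
    obtain ⟨β, γ, hβ, hγ, hαβγ⟩ := exists_genLoop_split q.1 q.2 α fun t ht ↦
      hwall t ⟨q, Finset.mem_cons_self q L, ht⟩
    rw [hαβγ]
    refine M.mul_mem (ih γ (fun t ht ↦ ?_) fun t ↦ ?_) (ih β (fun t ht ↦ ?_) fun t ↦ ?_)
    · rw [hγ, hwallL t ht, ite_self]
    · obtain ⟨S, hS, hαS⟩ :=
        exists_mem_of_sameCell_of_cons hcell (fun u ↦ ¬ u q.1 ≤ q.2) (by tauto) t
      refine ⟨S, hS, fun u htu ↦ ?_⟩
      rw [hγ]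
      split_ifs with h
      exacts [hx S hS, hαS u htu h]
    · rw [hβ, hwallL t ht, ite_self]
    · obtain ⟨S, hS, hαS⟩ :=
        exists_mem_of_sameCell_of_cons hcell (fun u ↦ u q.1 ≤ q.2) (by tauto) t
      refine ⟨S, hS, fun u htu ↦ ?_⟩
      rw [hβ]
      split_ifs with h
      exacts [hαS u htu h, hx S hS]

end Cells

section OnePoint

open Filter OnePoint Bornology

lemma continuous_prod_onePoint {X Y Z : Type*} [TopologicalSpace X] [TopologicalSpace Y]
    [TopologicalSpace Z] {G : Y × OnePoint X → Z}
    (hcoe : Continuous fun p : Y × X ↦ G (p.1, p.2)) (hinfty : Continuous fun y ↦ G (y, ∞))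
    (hlim : ∀ y, Tendsto (fun p : Y × X ↦ G (p.1, p.2)) (𝓝 y ×ˢ coclosedCompact X)
      (𝓝 (G (y, ∞)))) : Continuous G := by
  refine continuous_iff_continuousAt.2 fun ⟨y, q⟩ ↦ ?_
  cases q with
  | infty =>
    rw [ContinuousAt, nhds_prod_eq, nhds_infty_eq, prod_sup, tendsto_sup, prod_pure,
      tendsto_map'_iff]
    refine ⟨?_, hinfty.continuousAt⟩
    have hprod : 𝓝 y ×ˢ map ((↑) : X → OnePoint X) (coclosedCompact X) =
        map (Prod.map id (↑)) (𝓝 y ×ˢ coclosedCompact X) := by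
      rw [← prod_map_map_eq', Filter.map_id]
    rw [hprod, tendsto_map'_iff]
    exact hlim y
  | coe v =>
    exact ((Topology.IsOpenEmbedding.id.prodMap isOpenEmbedding_coe).continuousAt_iff
      (x := (y, v))).1 hcoe.continuousAt

variable {V Z : Type*} [NormedAddCommGroup V]

lemma tendsto_onePoint_infty_of_norm {G : Z → OnePoint V} {l : Filter Z}
    (h : ∀ R : ℝ, ∀ᶠ z in l, ∀ v : V, G z = v → R < ‖v‖) : Tendsto G l (𝓝 ∞) := by
  refine hasBasis_nhds_infty.tendsto_right_iff.2 fun K ⟨_, hK⟩ ↦ ?_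
  obtain ⟨R, hR⟩ := hK.isBounded.exists_norm_le
  filter_upwards [h R] with z hz
  cases hGz : G z with
  | infty => exact Or.inr rfl
  | coe v => exact Or.inl ⟨v, fun hv ↦ (hR v hv).not_gt (hz v hGz), rfl⟩

variable [ProperSpace V]

lemma tendsto_norm_snd_coclosedCompact {Y : Type*} (l : Filter Y) :
    Tendsto (fun p : Y × V ↦ ‖p.2‖) (l ×ˢ coclosedCompact V) atTop := by
  rw [coclosedCompact_eq_cocompact, ← Metric.cobounded_eq_cocompact]
  exact tendsto_norm_cobounded_atTop.comp tendsto_snd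

lemma continuous_onePoint_translate :
    Continuous fun p : V × OnePoint V ↦ OnePoint.map (p.1 + ·) p.2 := by
  refine continuous_prod_onePoint (continuous_coe.comp continuous_add) continuous_const fun w ↦ ?_
  refine tendsto_onePoint_infty_of_norm fun R ↦ ?_
  have hw : ∀ᶠ p : V × V in 𝓝 w ×ˢ coclosedCompact V, ‖p.1‖ < ‖w‖ + 1 :=
    tendsto_fst.eventually (continuous_norm.continuousAt.eventually_lt_const (by simp))
  filter_upwards [hw, (tendsto_norm_snd_coclosedCompact _).eventually_gt_atTop (R + (‖w‖ + 1))]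
    with p hp₁ hp₂ v hv
  rw [← coe_injective hv]
  linarith [norm_le_norm_add_norm_sub' p.2 (-p.1), norm_neg p.1,
    congrArg norm (show p.2 - -p.1 = p.1 + p.2 by abel)]

variable [NormedSpace ℝ V]

open Classical in
/-- The point `a⁻¹ • v`, read as `∞` for `a = 0`: the map `(a, v) ↦ [a : v]` from `ℝ × V` to the
one-point compactification of `V`. -/
def divOrInfty (a : ℝ) (v : V) : OnePoint V :=
  if a = 0 then ∞ else ↑(a⁻¹ • v)

omit [ProperSpace V] in
lemma divOrInfty_eq_coe {a : ℝ} {u v : V} (h : divOrInfty a v = u) : a ≠ 0 ∧ a⁻¹ • v = u := by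
  rw [divOrInfty] at h
  split_ifs at h with ha
  · exact absurd h (infty_ne_coe u)
  · exact ⟨ha, coe_injective h⟩

omit [ProperSpace V] in
lemma continuousAt_divOrInfty {p : ℝ × V} (hp : p.1 = 0 → p.2 ≠ 0) :
    ContinuousAt (fun p : ℝ × V ↦ divOrInfty p.1 p.2) p := by
  by_cases ha : p.1 = 0
  · rw [ContinuousAt, divOrInfty, if_pos ha]
    refine tendsto_onePoint_infty_of_norm fun R ↦ ?_
    have hcont : ContinuousAt (fun q : ℝ × V ↦ ‖q.2‖ - R * |q.1|) p := by fun_prop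
    filter_upwards [hcont.eventually_const_lt (u := 0) (by simpa [ha] using hp ha)] with q hq v hqv
    obtain ⟨h, rfl⟩ := divOrInfty_eq_coe hqv
    rw [norm_smul, norm_inv, Real.norm_eq_abs, inv_mul_eq_div,
      lt_div_iff₀ (abs_pos.2 h)]
    linarith
  · have hfinite : (fun q : ℝ × V ↦ ((q.1⁻¹ • q.2 : V) : OnePoint V)) =ᶠ[𝓝 p]
        fun q ↦ divOrInfty q.1 q.2 := by
      filter_upwards [continuousAt_fst.eventually_ne ha] with q hq
      rw [divOrInfty, if_neg hq]
    exact (continuous_coe.continuousAt.comp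
      ((continuousAt_fst.inv₀ ha).smul continuousAt_snd)).congr hfinite

/-- The map of the one-point compactification of `V` which stretches the open ball of radius `1 / r`
radially onto `V` and sends its complement to `∞`. -/
def radialExpand (r : NNReal) (q : OnePoint V) : OnePoint V :=
  q.elim ∞ fun v ↦ divOrInfty (max 0 (1 - r * ‖v‖)) v

omit [ProperSpace V] in
lemma radialExpand_zero (q : OnePoint V) : radialExpand 0 q = q := by
  cases q <;> simp [radialExpand, divOrInfty]

omit [ProperSpace V] in
lemma radialExpand_eq_infty {r : NNReal} {v : V} (h : 1 ≤ r * ‖v‖) :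
    radialExpand r (v : OnePoint V) = ∞ :=
  if_pos (max_eq_left (sub_nonpos.2 h))

lemma continuous_radialExpand :
    Continuous fun p : NNReal × OnePoint V ↦ radialExpand p.1 p.2 := by
  refine continuous_prod_onePoint ?_ continuous_const fun r ↦ ?_
  · refine continuous_iff_continuousAt.2 fun p ↦ ?_
    refine (continuousAt_divOrInfty (p := (max 0 (1 - p.1 * ‖p.2‖), p.2)) fun h hv ↦ ?_).comp
      (f := fun p : NNReal × V ↦ (max 0 (1 - p.1 * ‖p.2‖), p.2)) (by fun_prop)
    simp [show p.2 = 0 from hv] at h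
  · refine tendsto_onePoint_infty_of_norm fun R ↦ ?_
    filter_upwards [(tendsto_norm_snd_coclosedCompact (𝓝 r)).eventually_gt_atTop R] with p hp v hv
    obtain ⟨h, rfl⟩ := divOrInfty_eq_coe hv
    have hpos : 0 < max 0 (1 - p.1 * ‖p.2‖) := lt_of_le_of_ne (le_max_left _ _) (Ne.symm h)
    have hle : max 0 (1 - p.1 * ‖p.2‖) ≤ 1 :=
      max_le zero_le_one (sub_le_self _ (by positivity))
    rw [norm_smul, norm_inv, Real.norm_of_nonneg hpos.le]
    exact hp.trans_le (le_mul_of_one_le_left (norm_nonneg _) (one_le_inv₀ hpos |>.2 hle))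

lemma exists_homotopy_translate_expand {T : Type*} [TopologicalSpace T] (q : C(T, OnePoint V))
    (c : C(T, V)) (p : V) {ε : ℝ} (hε : 0 < ε) :
    ∃ F : C(I × T, OnePoint V), (∀ t, F (0, t) = q t) ∧ (∀ s t, q t = ∞ → F (s, t) = ∞) ∧
      ∀ t, ∀ v : V, q t = v → ε ≤ ‖c t - p + v‖ → F (1, t) = ∞ := by
  let w (z : I × T) : V := (z.1 : ℝ) • c z.2 - p
  let r (z : I × T) : NNReal := Real.toNNReal (z.1 / ε)
  let E (z : I × T) : OnePoint V := radialExpand (r z) (OnePoint.map (w z + ·) (q z.2))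
  have hE : Continuous E := continuous_radialExpand.comp <| Continuous.prodMk (by fun_prop) <|
    continuous_onePoint_translate.comp (Continuous.prodMk (by fun_prop) (by fun_prop))
  refine ⟨⟨fun z ↦ OnePoint.map (p + ·) (E z),
    continuous_onePoint_translate.comp (continuous_const.prodMk hE)⟩, fun t ↦ ?_, fun s t ht ↦ ?_,
    fun t v ht hv ↦ ?_⟩
  · cases hqt : q t <;> simp [E, r, w, hqt, radialExpand_zero]
  · simp [E, ht, radialExpand]
  · have hE1 : E (1, t) = ∞ := by
      simp only [E, ht, OnePoint.map_some]
      refine radialExpand_eq_infty ?_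
      simpa [r, w, hε.le, inv_mul_eq_div, one_le_div hε] using hv
    simp [hE1]

end OnePoint

section Pushing

open OnePoint MeasureTheory

/-- Pushing maps of the cube off walls: a map `f` from the cube to `S` is homotopic, relative to
`f ⁻¹' {pt}`, to maps sending any prescribed finite union of coordinate hyperplanes to `pt`; all of
these maps are constant outside a closed set `C` depending only on `f` and disjoint
from `f ⁻¹' {pt}`. -/
def PushesOffWalls (N : Type*) {S : Type*} [TopologicalSpace S] (pt : S) : Prop :=
  ∀ f : C(I^N, S), ∃ C : Set (I^N), IsClosed C ∧ (∀ t ∈ C, f t ≠ pt) ∧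
    ∀ L : Finset (N × I), ∃ F : C(I × (I^N), S), (∀ t, F (0, t) = f t) ∧
      (∀ s t, f t = pt → F (s, t) = pt) ∧ ∀ t, F (1, t) ≠ pt → t ∉ wall L ∧ t ∈ C

lemma exists_continuousMap_coe_eq {V : Type*} [NormedAddCommGroup V] [NormedSpace ℝ V]
    [FiniteDimensional ℝ V] (R : ℝ) : ∃ χ : C(OnePoint V, V), ∀ v : V, ‖v‖ ≤ R → χ v = v := by
  have := FiniteDimensional.proper_real V
  have hemb : Topology.IsClosedEmbedding
      fun v : Metric.closedBall (0 : V) R ↦ ((v : V) : OnePoint V) :=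
    (continuous_coe.comp continuous_subtype_val).isClosedEmbedding
      (coe_injective.comp Subtype.val_injective)
  have := TietzeExtension.of_tvs ℝ (E := V)
  obtain ⟨χ, hχ⟩ := ContinuousMap.exists_extension hemb
    (⟨Subtype.val, continuous_subtype_val⟩ : C(Metric.closedBall (0 : V) R, V))
  exact ⟨χ, fun v hv ↦ DFunLike.congr_fun hχ ⟨v, by simpa using hv⟩⟩

variable {N : Type*} [Fintype N]

lemma exists_contDiff_dist_lt {W : Type*} [NormedAddCommGroup W] [NormedSpace ℝ W]
    (f : C(I^N, W)) {ε : ℝ} (hε : 0 < ε) :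
    ∃ g : (N → ℝ) → W, ContDiff ℝ 1 g ∧ ∀ t : I^N, dist (g fun i ↦ t i) (f t) < ε := by
  have hext : Continuous fun v : N → ℝ ↦ f fun i ↦ Set.projIcc 0 1 zero_le_one (v i) :=
    f.continuous.comp (continuous_pi fun i ↦ continuous_projIcc.comp (continuous_apply i))
  obtain ⟨g, hg, hdist, -⟩ := hext.exists_contDiff_approx 1 continuous_const fun _ ↦ hε
  exact ⟨g, hg, fun t ↦ by simpa using hdist fun i ↦ t i⟩

omit [Fintype N] in
lemma isClosed_wall (L : Finset (N × I)) : IsClosed (wall L) := by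
  have hunion : wall L = ⋃ q ∈ L, {t | t q.1 = q.2} := by ext; simp [wall]
  rw [hunion]
  exact L.finite_toSet.isClosed_biUnion fun q _ ↦
    isClosed_eq (continuous_apply q.1) continuous_const

lemma volume_wall_eq_zero (L : Finset (N × I)) :
    volume ((fun (t : I^N) (i : N) ↦ (t i : ℝ)) '' wall L) = 0 := by
  have hsub : (fun (t : I^N) (i : N) ↦ (t i : ℝ)) '' wall L ⊆
      ⋃ q ∈ L, {v : N → ℝ | v q.1 = q.2} := by
    rintro _ ⟨t, ⟨q, hq, htq⟩, rfl⟩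
    exact Set.mem_biUnion hq (congrArg Subtype.val htq)
  refine measure_mono_null hsub ((measure_biUnion_null_iff L.countable_toSet).2 fun q _ ↦ ?_)
  exact Measure.pi_hyperplane (fun _ ↦ (volume : Measure ℝ)) q.1 (q.2 : ℝ)

lemma exists_forall_wall_le_dist (L : Finset (N × I)) {g : (N → ℝ) → (N → ℝ)}
    (hg : Differentiable ℝ g) :
    ∃ p : N → ℝ, ‖p‖ < 1 ∧ ∃ δ > 0, ∀ t ∈ wall L, δ ≤ dist (g fun i ↦ t i) p := by
  let K : Set (N → ℝ) := g '' ((fun (t : I^N) (i : N) ↦ (t i : ℝ)) '' wall L)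
  have hK : IsCompact K := ((isClosed_wall L).isCompact.image (by fun_prop)).image hg.continuous
  have hKnull : volume K = 0 := addHaar_image_eq_zero_of_differentiableOn_of_addHaar_eq_zero volume
    hg.differentiableOn (volume_wall_eq_zero L)
  obtain ⟨p, hp, hpK⟩ := Set.not_subset.1 fun h : Metric.ball (0 : N → ℝ) 1 ⊆ K ↦
    (Metric.measure_ball_pos volume (0 : N → ℝ) one_pos).ne' (measure_mono_null h hKnull)
  obtain ⟨δ, hδ, hball⟩ := Metric.isOpen_iff.1 hK.isClosed.isOpen_compl p hpK
  refine ⟨p, by simpa using hp, δ, hδ, fun t ht ↦ ?_⟩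
  by_contra! hlt
  exact hball hlt (Set.mem_image_of_mem _ (Set.mem_image_of_mem _ ht))

omit [Fintype N] in
theorem pushesOffWalls_onePoint [Finite N] : PushesOffWalls N (∞ : OnePoint (N → ℝ)) := by
  cases nonempty_fintype N
  intro f
  obtain ⟨χ, hχ⟩ := exists_continuousMap_coe_eq (V := N → ℝ) 3
  obtain ⟨g, hg, hgf⟩ := exists_contDiff_dist_lt (χ.comp f) one_pos
  refine ⟨f ⁻¹' ((↑) '' Metric.closedBall (0 : N → ℝ) 3),
    ((isCompact_closedBall 0 3).image continuous_coe).isClosed.preimage f.continuous,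
    fun t ⟨v, _, hv⟩ ↦ hv ▸ coe_ne_infty v, fun L ↦ ?_⟩
  obtain ⟨p, hp, δ, hδ, hpδ⟩ := exists_forall_wall_le_dist L (hg.differentiable one_ne_zero)
  -- The correction `g - χ ∘ f` replaces `f` by `g` wherever the expansion does not lead to `∞`.
  obtain ⟨F, hF0, hFinf, hF1⟩ := exists_homotopy_translate_expand f
    ⟨fun t ↦ g (fun i ↦ t i) - χ (f t), by have := hg.continuous; fun_prop⟩ p (lt_min one_pos hδ)
  refine ⟨F, hF0, hFinf, fun t ht ↦ ?_⟩
  obtain ⟨v, hv⟩ := ne_infty_iff_exists.1 (mt (hFinf 1 t) ht)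
  obtain ⟨hlt_one, hltδ⟩ : ‖g (fun i ↦ t i) - χ v - p + v‖ < 1 ∧
      ‖g (fun i ↦ t i) - χ v - p + v‖ < δ := by
    rw [← lt_min_iff]
    by_contra! h
    exact ht (hF1 t v hv.symm (by simpa [← hv] using h))
  have hnear : ‖g (fun i ↦ t i) - χ v‖ < 1 := by simpa [← hv, dist_eq_norm] using hgf t
  have hv3 : ‖v‖ ≤ 3 := by
    have := norm_sub_le (g (fun i ↦ t i) - χ v) p
    have := norm_sub_le (g (fun i ↦ t i) - χ v - p + v) (g (fun i ↦ t i) - χ v - p)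
    rw [add_sub_cancel_left] at this
    linarith
  refine ⟨fun hwall ↦ hltδ.not_ge ?_, v, by simpa using hv3, hv⟩
  rw [hχ v hv3, sub_right_comm, sub_add_cancel, ← dist_eq_norm]
  exact hpδ t hwall

end Pushing

section ShrinkingWedge

variable {ι : Type*} {S : ι → Type*}

/-- The shrinking wedge of the pointed spaces `(S j, pt j)`: the points of the product with at most
one coordinate different from the basepoint. For a sequence of circles this is the Hawaiian
earring. -/
def shrinkingWedge (pt : ∀ j, S j) : Set (∀ j, S j) :=
  {x | {j | x j ≠ pt j}.Subsingleton}

variable (pt : ∀ j, S j)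

/-- The basepoint of the shrinking wedge. -/
def wedgePt : shrinkingWedge pt :=
  ⟨pt, fun _ h ↦ absurd rfl h⟩

variable {pt}

lemma mem_shrinkingWedge_of_forall_imp {x y : ∀ j, S j} (hx : x ∈ shrinkingWedge pt)
    (hxy : ∀ j, x j = pt j → y j = pt j) : y ∈ shrinkingWedge pt :=
  hx.anti fun j ↦ mt (hxy j)

lemma eq_pt_of_ne_pt (w : shrinkingWedge pt) {j k : ι} (hk : w.1 k ≠ pt k) (hjk : j ≠ k) :
    w.1 j = pt j :=
  by_contra fun hj ↦ hjk (w.2 hj hk)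

variable (pt) [∀ j, TopologicalSpace (S j)]

/-- The projection of the shrinking wedge onto its `j`-th summand. -/
def wedgeProj (j : ι) : C(shrinkingWedge pt, S j) :=
  ⟨fun w ↦ w.1 j, (continuous_apply j).comp continuous_subtype_val⟩

/-- The inclusion of the `j`-th summand in the shrinking wedge. -/
def wedgeIncl [DecidableEq ι] (j : ι) : C(S j, shrinkingWedge pt) where
  toFun y := ⟨Function.update pt j y, (Set.subsingleton_singleton (a := j)).anti fun _ hi ↦
    by_contra fun hij ↦ hi (Function.update_of_ne hij y pt)⟩
  continuous_toFun := (continuous_const.update j continuous_id).subtype_mk _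

lemma wedgeProj_wedgePt (j : ι) : wedgeProj pt j (wedgePt pt) = pt j :=
  rfl

lemma wedgeIncl_apply_pt [DecidableEq ι] (j : ι) : wedgeIncl pt j (pt j) = wedgePt pt :=
  Subtype.ext (Function.update_eq_self j pt)

open Classical in
/-- The retraction of the shrinking wedge onto the wedge of the summands with index in `A`,
collapsing the other summands to the basepoint. -/
def wedgeCollapse (A : Set ι) : C(shrinkingWedge pt, shrinkingWedge pt) where
  toFun w := ⟨A.piecewise w.1 pt, mem_shrinkingWedge_of_forall_imp w.2 fun j hj ↦ by
    simp [Set.piecewise, hj]⟩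
  continuous_toFun := by
    refine (continuous_pi fun j ↦ ?_).subtype_mk _
    by_cases hj : j ∈ A
    · exact (wedgeProj pt j).continuous.congr fun w ↦ (Set.piecewise_eq_of_mem A w.1 pt hj).symm
    · exact continuous_const.congr fun w ↦ (Set.piecewise_eq_of_notMem A w.1 pt hj).symm

variable {pt}

lemma wedgeCollapse_apply_of_mem {A : Set ι} {j : ι} (hj : j ∈ A) (w : shrinkingWedge pt) :
    (wedgeCollapse pt A w).1 j = w.1 j := by
  simp [wedgeCollapse, hj]

lemma wedgeCollapse_apply_of_notMem {A : Set ι} {j : ι} (hj : j ∉ A) (w : shrinkingWedge pt) :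
    (wedgeCollapse pt A w).1 j = pt j := by
  simp [wedgeCollapse, hj]

lemma wedgeCollapse_eq_self {A : Set ι} {w : shrinkingWedge pt} (hw : ∀ j ∉ A, w.1 j = pt j) :
    wedgeCollapse pt A w = w := by
  refine Subtype.ext (funext fun j ↦ ?_)
  by_cases hj : j ∈ A
  · exact wedgeCollapse_apply_of_mem hj w
  · rw [wedgeCollapse_apply_of_notMem hj, hw j hj]

lemma wedgeCollapse_eq_wedgePt {A : Set ι} {w : shrinkingWedge pt} (hw : ∀ j ∈ A, w.1 j = pt j) :
    wedgeCollapse pt A w = wedgePt pt := by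
  refine Subtype.ext (funext fun j ↦ ?_)
  by_cases hj : j ∈ A
  · exact (wedgeCollapse_apply_of_mem hj w).trans (hw j hj)
  · exact wedgeCollapse_apply_of_notMem hj w

lemma wedgeCollapse_wedgePt (A : Set ι) : wedgeCollapse pt A (wedgePt pt) = wedgePt pt :=
  wedgeCollapse_eq_self fun _ _ ↦ rfl

lemma wedgeCollapse_wedgeCollapse (A B : Set ι) (w : shrinkingWedge pt) :
    wedgeCollapse pt A (wedgeCollapse pt B w) = wedgeCollapse pt (A ∩ B) w := by
  refine Subtype.ext (funext fun j ↦ ?_)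
  by_cases hA : j ∈ A <;> by_cases hB : j ∈ B <;> simp [wedgeCollapse, hA, hB]

lemma wedgeIncl_wedgeProj [DecidableEq ι] (j : ι) (w : shrinkingWedge pt) :
    wedgeIncl pt j (wedgeProj pt j w) = wedgeCollapse pt {j} w := by
  refine Subtype.ext (funext fun i ↦ ?_)
  rcases eq_or_ne i j with rfl | hij
  · simp [wedgeIncl, wedgeProj, wedgeCollapse]
  · simp [wedgeIncl, wedgeCollapse, hij]

section Decomposition

variable {N : Type*} [DecidableEq N]

lemma homotopyGroupMap_wedgeCollapse_eq_self [Nonempty N] {A : Set ι}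
    {f : Ω^ N (shrinkingWedge pt) (wedgePt pt)}
    (hf : ∀ t, ∀ j ∉ A, (f t).1 j = pt j) :
    homotopyGroupMap N (wedgeCollapse pt A) (wedgeCollapse_wedgePt A) (homotopyClass f) =
      homotopyClass f :=
  congrArg homotopyClass (GenLoop.ext _ _ fun t ↦ wedgeCollapse_eq_self (hf t))

lemma homotopyGroupMap_wedgeCollapse_eq_one [Nonempty N] {A : Set ι}
    {f : Ω^ N (shrinkingWedge pt) (wedgePt pt)}
    (hf : ∀ t, ∀ j ∈ A, (f t).1 j = pt j) :
    homotopyGroupMap N (wedgeCollapse pt A) (wedgeCollapse_wedgePt A) (homotopyClass f) = 1 :=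
  congrArg homotopyClass (GenLoop.ext _ _ fun t ↦ wedgeCollapse_eq_wedgePt (hf t))

variable [Finite N] [∀ j, T1Space (S j)]

omit [DecidableEq N] in
lemma exists_homotopy_cellwise (hpush : ∀ j, PushesOffWalls N (pt j)) (k : ι)
    (α : Ω^ N (shrinkingWedge pt) (wedgePt pt)) :
    ∃ (L : Finset (N × I)) (β : Ω^ N (shrinkingWedge pt) (wedgePt pt)),
      homotopyClass α = homotopyClass β ∧ (∀ t ∈ wall L, β t = wedgePt pt) ∧
      ∀ t, (∀ u, SameCell L t u → ∀ j ≠ k, (β u).1 j = pt j) ∨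
        ∀ u, SameCell L t u → (β u).1 k = pt k := by
  have := Fintype.ofFinite N
  choose C hC hCpt hF using fun j ↦ hpush j ((wedgeProj pt j).comp α.1)
  obtain ⟨δ, hδ, hδC⟩ := (hC k).isCompact.exists_thickening_subset_open
    (isClosed_singleton.preimage ((wedgeProj pt k).comp α.1).continuous).isOpen_compl (hCpt k)
  obtain ⟨L, hL⟩ := exists_sameCell_dist_lt (N := N) hδ
  choose F hF0 hFpt hF1 using fun j ↦ hF j L
  let G : C(I × (I^N), shrinkingWedge pt) :=
    ⟨fun p ↦ ⟨fun j ↦ F j p, mem_shrinkingWedge_of_forall_imp (α p.2).2 fun j ↦ hFpt j p.1 p.2⟩,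
      (continuous_pi fun j ↦ (F j).continuous).subtype_mk _⟩
  have hGα (t : I^N) : G (0, t) = α t := Subtype.ext (funext fun j ↦ hF0 j t)
  have hGpt (s : I) (t : I^N) (ht : t ∈ Cube.boundary N) : G (s, t) = wedgePt pt :=
    Subtype.ext (funext fun j ↦ hFpt j s t (congrArg (wedgeProj pt j) (α.2 t ht)))
  refine ⟨L, ⟨G.comp (.prodMk (.const _ 1) (.id _)), hGpt 1⟩,
    homotopyClass_eq_of_homotopy G hGα (fun _ ↦ rfl) hGpt, fun t ht ↦ ?_, fun t ↦ ?_⟩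
  · exact Subtype.ext (funext fun j ↦ by_contra fun hj ↦ (hF1 j t hj).1 ht)
  · refine or_iff_not_imp_right.2 fun hk ↦ ?_
    push Not at hk
    obtain ⟨u, htu, hu⟩ := hk
    refine fun v htv j hjk ↦ hFpt j 1 v (eq_pt_of_ne_pt (α v) (hδC ?_) hjk)
    exact Metric.mem_thickening_iff.2 ⟨u, (hF1 k u hu).2,
      hL v u fun q hq ↦ (htv q hq).symm.trans (htu q hq)⟩

variable [Nontrivial N]

theorem homotopyGroupMap_wedgeCollapse_mul_compl (hpush : ∀ j, PushesOffWalls N (pt j)) (k : ι)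
    (a : HomotopyGroup N (shrinkingWedge pt) (wedgePt pt)) :
    homotopyGroupMap N (wedgeCollapse pt {k}) (wedgeCollapse_wedgePt {k}) a *
      homotopyGroupMap N (wedgeCollapse pt {k}ᶜ) (wedgeCollapse_wedgePt {k}ᶜ) a = a := by
  obtain ⟨α, rfl⟩ := homotopyClass_surjective a
  obtain ⟨L, β, hαβ, hwall, hcell⟩ := exists_homotopy_cellwise hpush k α
  rw [hαβ]
  let φ := homotopyGroupMap N (wedgeCollapse pt {k}) (wedgeCollapse_wedgePt {k})
  let ψ := homotopyGroupMap N (wedgeCollapse pt {k}ᶜ) (wedgeCollapse_wedgePt {k}ᶜ)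
  let M : Subgroup _ := ((φ.noncommCoprod ψ fun _ _ ↦ HomotopyGroup.commGroup.mul_comm _ _).comp
    ((MonoidHom.id _).prod (MonoidHom.id _))).eqLocus (MonoidHom.id _)
  have mem_M {b} {p q} (hφ : φ b = p) (hψ : ψ b = q) (hpq : p * q = b) : b ∈ M :=
    (congrArg₂ (· * ·) hφ hψ).trans hpq
  refine homotopyClass_mem_of_cellwise_mem M {{w | ∀ j ≠ k, w.1 j = pt j}, {w | w.1 k = pt k}}
    ?_ ?_ L β hwall fun t ↦ ?_
  · rintro _ (rfl | rfl)
    exacts [fun _ _ ↦ rfl, rfl]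
  · rintro _ (rfl | rfl) f hf
    · exact mem_M (homotopyGroupMap_wedgeCollapse_eq_self hf)
        (homotopyGroupMap_wedgeCollapse_eq_one hf) (mul_one _)
    · refine mem_M (homotopyGroupMap_wedgeCollapse_eq_one fun t j hj ↦ ?_)
        (homotopyGroupMap_wedgeCollapse_eq_self fun t j hj ↦ ?_) (one_mul _)
      · exact Set.mem_singleton_iff.1 hj ▸ hf t
      · exact Set.mem_singleton_iff.1 (not_not.1 hj) ▸ hf t
  · rcases hcell t with h | h
    · exact ⟨_, .inl rfl, h⟩
    · exact ⟨_, .inr rfl, h⟩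

end Decomposition

end ShrinkingWedge

section Sequences

variable {S : ℕ → Type*} {pt : ∀ j, S j} [∀ j, TopologicalSpace (S j)]
  {N : Type*} [DecidableEq N] [Nontrivial N]

lemma homotopyGroupMap_wedgeCollapse_Ici_eq_self [Finite N] [∀ j, T1Space (S j)]
    (hpush : ∀ j, PushesOffWalls N (pt j)) {a : HomotopyGroup N (shrinkingWedge pt) (wedgePt pt)}
    (k : ℕ) (ha : ∀ j < k, homotopyGroupMap N (wedgeProj pt j) (wedgeProj_wedgePt pt j) a = 1) :
    homotopyGroupMap N (wedgeCollapse pt (Set.Ici k)) (wedgeCollapse_wedgePt _) a = a := by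
  induction k with
  | zero => exact homotopyGroupMap_eq_self (fun w ↦ wedgeCollapse_eq_self (by simp)) a
  | succ k ih =>
    obtain ⟨f, rfl⟩ := homotopyClass_surjective a
    have hk : homotopyGroupMap N (wedgeCollapse pt {k}) (wedgeCollapse_wedgePt {k})
        (homotopyClass f) = 1 := by
      refine Eq.trans ?_ ((congrArg (homotopyGroupMap N (wedgeIncl pt k) (wedgeIncl_apply_pt pt k))
        (ha k k.lt_succ_self)).trans (map_one _))
      exact congrArg homotopyClass (GenLoop.ext _ _ fun t ↦ (wedgeIncl_wedgeProj k (f t)).symm)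
    have hcompl := homotopyGroupMap_wedgeCollapse_mul_compl hpush k (homotopyClass f)
    rw [hk, one_mul] at hcompl
    calc _ = homotopyGroupMap N (wedgeCollapse pt (Set.Ici k)) (wedgeCollapse_wedgePt _)
          (homotopyGroupMap N (wedgeCollapse pt {k}ᶜ) (wedgeCollapse_wedgePt _)
            (homotopyClass f)) := by
            refine congrArg homotopyClass (GenLoop.ext _ _ fun t ↦ ?_)
            have hIci : Set.Ici (k + 1) = Set.Ici k ∩ {k}ᶜ := by
              ext j
              simp only [Set.mem_Ici, Set.mem_inter_iff, Set.mem_compl_singleton_iff]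
              omega
            exact (hIci ▸ wedgeCollapse_wedgeCollapse (Set.Ici k) {k}ᶜ (f t)).symm
      _ = homotopyClass f := by
          rw [hcompl, ih fun j hj ↦ ha j (hj.trans k.lt_succ_self)]

end Sequences

section Concatenation

open Filter
open scoped NNReal

variable {T X : Type*}

/-- The infinite concatenation of a sequence of homotopies `F 0, F 1, …`, each of which ends where
the next one starts, parametrized by `[0, ∞)`. -/
def concatHomotopies (F : ℕ → I × T → X) (p : ℝ≥0 × T) : X :=
  F ⌊p.1⌋₊ (Set.projIcc 0 1 zero_le_one (p.1 - ⌊p.1⌋₊ : ℝ), p.2)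

lemma concatHomotopies_of_mem_Icc {F : ℕ → I × T → X}
    (hF : ∀ k t, F k (1, t) = F (k + 1) (0, t)) {k : ℕ} {p : ℝ≥0 × T}
    (hp : p.1 ∈ Set.Icc (k : ℝ≥0) (k + 1)) :
    concatHomotopies F p = F k (Set.projIcc 0 1 zero_le_one (p.1 - k : ℝ), p.2) := by
  obtain ⟨r, t⟩ := p
  rcases hp.2.eq_or_lt with rfl | hlt
  · have hfloor : ⌊(k : ℝ≥0) + 1⌋₊ = k + 1 := by exact_mod_cast Nat.floor_natCast (k + 1)
    simp [concatHomotopies, hfloor, hF]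
  · rw [concatHomotopies, (Nat.floor_eq_iff zero_le).2 ⟨hp.1, hlt⟩]

variable [TopologicalSpace T] [TopologicalSpace X]

lemma continuous_concatHomotopies {F : ℕ → C(I × T, X)}
    (hF : ∀ k t, F k (1, t) = F (k + 1) (0, t)) :
    Continuous (concatHomotopies fun k ↦ F k) := by
  have hfin : LocallyFinite fun k : ℕ ↦
      (Prod.fst : ℝ≥0 × T → ℝ≥0) ⁻¹' Set.Icc (k : ℝ≥0) (k + 1) := by
    refine fun p ↦ ⟨{q | q.1 < p.1 + 1}, (isOpen_lt continuous_fst continuous_const).mem_nhds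
      (lt_add_one p.1), (Set.finite_Iic ⌈p.1 + 1⌉₊).subset ?_⟩
    rintro k ⟨q, hkq, hqp⟩
    exact_mod_cast (hkq.1.trans hqp.le).trans (Nat.le_ceil (p.1 + 1))
  refine hfin.continuous ?_ (fun k ↦ isClosed_Icc.preimage continuous_fst) fun k ↦ ?_
  · refine Set.eq_univ_of_forall fun p ↦ Set.mem_iUnion.2 ⟨⌊p.1⌋₊, ?_⟩
    exact ⟨Nat.floor_le zero_le, (Nat.lt_floor_add_one p.1).le⟩
  · refine ContinuousOn.congr (f := fun p : ℝ≥0 × T ↦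
      F k (Set.projIcc 0 1 zero_le_one (p.1 - k : ℝ), p.2)) ?_
      fun p hp ↦ concatHomotopies_of_mem_Icc hF hp
    have := continuous_projIcc (h := zero_le_one (α := ℝ))
    fun_prop

lemma exists_homotopy_wedgePt {S : ℕ → Type*} {pt : ∀ j, S j} [∀ j, TopologicalSpace (S j)]
    {F : ℕ → C(I × T, shrinkingWedge pt)} (hF : ∀ k t, F k (1, t) = F (k + 1) (0, t))
    (htail : ∀ k p, ∀ j < k, (F k p).1 j = pt j) :
    ∃ K : C(I × T, shrinkingWedge pt), (∀ t, K (0, t) = F 0 (0, t)) ∧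
      (∀ t, K (1, t) = wedgePt pt) ∧
      ∀ s t, K (s, t) = wedgePt pt ∨ ∃ k u, K (s, t) = F k (u, t) := by
  classical
  let G : I × T → shrinkingWedge pt := fun p ↦
    concatHomotopies (fun k ↦ F k) (Real.toNNReal (p.1 / (1 - p.1)), p.2)
  let K : I × T → shrinkingWedge pt := fun p ↦ if p.1 = 1 then wedgePt pt else G p
  have hcont (p : I × T) (j : ℕ) : ContinuousAt (fun q ↦ (K q).1 j) p := by
    by_cases hp : p.1 = 1
    · -- After time `j + 1` of the concatenation the `j`-th coordinate stays at the basepoint.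
      have hnear : ∀ᶠ q : I × T in 𝓝 p, (j + 1) * (1 - q.1 : ℝ) < q.1 :=
        (isOpen_lt (by fun_prop) (by fun_prop)).mem_nhds (by simp [hp])
      refine (continuousAt_const (y := pt j)).congr (hnear.mono fun q hq ↦ ?_)
      rcases eq_or_ne q.1 1 with h1 | h1
      · simp only [K, if_pos h1, wedgePt]
      · have hlt : (0 : ℝ) < 1 - q.1 := sub_pos.2 (unitInterval.lt_one_iff_ne_one.2 h1)
        have hfloor : j < ⌊Real.toNNReal (q.1 / (1 - q.1))⌋₊ := Nat.le_floor <|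
          NNReal.le_toNNReal_of_coe_le <| by simpa using (le_div_iff₀ hlt).2 hq.le
        simp only [K, if_neg h1]
        exact (htail _ _ j hfloor).symm
    · have hne : (1 - p.1 : ℝ) ≠ 0 := sub_ne_zero.2 fun h ↦ hp (Subtype.ext h.symm)
      have hG : ContinuousAt G p :=
        (continuous_concatHomotopies hF).continuousAt.comp (by fun_prop (disch := assumption))
      refine (((wedgeProj pt j).continuous.continuousAt).comp hG).congr ?_
      filter_upwards [(isOpen_ne.preimage continuous_fst).mem_nhds hp] with q hq
      simp [K, show q.1 ≠ 1 from hq, wedgeProj]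
  refine ⟨⟨K, continuous_iff_continuousAt.2 fun p ↦ ?_⟩, fun t ↦ ?_, fun t ↦ if_pos rfl,
    fun s t ↦ ?_⟩
  · exact Topology.IsInducing.subtypeVal.continuousAt_iff.2 (continuousAt_pi.2 (hcont p))
  · simp [K, G, concatHomotopies]
  · by_cases hs : s = 1
    · exact .inl (if_pos hs)
    · exact .inr ⟨_, _, if_neg hs⟩

end Concatenation

section Metrizability

open Filter

variable {S : ℕ → Type*} {pt : ∀ j, S j} [∀ j, TopologicalSpace (S j)]

lemma exists_tail_subset_of_mem_nhds_wedgePt {U : Set (shrinkingWedge pt)}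
    (hU : U ∈ 𝓝 (wedgePt pt)) :
    ∃ k : ℕ, ∀ w : shrinkingWedge pt, (∀ j < k, w.1 j = pt j) → w ∈ U := by
  by_contra! h
  choose w hw hwU using h
  have hlim : Tendsto w atTop (𝓝 (wedgePt pt)) :=
    tendsto_subtype_rng.2 <| tendsto_pi_nhds.2 fun j ↦ tendsto_const_nhds.congr' <|
      (eventually_gt_atTop j).mono fun k hk ↦ (hw k j hk).symm
  obtain ⟨k, hk⟩ := (hlim.eventually hU).exists
  exact hwU k hk

variable {N : Type*} [DecidableEq N] [Nontrivial N]

lemma exists_tail_homotopyClass_mem {U : Set (HomotopyGroup N (shrinkingWedge pt) (wedgePt pt))}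
    (hU : U ∈ 𝓝 1) : ∃ k : ℕ, ∀ f : Ω^ N (shrinkingWedge pt) (wedgePt pt),
      (∀ t, ∀ j < k, (f t).1 j = pt j) → homotopyClass f ∈ U := by
  by_contra! h
  choose f hf hfU using h
  have hlim : Tendsto f atTop (𝓝 GenLoop.const) := by
    refine tendsto_subtype_rng.2 <| ContinuousMap.tendsto_nhds_compactOpen.2 fun C _ V hV hCV ↦ ?_
    rcases C.eq_empty_or_nonempty with rfl | ⟨c, hc⟩
    · exact .of_forall fun k ↦ Set.mapsTo_empty _ _
    · obtain ⟨m, hm⟩ := exists_tail_subset_of_mem_nhds_wedgePt (hV.mem_nhds (hCV hc))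
      exact (eventually_ge_atTop m).mono fun k hk t _ ↦ hm _ fun j hj ↦ hf k t j (hj.trans_le hk)
  obtain ⟨k, hk⟩ :=
    ((isQuotientMap_homotopyClass.continuous.tendsto _).comp hlim |>.eventually hU).exists
  exact hfU k hk

variable [Finite N] [∀ j, T1Space (S j)]

theorem eq_one_of_forall_homotopyGroupMap_wedgeProj_eq_one (hpush : ∀ j, PushesOffWalls N (pt j))
    {a : HomotopyGroup N (shrinkingWedge pt) (wedgePt pt)}
    (ha : ∀ j, homotopyGroupMap N (wedgeProj pt j) (wedgeProj_wedgePt pt j) a = 1) : a = 1 := by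
  obtain ⟨f, rfl⟩ := homotopyClass_surjective a
  have hcollapse (k : ℕ) := homotopyGroupMap_wedgeCollapse_Ici_eq_self hpush k fun j _ ↦ ha j
  -- Collapsing a homotopy between two loops in the tail keeps it in the tail.
  have hF (k : ℕ) : ∃ F : C(I × (I^N), shrinkingWedge pt), (∀ p, ∀ j < k, (F p).1 j = pt j) ∧
      (∀ t, F (0, t) = wedgeCollapse pt (Set.Ici k) (f t)) ∧
      (∀ t, F (1, t) = wedgeCollapse pt (Set.Ici (k + 1)) (f t)) ∧
      ∀ s, ∀ t ∈ Cube.boundary N, F (s, t) = wedgePt pt := by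
    obtain ⟨H⟩ := homotopyClass_eq_iff.1 ((hcollapse k).trans (hcollapse (k + 1)).symm)
    refine ⟨(wedgeCollapse pt (Set.Ici k)).comp H.toContinuousMap,
      fun p j hj ↦ wedgeCollapse_apply_of_notMem (not_le.2 hj) _, fun t ↦ ?_, fun t ↦ ?_,
      fun s t ht ↦ ?_⟩
    · refine (congrArg (wedgeCollapse pt (Set.Ici k)) (H.apply_zero t)).trans ?_
      exact (wedgeCollapse_wedgeCollapse _ _ (f t)).trans (by rw [Set.inter_self])
    · refine (congrArg (wedgeCollapse pt (Set.Ici k)) (H.apply_one t)).trans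
        ((wedgeCollapse_wedgeCollapse _ _ (f t)).trans ?_)
      rw [Set.inter_eq_self_of_subset_right (Set.Ici_subset_Ici.2 k.le_succ)]
    · refine (congrArg (wedgeCollapse pt (Set.Ici k)) ((H.eq_fst s ht).trans ?_)).trans
        (wedgeCollapse_wedgePt _)
      exact (genLoopMap _ (wedgeCollapse_wedgePt _) f).2 t ht
  choose F htail hF0 hF1 hFpt using hF
  obtain ⟨K, hK0, hK1, hKF⟩ :=
    exists_homotopy_wedgePt (fun k t ↦ (hF1 k t).trans (hF0 (k + 1) t).symm) htail
  refine homotopyClass_eq_of_homotopy K (fun t ↦ ?_) hK1 fun s t ht ↦ ?_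
  · exact (hK0 t).trans <| (hF0 0 t).trans <| wedgeCollapse_eq_self (by simp)
  · rcases hKF s t with h | ⟨k, u, h⟩
    exacts [h, h.trans (hFpt k u t ht)]

theorem isEmbedding_homotopyGroupMap_wedgeProj (hpush : ∀ j, PushesOffWalls N (pt j))
    [∀ j, DiscreteTopology (HomotopyGroup N (S j) (pt j))] :
    Topology.IsEmbedding fun (a : HomotopyGroup N (shrinkingWedge pt) (wedgePt pt)) (j : ℕ) ↦
      homotopyGroupMap N (wedgeProj pt j) (wedgeProj_wedgePt pt j) a := by
  have map_inv_mul {j : ℕ} {a b : HomotopyGroup N (shrinkingWedge pt) (wedgePt pt)}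
      (h : homotopyGroupMap N (wedgeProj pt j) (wedgeProj_wedgePt pt j) b =
        homotopyGroupMap N (wedgeProj pt j) (wedgeProj_wedgePt pt j) a) :
      homotopyGroupMap N (wedgeProj pt j) (wedgeProj_wedgePt pt j) (a⁻¹ * b) = 1 := by
    rw [map_mul, map_inv, h, inv_mul_cancel]
  refine ⟨Topology.isInducing_iff_nhds.2 fun a ↦ le_antisymm ?_ fun U hU ↦ ?_, fun a b hab ↦ ?_⟩
  · exact (continuous_pi fun j ↦ continuous_homotopyGroupMap _ _).continuousAt.le_comap
  · have hV : (a * ·) ⁻¹' U ∈ 𝓝 1 :=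
      (continuous_homotopyGroup_mul_left a).continuousAt.preimage_mem_nhds (by rwa [mul_one])
    obtain ⟨k, hk⟩ := exists_tail_homotopyClass_mem hV
    refine ⟨(Set.Iio k).pi fun j ↦ {homotopyGroupMap N (wedgeProj pt j) (wedgeProj_wedgePt pt j) a},
      set_pi_mem_nhds (Set.finite_Iio k) fun j _ ↦ mem_nhds_discrete.2 rfl, fun b hb ↦ ?_⟩
    have hfix := homotopyGroupMap_wedgeCollapse_Ici_eq_self hpush k fun j hj ↦ map_inv_mul (hb j hj)
    obtain ⟨f, hf⟩ := homotopyClass_surjective (a⁻¹ * b)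
    rw [← hf] at hfix
    have hbU := hk (genLoopMap (wedgeCollapse pt (Set.Ici k)) (wedgeCollapse_wedgePt _) f)
      fun t j hj ↦ wedgeCollapse_apply_of_notMem (not_le.2 hj) _
    rwa [← homotopyGroupMap_homotopyClass, hfix, hf, Set.mem_preimage, mul_inv_cancel_left] at hbU
  · exact inv_mul_eq_one.1 (eq_one_of_forall_homotopyGroupMap_wedgeProj_eq_one hpush fun j ↦
      map_inv_mul (congrFun hab j).symm)

omit [DecidableEq N] in
theorem metrizableSpace_homotopyGroup_shrinkingWedge (hpush : ∀ j, PushesOffWalls N (pt j))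
    [∀ j, DiscreteTopology (HomotopyGroup N (S j) (pt j))] :
    TopologicalSpace.MetrizableSpace (HomotopyGroup N (shrinkingWedge pt) (wedgePt pt)) := by
  classical exact (isEmbedding_homotopyGroupMap_wedgeProj hpush).metrizableSpace

end Metrizability

section Sphere

variable {N E : Type*} [NormedAddCommGroup E] [NormedSpace ℝ E] {c : E} {r : ℝ}

lemma lineMap_ne_center_of_dist_lt {x y : E} (hx : dist x c = r) (hxy : dist x y < r) (s : I) :
    AffineMap.lineMap x y (s : ℝ) ≠ c := by
  rintro rfl
  rw [dist_left_lineMap, Real.norm_of_nonneg s.2.1] at hx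
  exact hxy.not_ge (hx ▸ mul_le_of_le_one_left dist_nonneg s.2.2)

lemma exists_retraction_sphere (c : E) (hr : 0 ≤ r) :
    ∃ ρ : C({y : E // y ≠ c}, Metric.sphere c r),
      ∀ (y : {y : E // y ≠ c}) (z : Metric.sphere c r), (y : E) = z → ρ y = z := by
  have hne (y : {y : E // y ≠ c}) : ‖(y : E) - c‖ ≠ 0 := norm_ne_zero_iff.2 (sub_ne_zero.2 y.2)
  have hmem (y : {y : E // y ≠ c}) : c + (r / ‖(y : E) - c‖) • (y - c) ∈ Metric.sphere c r := by
    rw [mem_sphere_iff_norm, add_sub_cancel_left, norm_smul, norm_div, norm_norm,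
      Real.norm_of_nonneg hr, div_mul_cancel₀ _ (hne y)]
  refine ⟨⟨fun y ↦ ⟨_, hmem y⟩, Continuous.subtype_mk (continuous_const.add
    ((continuous_const.div (by fun_prop) hne).smul (by fun_prop))) hmem⟩,
    fun y z hyz ↦ Subtype.ext ?_⟩
  have hz : ‖(y : E) - c‖ = r := hyz ▸ mem_sphere_iff_norm.1 z.2
  have hr : r / r = 1 := div_self (hz ▸ hne y)
  simp only [ContinuousMap.coe_mk, hz, hr, one_smul, add_sub_cancel]
  exact hyz

lemma homotopyClass_eq_of_dist_lt (hr : 0 ≤ r) {x : Metric.sphere c r}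
    {f g : Ω^ N (Metric.sphere c r) x} (hfg : ∀ t, dist (f t) (g t) < r) :
    homotopyClass f = homotopyClass g := by
  obtain ⟨ρ, hρ⟩ := exists_retraction_sphere c hr
  have hf : Continuous fun t ↦ (f t : E) := continuous_subtype_val.comp f.1.continuous
  have hg : Continuous fun t ↦ (g t : E) := continuous_subtype_val.comp g.1.continuous
  let ℓ : C(I × (I^N), {y : E // y ≠ c}) :=
    ⟨fun p ↦ ⟨AffineMap.lineMap (f p.2 : E) (g p.2) (p.1 : ℝ),
      lineMap_ne_center_of_dist_lt (f p.2).2 (hfg p.2) p.1⟩,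
      ((hf.comp continuous_snd).lineMap (hg.comp continuous_snd)
        (continuous_subtype_val.comp continuous_fst)).subtype_mk _⟩
  refine homotopyClass_eq_of_homotopy (ρ.comp ℓ) (fun t ↦ hρ _ _ ?_) (fun t ↦ hρ _ _ ?_)
    fun s t ht ↦ hρ _ _ ?_
  · simp [ℓ]
  · simp [ℓ]
  · simp [ℓ, GenLoop.boundary f t ht, GenLoop.boundary g t ht]

theorem discreteTopology_homotopyGroup_sphere (hr : 0 < r) (x : Metric.sphere c r) :
    DiscreteTopology (HomotopyGroup N (Metric.sphere c r) x) := by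
  refine discreteTopology_iff_isOpen_singleton.2 fun a ↦
    isQuotientMap_homotopyClass.isOpen_preimage.1 (Metric.isOpen_iff.2 fun f hf ↦ ⟨r, hr, ?_⟩)
  rintro g hg
  refine (homotopyClass_eq_of_dist_lt hr.le fun t ↦ ?_).trans hf
  exact (ContinuousMap.dist_apply_le_dist t).trans_lt hg

end Sphere

section WedgeSum

open Filter

variable {ι : Type*} {S : ι → Type*} {pt : ∀ j, S j}

lemma exists_forall_ne_eq_pt [Nonempty ι] (w : shrinkingWedge pt) : ∃ k, ∀ j ≠ k, w.1 j = pt j := by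
  by_cases h : ∃ k, w.1 k ≠ pt k
  · exact h.imp fun k hk j hjk ↦ eq_pt_of_ne_pt w hk hjk
  · exact ⟨Classical.arbitrary ι, fun j _ ↦ not_not.1 (not_exists.1 h j)⟩

variable [∀ j, TopologicalSpace (S j)]

lemma isClosed_shrinkingWedge [∀ j, T1Space (S j)] : IsClosed (shrinkingWedge pt) := by
  have : shrinkingWedge pt = ⋂ (i) (j) (_ : i ≠ j), {x | x i = pt i} ∪ {x | x j = pt j} := by
    ext x
    simp only [shrinkingWedge, Set.Subsingleton, Set.mem_ofPred_eq, Set.mem_iInter, Set.mem_union]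
    grind
  rw [this]
  exact isClosed_iInter fun i ↦ isClosed_iInter fun j ↦ isClosed_iInter fun _ ↦
    (isClosed_singleton.preimage (continuous_apply i)).union
      (isClosed_singleton.preimage (continuous_apply j))

variable {E : Type*} [NormedAddCommGroup E] {s : ∀ j, C(S j, E)}

/-- The map from the shrinking wedge to `E` that restricts to `s j` on the `j`-th summand; as at
most one term is nonzero, it can be written as a sum. -/
def wedgeSum (s : ∀ j, C(S j, E)) (w : shrinkingWedge pt) : E :=
  ∑ᶠ j, s j (w.1 j)

lemma wedgeSum_eq (hs : ∀ j, s j (pt j) = 0) {w : shrinkingWedge pt} {k : ι}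
    (hw : ∀ j ≠ k, w.1 j = pt j) : wedgeSum s w = s k (w.1 k) :=
  finsum_eq_single _ k fun j hj ↦ hw j hj ▸ hs j

lemma range_wedgeSum [Nonempty ι] (hs : ∀ j, s j (pt j) = 0) :
    Set.range (wedgeSum (pt := pt) s) = ⋃ j, Set.range (s j) := by
  classical
  refine Set.Subset.antisymm (Set.range_subset_iff.2 fun w ↦ ?_)
    (Set.iUnion_subset fun j ↦ Set.range_subset_iff.2 fun y ↦ ⟨wedgeIncl pt j y, ?_⟩)
  · obtain ⟨k, hk⟩ := exists_forall_ne_eq_pt w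
    exact Set.mem_iUnion.2 ⟨k, w.1 k, (wedgeSum_eq hs hk).symm⟩
  · rw [wedgeSum_eq hs (k := j) fun i hij ↦ Function.update_of_ne hij y pt]
    exact congrArg (s j) (Function.update_self j y pt)

lemma injective_wedgeSum [Nonempty ι] (hs : ∀ j, s j (pt j) = 0)
    (hinj : ∀ j, Function.Injective (s j))
    (hdisj : ∀ i j, i ≠ j → ∀ y z, s i y = s j z → y = pt i) :
    Function.Injective (wedgeSum (pt := pt) s) := by
  intro v w hvw
  obtain ⟨k, hk⟩ := exists_forall_ne_eq_pt v
  obtain ⟨l, hl⟩ := exists_forall_ne_eq_pt w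
  rw [wedgeSum_eq hs hk, wedgeSum_eq hs hl] at hvw
  rcases eq_or_ne k l with rfl | hkl
  · refine Subtype.ext (funext fun j ↦ ?_)
    rcases eq_or_ne j k with rfl | hjk
    exacts [hinj _ hvw, (hk j hjk).trans (hl j hjk).symm]
  · have hv (j : ι) : v.1 j = pt j :=
      (eq_or_ne j k).elim (· ▸ hdisj k l hkl _ _ hvw) (hk j)
    have hw (j : ι) : w.1 j = pt j :=
      (eq_or_ne j l).elim (· ▸ hdisj l k hkl.symm _ _ hvw.symm) (hl j)
    exact Subtype.ext (funext fun j ↦ (hv j).trans (hw j).symm)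

lemma continuous_wedgeSum {S : ℕ → Type*} {pt : ∀ j, S j} [∀ j, TopologicalSpace (S j)]
    {s : ∀ j, C(S j, E)} {ε : ℕ → ℝ} (hs : ∀ j, s j (pt j) = 0) (hsε : ∀ j y, ‖s j y‖ ≤ ε j)
    (hε : Tendsto ε atTop (𝓝 0)) : Continuous (wedgeSum (pt := pt) s) := by
  let partialSum (n : ℕ) (w : shrinkingWedge pt) : E := ∑ j ∈ Finset.range n, s j (w.1 j)
  have hpartial : TendstoUniformly partialSum (wedgeSum s) atTop := by
    refine Metric.tendstoUniformly_iff.2 fun δ hδ ↦ ?_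
    filter_upwards [eventually_forall_ge_atTop.2 (hε.eventually_lt_const hδ)] with n hn w
    obtain ⟨k, hk⟩ := exists_forall_ne_eq_pt w
    have hzero (j : ℕ) (hjk : j ≠ k) : s j (w.1 j) = 0 := hk j hjk ▸ hs j
    simp only [wedgeSum_eq hs hk, partialSum]
    by_cases hkn : k ∈ Finset.range n
    · rwa [Finset.sum_eq_single_of_mem k hkn fun j _ ↦ hzero j, dist_self]
    · rw [Finset.sum_eq_zero fun j hj ↦ hzero j (ne_of_mem_of_not_mem hj hkn), dist_zero_right]
      exact (hsε k _).trans_lt (hn k (not_lt.1 (mt Finset.mem_range.2 hkn)))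
  refine hpartial.continuous (.of_forall fun n ↦ ?_)
  exact continuous_finsetSum _ fun j _ ↦ (s j).continuous.comp (wedgeProj pt j).continuous

lemma isEmbedding_wedgeSum {S : ℕ → Type*} {pt : ∀ j, S j} [∀ j, TopologicalSpace (S j)]
    [∀ j, CompactSpace (S j)] [∀ j, T1Space (S j)] {s : ∀ j, C(S j, E)} {ε : ℕ → ℝ}
    (hs : ∀ j, s j (pt j) = 0) (hinj : ∀ j, Function.Injective (s j))
    (hdisj : ∀ i j, i ≠ j → ∀ y z, s i y = s j z → y = pt i)
    (hsε : ∀ j y, ‖s j y‖ ≤ ε j) (hε : Tendsto ε atTop (𝓝 0)) :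
    Topology.IsEmbedding (wedgeSum (pt := pt) s) :=
  have : CompactSpace (shrinkingWedge pt) :=
    isCompact_iff_compactSpace.1 isClosed_shrinkingWedge.isCompact
  ((continuous_wedgeSum hs hsε hε).isClosedEmbedding
    (injective_wedgeSum hs hinj hdisj)).isEmbedding

end WedgeSum

section HawaiianEarring

open Filter OnePoint EuclideanGeometry

variable {n : ℕ}

/-- The hyperplane `x₀ = a` of `ℝ^{n+1}`, parametrized by the remaining coordinates. -/
def hyperplaneAt (a : ℝ) (v : Fin n → ℝ) : EuclideanSpace ℝ (Fin (n + 1)) :=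
  WithLp.toLp 2 (Fin.cons a v)

lemma le_norm_hyperplaneAt (a : ℝ) (v : Fin n → ℝ) : a ≤ ‖hyperplaneAt a v‖ :=
  (le_abs_self a).trans (PiLp.norm_apply_le (hyperplaneAt a v) 0)

lemma norm_le_norm_hyperplaneAt (a : ℝ) (v : Fin n → ℝ) : ‖v‖ ≤ ‖hyperplaneAt a v‖ :=
  (pi_norm_le_iff_of_nonneg (norm_nonneg _)).2 fun i ↦
    PiLp.norm_apply_le (hyperplaneAt a v) i.succ

lemma hyperplaneAt_injective2 : Function.Injective2 (hyperplaneAt (n := n)) := fun _ _ _ _ h ↦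
  Fin.cons_injective2 ((WithLp.toLp_injective 2) h)

lemma hyperplaneAt_ne_zero {a : ℝ} (ha : 0 < a) (v : Fin n → ℝ) : hyperplaneAt a v ≠ 0 :=
  norm_pos_iff.1 (ha.trans_le (le_norm_hyperplaneAt a v))

lemma range_hyperplaneAt {a : ℝ} (ha : a ≠ 0) :
    Set.range (hyperplaneAt (n := n) a) = AffineSubspace.perpBisector
      (0 : EuclideanSpace ℝ (Fin (n + 1))) (EuclideanSpace.single 0 (2 * a)) := by
  ext x
  have hx : x ∈ AffineSubspace.perpBisector 0 (EuclideanSpace.single 0 (2 * a)) ↔ x 0 = a := by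
    have hdist : dist 0 (EuclideanSpace.single (0 : Fin (n + 1)) (2 * a)) ^ 2 / 2 = 2 * a * a := by
      rw [dist_zero_left, PiLp.norm_single, Real.norm_eq_abs, sq_abs]
      ring
    rw [AffineSubspace.mem_perpBisector_iff_inner_eq, hdist]
    simp [EuclideanSpace.inner_single_right, ha]
  refine Iff.trans ⟨?_, fun h ↦ ⟨fun i ↦ x i.succ, ?_⟩⟩ hx.symm
  · rintro ⟨v, rfl⟩
    rfl
  · exact congrArg (WithLp.toLp 2) (h ▸ Fin.cons_self_tail x.ofLp)

lemma norm_inversion_zero_one {F : Type*} [NormedAddCommGroup F] [InnerProductSpace ℝ F] (x : F) :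
    ‖inversion (0 : F) 1 x‖ = ‖x‖⁻¹ := by
  simpa using dist_inversion_center 0 x 1

/-- The inversion of the hyperplane `x₀ = a` in the unit sphere about the origin, extended to its
one-point compactification by sending `∞` to the origin. It is a homeomorphism onto the
sphere with diameter from `0` to `(1/a, 0, …, 0)`. -/
def sphereChart {a : ℝ} (ha : 0 < a) : C(OnePoint (Fin n → ℝ), EuclideanSpace ℝ (Fin (n + 1))) where
  toFun q := q.elim 0 fun v ↦ inversion 0 1 (hyperplaneAt a v)
  continuous_toFun := by
    refine (OnePoint.continuous_iff _).2 ⟨?_, ?_⟩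
    · rw [coclosedCompact_eq_cocompact]
      refine squeeze_zero_norm' ?_ tendsto_norm_cocompact_atTop.inv_tendsto_atTop
      filter_upwards [tendsto_norm_cocompact_atTop.eventually_gt_atTop 0] with v hv
      exact (norm_inversion_zero_one _).trans_le
        (inv_anti₀ hv (norm_le_norm_hyperplaneAt a v))
    · refine continuous_const.inversion continuous_const ?_ (hyperplaneAt_ne_zero ha)
      exact (PiLp.continuous_toLp 2 _).comp (continuous_const.finCons continuous_id)

variable {a : ℝ} (ha : 0 < a)

lemma sphereChart_infty : sphereChart (n := n) ha ∞ = 0 :=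
  rfl

lemma sphereChart_coe (v : Fin n → ℝ) : sphereChart ha v = inversion 0 1 (hyperplaneAt a v) :=
  rfl

lemma sphereChart_eq_zero {q : OnePoint (Fin n → ℝ)} : sphereChart ha q = 0 ↔ q = ∞ := by
  induction q using OnePoint.rec with
  | infty => simp [sphereChart_infty]
  | coe v => simp [sphereChart_coe, inversion_eq_center one_ne_zero, hyperplaneAt_ne_zero ha]

lemma norm_sphereChart_le (q : OnePoint (Fin n → ℝ)) : ‖sphereChart ha q‖ ≤ a⁻¹ := by
  induction q using OnePoint.rec with
  | infty => simpa [sphereChart_infty] using ha.le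
  | coe v => exact (norm_inversion_zero_one _).trans_le (inv_anti₀ ha (le_norm_hyperplaneAt a v))

lemma sphereChart_eq_sphereChart_iff {b : ℝ} (hb : 0 < b) {p q : OnePoint (Fin n → ℝ)} :
    sphereChart ha p = sphereChart hb q ↔ p = q ∧ (p = ∞ ∨ a = b) := by
  refine ⟨fun h ↦ ?_, ?_⟩
  · induction p using OnePoint.rec with
    | infty => exact ⟨((sphereChart_eq_zero hb).1 h.symm).symm, .inl rfl⟩
    | coe v =>
      induction q using OnePoint.rec with
      | infty => exact ⟨(sphereChart_eq_zero ha).1 h, .inl ((sphereChart_eq_zero ha).1 h)⟩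
      | coe w =>
        obtain ⟨hab, rfl⟩ := hyperplaneAt_injective2 (inversion_injective 0 one_ne_zero h)
        exact ⟨rfl, .inr hab⟩
  · rintro ⟨rfl, rfl | rfl⟩ <;> rfl

lemma injective_sphereChart : Function.Injective (sphereChart (n := n) ha) := fun _ _ h ↦
  ((sphereChart_eq_sphereChart_iff ha ha).1 h).1

lemma range_sphereChart :
    Set.range (sphereChart (n := n) ha) =
      Metric.sphere (EuclideanSpace.single 0 (2 * a)⁻¹) (2 * a)⁻¹ := by
  let y : EuclideanSpace ℝ (Fin (n + 1)) := EuclideanSpace.single 0 (2 * a)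
  have hy : dist y 0 = 2 * a := by simp [y, abs_of_pos ha]
  have hy0 : y ≠ 0 := dist_pos.1 (hy ▸ by positivity)
  have hinv : inversion 0 1 y = EuclideanSpace.single 0 (2 * a)⁻¹ := by
    have hcoord : (1 / (2 * a)) ^ 2 * (2 * a) = (2 * a)⁻¹ := by field_simp
    rw [inversion, hy, vsub_eq_sub, sub_zero, vadd_eq_add, add_zero, ← hcoord]
    exact congrArg (WithLp.toLp 2) (Pi.single_smul (f := fun _ ↦ ℝ) 0 _ _).symm
  have himage := image_inversion_perpBisector one_ne_zero hy0
  rw [← range_hyperplaneAt ha.ne', ← Set.range_comp, hinv, hy, one_pow, one_div] at himage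
  have h0 : (0 : EuclideanSpace ℝ (Fin (n + 1))) ∈
      Metric.sphere (EuclideanSpace.single 0 (2 * a)⁻¹) (2 * a)⁻¹ := by
    simp [ha.le]
  rw [← Set.insert_eq_of_mem h0, ← Set.insert_sdiff_singleton, ← himage, ← Set.image_univ,
    ← insert_infty_range_coe, Set.image_insert_eq, ← Set.range_comp]
  rfl

/-- The chart of `hawSphere n (j + 1)`; the height `(j + 1) / 2` inverts to the diameter
`2 / (j + 1)`. -/
def hawSphereChart (n j : ℕ) : C(OnePoint (Fin n → ℝ), EuclideanSpace ℝ (Fin (n + 1))) :=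
  sphereChart (a := (j + 1) / 2) (by positivity)

lemma range_hawSphereChart (n j : ℕ) : Set.range (hawSphereChart n j) = hawSphere n (j + 1) := by
  rw [hawSphereChart, range_sphereChart, hawSphere, mul_div_cancel₀ _ two_ne_zero, ← one_div,
    Nat.cast_succ]

lemma isEmbedding_wedgeSum_hawSphereChart (n : ℕ) :
    Topology.IsEmbedding (wedgeSum (pt := fun _ ↦ ∞) (hawSphereChart n)) := by
  refine isEmbedding_wedgeSum (ε := fun j ↦ ((j + 1 : ℝ) / 2)⁻¹) (fun j ↦ rfl)
    (fun j ↦ injective_sphereChart _) (fun i j hij y z h ↦ ?_) (fun j ↦ norm_sphereChart_le _) ?_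
  · refine ((sphereChart_eq_sphereChart_iff _ _).1 h).2.resolve_right fun hheight ↦ hij ?_
    simpa using hheight
  · exact (tendsto_natCast_atTop_atTop.atTop_add tendsto_const_nhds |>.atTop_div_const
      two_pos).inv_tendsto_atTop

lemma range_wedgeSum_hawSphereChart (n : ℕ) :
    Set.range (wedgeSum (pt := fun _ ↦ ∞) (hawSphereChart n)) = hawaiian n := by
  rw [range_wedgeSum fun _ ↦ rfl]
  simp only [range_hawSphereChart]
  refine Set.Subset.antisymm (Set.iUnion_subset fun j ↦ ?_) (Set.iUnion₂_subset fun j hj ↦ ?_)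
  · exact Set.subset_biUnion_of_mem (u := hawSphere n) j.succ_pos
  · obtain ⟨i, rfl⟩ := Nat.exists_eq_add_of_le' hj
    exact Set.subset_iUnion (fun i ↦ hawSphere n (i + 1)) i

lemma exists_homeomorph_shrinkingWedge_hawaiian (n : ℕ) :
    ∃ e : shrinkingWedge (fun _ : ℕ ↦ (∞ : OnePoint (Fin n → ℝ))) ≃ₜ hawaiian n,
      e (wedgePt _) = hawaiianPt n :=
  ⟨(isEmbedding_wedgeSum_hawSphereChart n).toHomeomorph.trans
    (Homeomorph.setCongr (range_wedgeSum_hawSphereChart n)),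
    Subtype.ext (wedgeSum_eq (k := 0) (fun _ ↦ rfl) fun _ _ ↦ rfl)⟩

lemma discreteTopology_homotopyGroup_onePoint (N : Type*) [Nonempty N] (n : ℕ) :
    DiscreteTopology (HomotopyGroup N (OnePoint (Fin n → ℝ)) ∞) := by
  classical
  have hemb : Topology.IsEmbedding (sphereChart (n := n) one_pos) :=
    ((sphereChart one_pos).continuous.isClosedEmbedding (injective_sphereChart _)).isEmbedding
  let e := hemb.toHomeomorph.trans (Homeomorph.setCongr (range_sphereChart one_pos))
  have := discreteTopology_homotopyGroup_sphere (N := N) (by norm_num) (e ∞)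
  exact (isEmbedding_homotopyGroupMap e rfl).discreteTopology

end HawaiianEarring

/-- For `n = m+2 ≥ 2`, the topological `n`-th homotopy group of the `n`-dimensional
Hawaiian earring is metrizable. -/
theorem piTop_hawaiian_metrizable (m : ℕ) :
    TopologicalSpace.MetrizableSpace
      (HomotopyGroup (Fin (m+2)) (hawaiian (m+2)) (hawaiianPt (m+2))) := by
  obtain ⟨e, he⟩ := exists_homeomorph_shrinkingWedge_hawaiian (m + 2)
  have := discreteTopology_homotopyGroup_onePoint (Fin (m + 2)) (m + 2)
  have := metrizableSpace_homotopyGroup_shrinkingWedge (N := Fin (m + 2))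
    fun _ : ℕ ↦ pushesOffWalls_onePoint
  exact (isEmbedding_homotopyGroupMap e.symm (e.symm_apply_eq.2 he.symm)).metrizableSpace
end
end

section
/- Let n ≥ 2 be an integer. The map β_n : π_n^top(ℋ_n, 0) → ∏_{i≥1} π_n^top(Y_i^{(n)}, 0), γ ↦ ((R_i)_*(γ))_{i≥1}, is a homeomorphism onto the inverse limit subspace {(γ_i)_{i≥1} : (r_k^i)_*(γ_i) = γ_k for all k ≤ i}, where each π_n^top(Y_i^{(n)}, 0) carries its quotient topology and the product carries the product topology. -/
open scoped Topology Topology.Homotopy unitInterval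

noncomputable section

/-- Composition of a generalized loop with a basepoint-preserving continuous map. -/
def GenLoop.compCM {X Y : Type*} [TopologicalSpace X] [TopologicalSpace Y] {x : X} {y : Y}
    {N : Type*} (φ : C(X, Y)) (hφ : φ x = y) (p : Ω^ N X x) : Ω^ N Y y :=
  ⟨φ.comp p.1, fun t ht => by
    simp only [ContinuousMap.comp_apply]
    rw [p.2 t ht, hφ]⟩

/-- The homomorphism `φ_*` induced on `N`-th homotopy groups by a basepoint-preserving
continuous map `φ`, sending the class of a loop `f` to the class of `φ ∘ f`. -/
def piInduced {X Y : Type*} [TopologicalSpace X] [TopologicalSpace Y] {x : X} {y : Y}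
    (N : Type*) (φ : C(X, Y)) (hφ : φ x = y) :
    HomotopyGroup N X x → HomotopyGroup N Y y :=
  Quotient.map (GenLoop.compCM φ hφ) fun _ _ h =>
    h.map fun F => F.compContinuousMap φ

/-! The earring is the wedge of countably many `n`-spheres, with the topology of a subspace of the
product of the spheres. For a cube of dimension at most `n`, where `2 ≤ n`, the coordinates identify
its homotopy group with the product of the homotopy groups of the spheres, as topological spaces.
The inverse runs through one loop in each sphere, one after another, and is continuous because the
homotopy groups of a sphere are discrete. The union of the first spheres carries exactly the first
coordinates, so the inverse limit is the same product.

Injectivity is an argument of general position. Suppose that the `k`-th coordinate of a loop is null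
homotopic. The null homotopy can be made trivial near the product of a line with the skeleton of
codimension two of a fine grid in the cube, and the other coordinates can be made trivial near the
one-dimensional skeleton of the dual grid. A map of the cube close to the identity takes the support
of the null homotopy into the latter skeleton. Sliding the other coordinates along this map lets the
`k`-th one be contracted while they are at the base point. Doing so for every `k` contracts the
loop, as infinitely many homotopies can be concatenated if they move smaller and smaller spheres. -/

section Homotopy

variable {X Y Z : Type*} [TopologicalSpace X] [TopologicalSpace Y] [TopologicalSpace Z]

lemma homotopicRel_mono {f g : C(Z, Y)} {S T : Set Z} (h : f.HomotopicRel g T) (hST : S ⊆ T) :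
    f.HomotopicRel g S :=
  h.map fun F => ⟨F.toHomotopy, fun t z hz => F.prop t z (hST hz)⟩

lemma homotopicRel_comp_preimage {f g : C(X, Y)} {S : Set X} (h : f.HomotopicRel g S)
    (u : C(Z, X)) : (f.comp u).HomotopicRel (g.comp u) (u ⁻¹' S) :=
  h.map fun F => ⟨F.toHomotopy.compContinuousMap u, fun t _ hz => F.eq_fst t hz⟩

lemma homotopicRel_curry (F : C(I × Z, Y)) {s : Set Z}
    (h : ∀ t, ∀ z ∈ s, F (t, z) = F (0, z)) : (F.curry 0).HomotopicRel (F.curry 1) s :=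
  ⟨⟨⟨F, fun _ => rfl, fun _ => rfl⟩, h⟩⟩

end Homotopy

section Sphere

open Metric AffineMap Module

section NormedSpace

variable {E Y Z : Type*} [NormedAddCommGroup E] [NormedSpace ℝ E] [TopologicalSpace Y]
  [TopologicalSpace Z]

/-- The radial projection of a nowhere vanishing map to the unit sphere. -/
def normalizeMap (w : C(Y, E)) (hw : ∀ y, w y ≠ 0) : C(Y, sphere (0 : E) 1) where
  toFun y := ⟨NormedSpace.normalize (w y),
    mem_sphere_zero_iff_norm.mpr (NormedSpace.norm_normalize (hw y))⟩
  continuous_toFun :=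
    (((map_continuous w).norm.inv₀ fun y => norm_ne_zero_iff.mpr (hw y)).smul
      (map_continuous w)).subtype_mk _

lemma normalizeMap_apply_of_eq {w : C(Y, E)} (hw : ∀ y, w y ≠ 0) {y : Y} {a : sphere (0 : E) 1}
    (h : w y = a) : normalizeMap w hw y = a :=
  Subtype.ext <| (congrArg NormedSpace.normalize h).trans
    (NormedSpace.normalize_eq_self_of_norm_eq_one (norm_eq_of_mem_sphere a))

lemma eq_norm_smul_of_normalizeMap_eq {w : C(Y, E)} {hw : ∀ y, w y ≠ 0} {y : Y}
    {a : sphere (0 : E) 1} (h : normalizeMap w hw y = a) : w y = ‖w y‖ • (a : E) := by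
  rw [← h]
  exact (NormedSpace.norm_smul_normalize _).symm

lemma lineMap_ne_zero_of_ne_neg {a b : sphere (0 : E) 1} (h : a ≠ -b) (t : ℝ) :
    lineMap (a : E) b t ≠ 0 := by
  intro h0
  have hsum : (1 - t) • (a : E) = -(t • (b : E)) := by
    rw [← add_eq_zero_iff_eq_neg, ← lineMap_apply_module, h0]
  have ht : t = 1 / 2 := by
    have habs : |1 - t| = |t| := by
      simpa [norm_smul, norm_eq_of_mem_sphere] using congrArg norm hsum
    rcases abs_eq_abs.mp habs with h | h <;> linarith
  subst ht
  norm_num at hsum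
  refine h (Subtype.ext ?_)
  simpa [← smul_neg] using hsum

lemma homotopicRel_of_forall_ne_neg {f g : C(Z, sphere (0 : E) 1)} (h : ∀ z, f z ≠ -g z) :
    f.HomotopicRel g {z | f z = g z} := by
  let w : C(I × Z, E) := ⟨fun p => lineMap (f p.2 : E) (g p.2) (p.1 : ℝ), by fun_prop⟩
  have hw : ∀ p, w p ≠ 0 := fun p => lineMap_ne_zero_of_ne_neg (h p.2) _
  refine ⟨⟨⟨normalizeMap w hw, fun z => ?_, fun z => ?_⟩, fun t z hz => ?_⟩⟩
  · exact normalizeMap_apply_of_eq hw (by simp [w])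
  · exact normalizeMap_apply_of_eq hw (by simp [w])
  · exact normalizeMap_apply_of_eq hw (by simp [w, show f z = g z from hz])

lemma ne_neg_of_dist_lt_one {a b : sphere (0 : E) 1} (h : dist a b < 1) : a ≠ -b := by
  rintro rfl
  have : ‖(-b - b : E)‖ = 2 := by
    rw [← neg_add', norm_neg, ← two_smul ℝ, norm_smul, norm_eq_of_mem_sphere]; norm_num
  rw [Subtype.dist_eq, dist_eq_norm, coe_neg_sphere, this] at h
  norm_num at h

instance discreteTopology_homotopyGroup_sphere_s13 (N : Type*) (b : sphere (0 : E) 1) :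
    DiscreteTopology (HomotopyGroup N (sphere (0 : E) 1) b) := by
  refine discreteTopology_iff_isOpen_singleton.mpr fun c => isOpen_coinduced.mpr ?_
  refine Metric.isOpen_iff.mpr fun f hf => ⟨1, one_pos, fun g hg => ?_⟩
  refine (Quotient.sound ?_ : (⟦g⟧ : HomotopyGroup N _ b) = ⟦f⟧).trans hf
  have hne : ∀ z, g.1 z ≠ -f.1 z := fun z =>
    ne_neg_of_dist_lt_one ((ContinuousMap.dist_lt_iff one_pos).mp hg z)
  obtain ⟨F⟩ := homotopicRel_of_forall_ne_neg hne
  exact ⟨F.toHomotopy, fun t z hz => F.prop t z ((g.2 z hz).trans (f.2 z hz).symm)⟩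

/-- Pushing a point `y ≠ -b` towards `b` along a great circle, with full speed as soon as
`dist y (-b) ≥ r`, collapses everything but a small ball around `-b` to `b`. -/
lemma exists_homotopicRel_id_eq_of_le_dist (b : sphere (0 : E) 1) {r : ℝ} (hr : 0 < r) :
    ∃ D : C(sphere (0 : E) 1, sphere (0 : E) 1),
      (ContinuousMap.id _).HomotopicRel D {b} ∧ ∀ y, r ≤ dist y (-b) → D y = b := by
  let w : C(I × sphere (0 : E) 1, E) :=
    ⟨fun p => lineMap (p.2 : E) (b : E) ((p.1 : ℝ) * min 1 (dist p.2 (-b) / r)), by fun_prop⟩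
  have hw : ∀ p, w p ≠ 0 := by
    rintro ⟨s, y⟩
    by_cases hy : y = -b
    · simpa [w, hy] using ne_zero_of_mem_unit_sphere b
    · exact lineMap_ne_zero_of_ne_neg hy _
  let F := normalizeMap w hw
  have hF : ∀ p, w p = p.2 → F p = p.2 := fun p h => normalizeMap_apply_of_eq hw h
  refine ⟨⟨fun y => F (1, y), by fun_prop⟩, ⟨⟨⟨F, fun y => hF _ ?_, fun y => rfl⟩, ?_⟩⟩,
    fun y hy => normalizeMap_apply_of_eq hw ?_⟩
  · simp [w]
  · rintro t y rfl
    exact hF _ (by simp [w])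
  · simp [w, (one_le_div hr).mpr hy]

end NormedSpace

section InnerProductSpace

variable {E V Z : Type*} [NormedAddCommGroup E] [InnerProductSpace ℝ E] [NormedAddCommGroup V]
  [NormedSpace ℝ V] [TopologicalSpace Z]

lemma ne_neg_smul_of_dist_lt_one {a w b : E} (ha : ‖a‖ = 1) (hab : 0 ≤ inner ℝ a b)
    (hw : dist w a < 1) {c : ℝ} (hc : 0 ≤ c) : w ≠ -(c • b) := by
  rintro rfl
  have hsq : ‖-(c • b) - a‖ ^ 2 = ‖c • b‖ ^ 2 + 2 * (c * inner ℝ a b) + 1 := by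
    rw [← neg_add', norm_neg, norm_add_sq_real, real_inner_smul_left, real_inner_comm, ha]
    ring
  rw [dist_eq_norm] at hw
  nlinarith [mul_nonneg hc hab, norm_nonneg (-(c • b) - a), sq_nonneg ‖c • b‖]

lemma exists_pos_forall_ne_of_inner_neg {Y : Type*} [PseudoMetricSpace Y] [CompactSpace Y]
    (b : sphere (0 : E) 1) (g : C(Y, sphere (0 : E) 1)) :
    ∃ δ > 0, ∀ x y, inner ℝ (g x : E) b < 0 → dist y x ≤ δ → g y ≠ b := by
  have hcont : Continuous fun z => inner ℝ (g z : E) b := by fun_prop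
  obtain ⟨δ, hδ, h⟩ := Metric.uniformContinuous_iff.mp
    (CompactSpace.uniformContinuous_of_continuous hcont) 1 one_pos
  refine ⟨δ / 2, half_pos hδ, fun x y hx hyx hy => ?_⟩
  have := (le_abs_self _).trans_lt (h (hyx.trans_lt (half_lt_self hδ)))
  simp only [hy, real_inner_self_eq_norm_sq, norm_eq_of_mem_sphere] at this
  linarith

variable [FiniteDimensional ℝ E] [FiniteDimensional ℝ V]

/-- A smooth approximation of `g` projected to the orthogonal complement of `b` maps `T` to a set
with dense complement, so a small translation moves the image of `T` off the line `ℝ ∙ b`. -/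
lemma exists_dist_lt_forall_notMem_span (g : C(V, E)) {T : Set V}
    (hT : dimH T + 1 < finrank ℝ E) (b : E) {ε : ℝ} (hε : 0 < ε) :
    ∃ P : C(V, E), (∀ x, dist (P x) (g x) < ε) ∧ ∀ x ∈ T, P x ∉ Submodule.span ℝ {b} := by
  obtain ⟨Q, hQ, hQg, -⟩ := (map_continuous g).exists_contDiff_approx 1 continuous_const
    fun _ => half_pos hε
  let L := (Submodule.span ℝ {b})ᗮ
  have hL : dimH T < finrank ℝ L := by
    have hspan : finrank ℝ (Submodule.span ℝ {b}) ≤ 1 := by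
      simpa using finrank_span_le_card (R := ℝ) {b}
    have hE : finrank ℝ E ≤ finrank ℝ L + 1 := by
      have : _ + finrank ℝ L = _ := (Submodule.span ℝ {b}).finrank_add_finrank_orthogonal
      omega
    exact lt_of_add_lt_add_right (hT.trans_le (mod_cast hE))
  have hdense : Dense ((L.orthogonalProjectionOnto ∘ Q) '' T)ᶜ :=
    (L.orthogonalProjectionOnto.contDiff.comp hQ).contDiffOn.dense_compl_image_of_dimH_lt_finrank
      convex_univ (Set.subset_univ T) hL
  obtain ⟨v, hv, hvε⟩ := hdense.exists_dist_lt 0 (half_pos hε)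
  refine ⟨⟨fun x => Q x - v, by fun_prop⟩, fun x => ?_, fun x hx hspan => hv ⟨x, hx, ?_⟩⟩
  · calc dist (Q x - v : E) (g x) ≤ dist (Q x - v : E) (Q x) + dist (Q x) (g x) :=
          dist_triangle _ _ _
      _ < ε / 2 + ε / 2 := by
          refine add_lt_add ?_ (hQg x)
          simpa [dist_eq_norm] using hvε
      _ = ε := add_halves ε
  · have h0 : L.orthogonalProjectionOnto (Q x - v : E) = 0 :=
      Submodule.orthogonalProjectionOnto_orthogonal_apply_eq_zero hspan
    rwa [map_sub, Submodule.orthogonalProjectionOnto_mem_subspace_eq_self, sub_eq_zero] at h0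

lemma exists_homotopy_forall_ne_neg {ι : Z → V} (hι : Topology.IsClosedEmbedding ι) {T : Set V}
    (hT : dimH T + 1 < finrank ℝ E) (b : sphere (0 : E) 1) (g : C(Z, sphere (0 : E) 1)) :
    ∃ F : C(I × Z, sphere (0 : E) 1), (∀ z, F (0, z) = g z) ∧
      (∀ t z, 0 ≤ inner ℝ (g z : E) b → F (t, z) ≠ -b) ∧ ∀ z, ι z ∈ T → F (1, z) ≠ -b := by
  have : TietzeExtension E := RCLike.instTietzeExtensionTVS (𝕜 := ℝ)
  obtain ⟨gV, hgV⟩ := ContinuousMap.exists_extension hι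
    (⟨fun z => (g z : E), by fun_prop⟩ : C(Z, E))
  replace hgV : ∀ z, gV (ι z) = g z := fun z => congrArg (fun f : C(Z, E) => f z) hgV
  obtain ⟨P, hPg, hPT⟩ := exists_dist_lt_forall_notMem_span gV hT (b : E) one_pos
  let w : C(I × Z, E) := ⟨fun p => lineMap (g p.2 : E) (P (ι p.2)) (p.1 : ℝ), by
    have := hι.continuous
    fun_prop⟩
  have hwg : ∀ p, dist (w p) (g p.2) < 1 := fun ⟨t, z⟩ =>
    calc dist (w (t, z)) (g z) = ‖(t : ℝ)‖ * dist (g z : E) (P (ι z)) := dist_lineMap_left _ _ _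
      _ ≤ dist (g z : E) (P (ι z)) :=
          mul_le_of_le_one_left dist_nonneg (by simpa [abs_of_nonneg t.2.1] using t.2.2)
      _ < 1 := by simpa [← hgV, dist_comm] using hPg (ι z)
  have hw : ∀ p, w p ≠ 0 := fun p h0 => by simpa [h0] using hwg p
  have hneg : ∀ p, normalizeMap w hw p = -b → w p = -(‖w p‖ • (b : E)) := fun p hp => by
    simpa using eq_norm_smul_of_normalizeMap_eq hp
  refine ⟨normalizeMap w hw, fun z => normalizeMap_apply_of_eq hw (by simp [w]),
    fun t z hz hp => ?_, fun z hz hp => hPT _ hz ?_⟩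
  · exact ne_neg_smul_of_dist_lt_one (norm_eq_of_mem_sphere (g z)) hz (hwg (t, z)) (norm_nonneg _)
      (hneg _ hp)
  · have : P (ι z) = w (1, z) := by simp [w]
    rw [this, hneg _ hp]
    exact neg_mem (Submodule.smul_mem _ _ (Submodule.mem_span_singleton_self _))

/-- The values of `g` are first pushed off `-b` on the preimage of `T`, then a small ball around
`-b` is blown up to the sphere. -/
lemma exists_homotopicRel_closure_subset [CompactSpace Z] {ι : Z → V}
    (hι : Topology.IsClosedEmbedding ι) {T : Set V} (hTclosed : IsClosed T)
    (hT : dimH T + 1 < finrank ℝ E) (b : sphere (0 : E) 1) (g : C(Z, sphere (0 : E) 1)) :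
    ∃ g' : C(Z, sphere (0 : E) 1), g.HomotopicRel g' {z | g z = b} ∧
      closure {z | g' z ≠ b} ⊆ {z | inner ℝ (g z : E) b < 0 ∧ ι z ∉ T} := by
  obtain ⟨F, hF0, hFb, hFT⟩ := exists_homotopy_forall_ne_neg hι hT b g
  let C : Set (I × Z) := {p | 0 ≤ inner ℝ (g p.2 : E) b} ∪ {p | p.1 = 1 ∧ ι p.2 ∈ T}
  have hC : IsClosed C :=
    (isClosed_le continuous_const (by fun_prop)).union ((isClosed_eq continuous_fst
      continuous_const).inter (hTclosed.preimage (hι.continuous.comp continuous_snd)))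
  have hbC : -b ∈ (F '' C)ᶜ := by
    rintro ⟨⟨t, z⟩, hz | ⟨rfl : t = 1, hz⟩, hFz⟩
    exacts [hFb t z hz hFz, hFT z hz hFz]
  obtain ⟨r, hr, hball⟩ :=
    Metric.isOpen_iff.mp (hC.isCompact.image (map_continuous F)).isClosed.isOpen_compl _ hbC
  obtain ⟨D, hDid, hD⟩ := exists_homotopicRel_id_eq_of_le_dist b (half_pos hr)
  have hDF : ∀ p ∈ C, D (F p) = b := fun p hp => hD _ <| le_of_not_gt fun hlt =>
    hball (mem_ball.mpr (hlt.trans (half_lt_self hr))) (Set.mem_image_of_mem F hp)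
  have hDg : g.HomotopicRel (D.comp g) {z | g z = b} := homotopicRel_comp_preimage hDid g
  refine ⟨⟨fun z => D (F (1, z)), by fun_prop⟩, hDg.trans ⟨⟨⟨D.comp F, fun z => ?_, fun z => rfl⟩,
    fun t z hz => ?_⟩⟩, fun z hz => ?_⟩
  · exact congrArg D (hF0 z)
  · have hzb : g z = b := hz
    have hmem : (t, z) ∈ C := Or.inl (by simp [hzb])
    exact (hDF _ hmem).trans ((hDid.fst_eq_snd rfl).trans (congrArg D hzb.symm))
  · have hcl : closure {z | D (F (1, z)) ≠ b} ⊆ {z | dist (F (1, z)) (-b) ≤ r / 2} :=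
      closure_minimal (fun z hz => le_of_not_ge fun h => hz (hD _ h))
        (isClosed_le (by fun_prop) continuous_const)
    have hzC : ((1 : I), z) ∉ C := fun h =>
      hball (mem_ball.mpr ((hcl hz).trans_lt (half_lt_self hr))) (Set.mem_image_of_mem F h)
    exact ⟨lt_of_not_ge fun h => hzC (Or.inl h), fun h => hzC (Or.inr ⟨rfl, h⟩)⟩

end InnerProductSpace

end Sphere

section Grid

lemma exists_continuousMap_eq_floor_add_half {ε : ℝ} (hε : 0 < ε) :
    ∃ s : C(ℝ, ℝ), (∀ m : ℤ, s m = m) ∧ (∀ x, |s x - x| ≤ 1) ∧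
      ∀ x, ε ≤ Int.fract x → ε ≤ 1 - Int.fract x → s x = ⌊x⌋ + 1 / 2 := by
  wlog hε1 : ε ≤ 1 generalizing ε
  · obtain ⟨s, hint, hdist, hhalf⟩ := this one_pos le_rfl
    exact ⟨s, hint, hdist, fun x h h' =>
      hhalf x ((le_of_not_ge hε1).trans h) ((le_of_not_ge hε1).trans h')⟩
  let c : ℝ → ℝ := fun y => (1 + min 1 (y / ε) - min 1 ((1 - y) / ε)) / 2
  have hε_inv : 1 ≤ 1 / ε := (one_le_div hε).mpr hε1
  have hc0 : c 0 = 0 := by simp [c, min_eq_left (by simpa using hε_inv : 1 ≤ ε⁻¹)]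
  have hc1 : c 1 = 1 := by simp [c, min_eq_left (by simpa using hε_inv : 1 ≤ ε⁻¹)]
  have hperiodic : Continuous ((fun y => c y - y) ∘ Int.fract) :=
    ContinuousOn.comp_fract'' (by fun_prop) (by simp [hc0, hc1])
  refine ⟨⟨fun x => x + (c (Int.fract x) - Int.fract x), continuous_id.add hperiodic⟩,
    fun m => by simp [hc0], fun x => ?_, fun x h h' => ?_⟩
  · have hy0 := Int.fract_nonneg x
    have hy1 := Int.fract_lt_one x
    have hl : 0 ≤ min 1 (Int.fract x / ε) := by positivity
    have hr : 0 ≤ min 1 ((1 - Int.fract x) / ε) :=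
      le_min zero_le_one (div_nonneg (by linarith) hε.le)
    have hl1 : min 1 (Int.fract x / ε) ≤ 1 := min_le_left _ _
    have hr1 : min 1 ((1 - Int.fract x) / ε) ≤ 1 := min_le_left _ _
    simp only [ContinuousMap.coe_mk, add_sub_cancel_left, c, abs_le]
    constructor <;> linarith
  · have hl : min 1 (Int.fract x / ε) = 1 := min_eq_left ((one_le_div hε).mpr h)
    have hr : min 1 ((1 - Int.fract x) / ε) = 1 := min_eq_left ((one_le_div hε).mpr h')
    have hfloor := Int.floor_add_fract x
    simp only [ContinuousMap.coe_mk, c, hl, hr]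
    linarith

lemma exists_unitInterval_map_eq_floor_add_half {K : ℕ} (hK : 0 < K) {ε : ℝ} (hε : 0 < ε) :
    ∃ τ : C(I, I), τ 0 = 0 ∧ τ 1 = 1 ∧ (∀ u, dist (τ u) u ≤ (K : ℝ)⁻¹) ∧
      ∀ u : I, ε ≤ Int.fract (K * u : ℝ) → ε ≤ 1 - Int.fract (K * u : ℝ) →
        (τ u : ℝ) = (⌊(K * u : ℝ)⌋ + 1 / 2) * (K : ℝ)⁻¹ := by
  have hK' : (0 : ℝ) < K := mod_cast hK
  obtain ⟨s, hint, hdist, hhalf⟩ := exists_continuousMap_eq_floor_add_half hε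
  have hs0 : s 0 = 0 := by exact_mod_cast hint 0
  have hsK : s K = K := by exact_mod_cast hint K
  refine ⟨⟨fun u => Set.projIcc 0 1 zero_le_one (s (K * u) * (K : ℝ)⁻¹), ?_⟩, ?_, ?_, fun u => ?_,
    fun u hleft hright => ?_⟩
  · exact continuous_projIcc.comp (by fun_prop)
  · simp [hs0]
  · simp [hsK, hK'.ne']
  · calc dist (Set.projIcc (0 : ℝ) 1 zero_le_one (s (K * u) * (K : ℝ)⁻¹)) u
        ≤ dist (s (K * u) * (K : ℝ)⁻¹) u := by
          simpa using (LipschitzWith.projIcc (zero_le_one' ℝ)).dist_le_mul (s (K * u) * (K : ℝ)⁻¹) u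
      _ = |(s (K * u) - K * u) * (K : ℝ)⁻¹| := by
          rw [Real.dist_eq, sub_mul, mul_right_comm, mul_inv_cancel₀ hK'.ne', one_mul]
      _ = |s (K * u) - K * u| * (K : ℝ)⁻¹ := by rw [abs_mul, abs_of_pos (inv_pos.mpr hK')]
      _ ≤ 1 * (K : ℝ)⁻¹ := by gcongr; exact hdist _
      _ = (K : ℝ)⁻¹ := one_mul _
  · have hlt : ⌊(K * u : ℝ)⌋ < K := by
      have : (⌊(K * u : ℝ)⌋ : ℝ) < K := by
        nlinarith [Int.floor_add_fract (K * u : ℝ), u.2.2]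
      exact_mod_cast this
    have hmem : (⌊(K * u : ℝ)⌋ + 1 / 2) * (K : ℝ)⁻¹ ∈ Set.Icc (0 : ℝ) 1 := by
      have hpos : (0 : ℝ) ≤ ⌊(K * u : ℝ)⌋ :=
        mod_cast Int.floor_nonneg.mpr (mul_nonneg hK'.le u.2.1)
      have hlt' : (⌊(K * u : ℝ)⌋ : ℝ) + 1 ≤ K := mod_cast hlt
      refine ⟨by positivity, ?_⟩
      rw [← div_eq_mul_inv, div_le_one hK']
      linarith
    simp only [ContinuousMap.coe_mk, hhalf _ hleft hright, Set.projIcc_of_mem _ hmem]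

lemma isClosed_range_intCast_add_mul (a : ℝ) {h : ℝ} (hh : h ≠ 0) :
    IsClosed (Set.range fun m : ℤ => (m + a) * h) :=
  ((Homeomorph.mulRight₀ h hh).isClosedEmbedding.comp
    ((Homeomorph.addRight a).isClosedEmbedding.comp
      Int.isClosedEmbedding_coe_real)).isClosed_range

/-- `G` is a fine lattice and `H` the set of the midpoints of its cells. -/
lemma exists_grid {δ : ℝ} (hδ : 0 < δ) :
    ∃ G H : Set ℝ, IsClosed G ∧ G.Countable ∧ IsClosed H ∧ H.Countable ∧
      ∀ ε > 0, ∃ τ : C(I, I), τ 0 = 0 ∧ τ 1 = 1 ∧ (∀ u, dist (τ u) u ≤ δ) ∧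
        ∀ u : I, (∀ x ∈ G, ε ≤ dist (u : ℝ) x) → (τ u : ℝ) ∈ H := by
  obtain ⟨K, hK, hKδ⟩ : ∃ K : ℕ, 0 < K ∧ (K : ℝ)⁻¹ < δ := by
    obtain ⟨k, hk⟩ := exists_nat_one_div_lt hδ
    exact ⟨k + 1, k.succ_pos, by simpa using hk⟩
  have hK' : (0 : ℝ) < K := mod_cast hK
  refine ⟨Set.range fun m : ℤ => (m + 0) * (K : ℝ)⁻¹,
    Set.range fun m : ℤ => (m + 1 / 2) * (K : ℝ)⁻¹,
    isClosed_range_intCast_add_mul _ (inv_ne_zero hK'.ne'), Set.countable_range _,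
    isClosed_range_intCast_add_mul _ (inv_ne_zero hK'.ne'), Set.countable_range _, fun ε hε => ?_⟩
  obtain ⟨τ, h0, h1, hdist, hhalf⟩ :=
    exists_unitInterval_map_eq_floor_add_half hK (mul_pos hK' hε)
  refine ⟨τ, h0, h1, fun u => (hdist u).trans hKδ.le, fun u hu => ?_⟩
  have hlattice : ∀ m : ℤ, K * ε ≤ |(K * u - m : ℝ)| := fun m =>
    calc K * ε ≤ K * dist (u : ℝ) ((m + 0) * (K : ℝ)⁻¹) := by gcongr; exact hu _ ⟨m, rfl⟩
      _ = |(K * (u - (m + 0) * (K : ℝ)⁻¹) : ℝ)| := by rw [abs_mul, abs_of_pos hK', Real.dist_eq]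
      _ = |(K * u - m : ℝ)| := by
        rw [mul_sub, add_zero, mul_left_comm, mul_inv_cancel₀ hK'.ne', mul_one]
  refine ⟨_, (hhalf u ?_ ?_).symm⟩
  · simpa [Int.abs_fract] using hlattice ⌊(K * u : ℝ)⌋
  · have hceil : (K * u - (⌊(K * u : ℝ)⌋ + 1 : ℤ) : ℝ) = -(1 - Int.fract (K * u : ℝ)) := by
      rw [← Int.self_sub_floor]
      push_cast
      ring
    have := hlattice (⌊(K * u : ℝ)⌋ + 1)
    rwa [hceil, abs_neg, abs_of_pos (by linarith [Int.fract_lt_one (K * u : ℝ)])] at this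

section Skeleta

variable {N : Type*}

/-- The points of `ℝ × ℝ^N` two of whose coordinates in `ℝ^N` lie in `G`, that is, the product of
a line with the codimension two skeleton of the grid given by `G`. -/
def codimTwoSkeleton (N : Type*) (G : Set ℝ) : Set (ℝ × (N → ℝ)) :=
  {p | ∃ i j, i ≠ j ∧ p.2 i ∈ G ∧ p.2 j ∈ G}

/-- The one-dimensional skeleton of the grid in `ℝ^N` given by `H`: the points with all coordinates
but at most one in `H`. -/
def oneSkeleton (N : Type*) (H : Set ℝ) : Set (N → ℝ) :=
  {x | ∃ i, ∀ j ≠ i, x j ∈ H}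

lemma isClosed_codimTwoSkeleton [Finite N] {G : Set ℝ} (hG : IsClosed G) :
    IsClosed (codimTwoSkeleton N G) := by
  simp only [codimTwoSkeleton, Set.ofPred_exists]
  refine isClosed_iUnion_of_finite fun i => isClosed_iUnion_of_finite fun j => ?_
  exact isClosed_const.inter ((hG.preimage (by fun_prop)).inter (hG.preimage (by fun_prop)))

lemma isClosed_oneSkeleton [Finite N] {H : Set ℝ} (hH : IsClosed H) :
    IsClosed (oneSkeleton N H) := by
  simp only [oneSkeleton, Set.ofPred_exists, Set.ofPred_forall]
  exact isClosed_iUnion_of_finite fun i => isClosed_iInter fun j => isClosed_iInter fun _ =>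
    hH.preimage (continuous_apply j)

lemma dimH_codimTwoSkeleton_le [Fintype N] {G : Set ℝ} (hG : G.Countable) :
    dimH (codimTwoSkeleton N G) ≤ (Fintype.card N - 1 : ℕ) := by
  classical
  have := hG.to_subtype
  let φ (q : {p : N × N // p.2 ≠ p.1} × (G × G)) (y : {i // i ≠ q.1.1.1} → ℝ) : ℝ × (N → ℝ) :=
    (y ⟨q.1.1.2, q.1.2⟩, fun i =>
      if hi : i = q.1.1.1 then q.2.1 else if i = q.1.1.2 then q.2.2 else y ⟨i, hi⟩)
  have hφ : ∀ q, dimH (Set.range (φ q)) ≤ (Fintype.card N - 1 : ℕ) := fun q => by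
    have hsmooth : ContDiff ℝ 1 (φ q) := by
      refine ContDiff.prodMk (by fun_prop) (contDiff_pi.mpr fun i => ?_)
      by_cases hi : i = q.1.1.1 <;> by_cases hi' : i = q.1.1.2 <;>
        simp only [hi, hi', dite_true, dite_false, if_true, if_false] <;> fun_prop
    simpa using hsmooth.dimH_range_le
  have hsub : codimTwoSkeleton N G ⊆ ⋃ q, Set.range (φ q) := by
    rintro ⟨t, x⟩ ⟨i, j, hij, hi, hj⟩
    refine Set.mem_iUnion.mpr ⟨⟨⟨(i, j), hij.symm⟩, ⟨x i, hi⟩, ⟨x j, hj⟩⟩,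
      fun l => if (l : N) = j then t else x l, Prod.ext (by simp [φ]) (funext fun l => ?_)⟩
    by_cases hli : l = i
    · simp [φ, hli]
    · by_cases hlj : l = j <;> simp [φ, hli, hlj, hij.symm]
  exact (dimH_mono hsub).trans ((dimH_iUnion _).trans_le (iSup_le hφ))

lemma dimH_oneSkeleton_le [Fintype N] {H : Set ℝ} (hH : H.Countable) :
    dimH (oneSkeleton N H) ≤ 1 := by
  classical
  have := hH.to_subtype
  let φ (q : Σ i : N, {j // j ≠ i} → H) (t : ℝ) : N → ℝ :=
    fun j => if hj : j = q.1 then t else q.2 ⟨j, hj⟩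
  have hφ : ∀ q, dimH (Set.range (φ q)) ≤ 1 := fun q => by
    have hsmooth : ContDiff ℝ 1 (φ q) := contDiff_pi.mpr fun j => by
      by_cases hj : j = q.1 <;> simp only [φ, hj, dite_true, dite_false] <;> fun_prop
    simpa using hsmooth.dimH_range_le
  have hsub : oneSkeleton N H ⊆ ⋃ q, Set.range (φ q) := by
    rintro x ⟨i, hx⟩
    refine Set.mem_iUnion.mpr ⟨⟨i, fun j => ⟨x j, hx j j.2⟩⟩, x i, funext fun j => ?_⟩
    by_cases hj : j = i <;> simp [φ, hj]
  exact (dimH_mono hsub).trans ((dimH_iUnion _).trans_le (iSup_le hφ))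

lemma exists_pos_forall_le_dist [Finite N] [Nonempty N] {G : Set ℝ} (hG : IsClosed G)
    {S : Set (ℝ × (N → ℝ))} (hS : IsCompact S) (hSG : Disjoint S (codimTwoSkeleton N G)) :
    ∃ ε > 0, ∀ p ∈ S, ∃ i, ∀ j ≠ i, ∀ g ∈ G, ε ≤ dist (p.2 j) g := by
  classical
  have := Fintype.ofFinite N
  obtain ⟨ε, hε, hthick⟩ := hS.exists_thickening_subset_open
    (isClosed_codimTwoSkeleton hG).isOpen_compl hSG.subset_compl_right
  refine ⟨ε, hε, fun p hp => ?_⟩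
  by_contra! hfar
  obtain ⟨i, -, g, hg, hig⟩ := hfar (Classical.arbitrary N)
  obtain ⟨j, hji, g', hg', hjg'⟩ := hfar i
  refine hthick (Metric.mem_thickening_iff.mpr ⟨p, hp, ?_⟩ :
    (p.1, Function.update (Function.update p.2 i g) j g') ∈ _) ⟨j, i, hji, ?_, ?_⟩
  · refine Prod.dist_eq.trans_lt (max_lt (by simpa using hε) ((dist_pi_lt_iff hε).mpr fun l => ?_))
    by_cases hlj : l = j
    · subst hlj; simpa [dist_comm] using hjg'
    · by_cases hli : l = i
      · subst hli; simpa [hlj, dist_comm] using hig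
      · simpa [hlj, hli] using hε
  · simpa using hg'
  · simpa [hji.symm] using hg

lemma exists_skeleta_forall_exists_map (N : Type*) [Fintype N] [Nonempty N] {δ : ℝ} (hδ : 0 < δ) :
    ∃ (T₁ : Set (ℝ × (N → ℝ))) (T₂ : Set (N → ℝ)), IsClosed T₁ ∧ IsClosed T₂ ∧
      dimH T₁ ≤ (Fintype.card N - 1 : ℕ) ∧ dimH T₂ ≤ 1 ∧
      ∀ K : Set (I × (N → I)), IsClosed K → (∀ p ∈ K, ((p.1 : ℝ), fun i => (p.2 i : ℝ)) ∉ T₁) →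
        ∃ τ : C(I, I), τ 0 = 0 ∧ τ 1 = 1 ∧ (∀ u, dist (τ u) u ≤ δ) ∧
          ∀ p ∈ K, (fun i => (τ (p.2 i) : ℝ)) ∈ T₂ := by
  obtain ⟨G, H, hGcl, hG, hHcl, hH, hgrid⟩ := exists_grid hδ
  refine ⟨codimTwoSkeleton N G, oneSkeleton N H, isClosed_codimTwoSkeleton hGcl,
    isClosed_oneSkeleton hHcl, dimH_codimTwoSkeleton_le hG, dimH_oneSkeleton_le hH,
    fun K hK hKG => ?_⟩
  obtain ⟨ε, hε, hfar⟩ := exists_pos_forall_le_dist hGcl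
    (hK.isCompact.image (f := fun p => ((p.1 : ℝ), fun i => (p.2 i : ℝ))) (by fun_prop))
    (Set.disjoint_left.mpr (by rintro - ⟨p, hp, rfl⟩; exact hKG p hp))
  obtain ⟨τ, hτ0, hτ1, hτδ, hτH⟩ := hgrid ε hε
  refine ⟨τ, hτ0, hτ1, hτδ, fun p hp => ?_⟩
  obtain ⟨i, hi⟩ := hfar _ (Set.mem_image_of_mem _ hp)
  exact ⟨i, fun j hj => hτH _ (hi j hj)⟩

/-- The straight-line homotopy from the identity of the cube to the product of the maps `τ i`. -/
def cubeLine (τ : N → C(I, I)) : (ContinuousMap.id (N → I)).Homotopy (.piMap τ) where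
  toFun p i := ⟨AffineMap.lineMap (p.2 i : ℝ) (τ i (p.2 i) : ℝ) (p.1 : ℝ),
    (convex_Icc 0 1).lineMap_mem (p.2 i).2 (τ i (p.2 i)).2 p.1.2⟩
  continuous_toFun := continuous_pi fun i => Continuous.subtype_mk (by fun_prop) _
  map_zero_left x := by ext; simp
  map_one_left x := by ext; simp

lemma coe_cubeLine_apply (τ : N → C(I, I)) (t : I) (x : N → I) (i : N) :
    (cubeLine τ (t, x) i : ℝ) = AffineMap.lineMap (x i : ℝ) (τ i (x i) : ℝ) (t : ℝ) := rfl

section CubeLine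

variable {τ : N → C(I, I)}

lemma dist_cubeLine_le [Fintype N] {δ : ℝ} (hδ : 0 ≤ δ) (hτ : ∀ i u, dist (τ i u) u ≤ δ) (t : I)
    (x : N → I) : dist (cubeLine τ (t, x)) x ≤ δ := by
  refine (dist_pi_le_iff hδ).mpr fun i => ?_
  calc dist (cubeLine τ (t, x) i) (x i) = ‖(t : ℝ)‖ * dist (x i : ℝ) (τ i (x i)) :=
        dist_lineMap_left (x i : ℝ) (τ i (x i) : ℝ) (t : ℝ)
    _ ≤ dist (x i : ℝ) (τ i (x i)) :=
        mul_le_of_le_one_left dist_nonneg (by simpa [abs_of_nonneg t.2.1] using t.2.2)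
    _ ≤ δ := by simpa [Subtype.dist_eq, dist_comm] using hτ i (x i)

lemma cubeLine_mem_boundary (h0 : ∀ i, τ i 0 = 0) (h1 : ∀ i, τ i 1 = 1) (t : I) {x : N → I}
    (hx : x ∈ Cube.boundary N) : cubeLine τ (t, x) ∈ Cube.boundary N := by
  obtain ⟨i, hi | hi⟩ := hx
  · exact ⟨i, Or.inl (Subtype.ext (by simp [coe_cubeLine_apply, hi, h0]))⟩
  · exact ⟨i, Or.inr (Subtype.ext (by simp [coe_cubeLine_apply, hi, h1]))⟩

end CubeLine

end Skeleta

end Grid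

/-- The wedge of copies of the pointed space `(S, b)`, with the topology it inherits from the
product `ι → S`. For infinite `ι` this is the wedge in which the copies shrink to the base point,
as in the Hawaiian earring, and not the coproduct of pointed spaces. -/
abbrev ShrinkingWedge (ι : Type*) {S : Type*} (b : S) : Type _ :=
  {w : ι → S // ∀ ⦃i j⦄, i ≠ j → w i = b ∨ w j = b}

namespace ShrinkingWedge

variable {ι S Y Z : Type*} {b : S}

/-- The base point of the wedge. -/
def pt : ShrinkingWedge ι b := ⟨fun _ => b, fun _ _ _ => Or.inl rfl⟩

lemma exists_forall_ne_eq [Nonempty ι] (w : ShrinkingWedge ι b) : ∃ k, ∀ j ≠ k, w.1 j = b := by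
  by_cases h : ∃ k, w.1 k ≠ b
  · obtain ⟨k, hk⟩ := h
    exact ⟨k, fun j hj => (w.2 hj).resolve_right hk⟩
  · push Not at h
    exact ⟨Classical.arbitrary ι, fun j _ => h j⟩

variable [TopologicalSpace S] [TopologicalSpace Y] [TopologicalSpace Z]

/-- The `i`-th coordinate, which collapses all copies but the `i`-th. -/
def coord (i : ι) : C(ShrinkingWedge ι b, S) where
  toFun w := w.1 i
  continuous_toFun := (continuous_apply i).comp continuous_subtype_val

@[ext] lemma ext {v w : ShrinkingWedge ι b} (h : ∀ i, coord i v = coord i w) : v = w :=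
  Subtype.ext (funext h)

@[simp] lemma coord_pt (i : ι) : coord i (pt : ShrinkingWedge ι b) = b := rfl

/-- The map to the wedge with prescribed coordinates. -/
def lift (g : ι → C(Y, S)) (hg : ∀ y ⦃i j⦄, i ≠ j → g i y = b ∨ g j y = b) :
    C(Y, ShrinkingWedge ι b) where
  toFun y := ⟨fun i => g i y, hg y⟩

@[simp] lemma coord_lift (g : ι → C(Y, S)) (hg : ∀ y ⦃i j⦄, i ≠ j → g i y = b ∨ g j y = b)
    (i : ι) (y : Y) : coord i (lift g hg y) = g i y := rfl

open Classical in
/-- The retraction onto the subwedge of the copies indexed by `A`. -/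
def ret (A : Set ι) : C(ShrinkingWedge ι b, ShrinkingWedge ι b) :=
  lift (fun i => if i ∈ A then coord i else .const _ b) fun w i j hij => by
    refine (w.2 hij).imp (fun h => ?_) (fun h => ?_) <;> split_ifs <;> [exact h; rfl; exact h; rfl]

open Classical in
lemma coord_ret (A : Set ι) (w : ShrinkingWedge ι b) (i : ι) :
    coord i (ret A w) = if i ∈ A then coord i w else b := by
  rw [ret, coord_lift]; split_ifs <;> rfl

@[simp] lemma ret_pt (A : Set ι) : ret A (pt : ShrinkingWedge ι b) = pt := by
  ext i; simp [coord_ret]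

open Classical in
/-- Replace the `k`-th coordinate of `B` by `A`. -/
def insertAt (k : ι) (A : C(Y, S)) (B : C(Y, ShrinkingWedge ι b))
    (h : ∀ y, A y = b ∨ ∀ j ≠ k, coord j (B y) = b) : C(Y, ShrinkingWedge ι b) :=
  lift (fun i => if i = k then A else (coord i).comp B) fun y i j hij => by
    by_cases hi : i = k
    · have hj : j ≠ k := fun hj => hij (hi.trans hj.symm)
      simpa [hi, hj] using (h y).imp_right fun hB => hB j hj
    · by_cases hj : j = k
      · simpa [hi, hj] using (h y).symm.imp_left fun hB => hB i hi
      · simpa [hi, hj] using show coord i (B y) = b ∨ coord j (B y) = b from (B y).2 hij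

section InsertAt

variable {k : ι} {A : C(Y, S)} {B : C(Y, ShrinkingWedge ι b)}
  {h : ∀ y, A y = b ∨ ∀ j ≠ k, coord j (B y) = b}

@[simp] lemma coord_insertAt_self (y : Y) : coord k (insertAt k A B h y) = A y := by
  simp [insertAt]

@[simp] lemma coord_insertAt_of_ne {j : ι} (hj : j ≠ k) (y : Y) :
    coord j (insertAt k A B h y) = coord j (B y) := by
  simp [insertAt, hj]

end InsertAt

lemma exists_coord_eq (k : ι) (v : S) :
    ∃ w : ShrinkingWedge ι b, coord k w = v ∧ ∀ j ≠ k, coord j w = b :=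
  let w : C(S, ShrinkingWedge ι b) := insertAt k (.id S) (.const S pt) fun _ => .inr fun _ _ => rfl
  ⟨w v, coord_insertAt_self v, fun _ hj => coord_insertAt_of_ne hj v⟩

instance compactSpace [T1Space S] [CompactSpace S] (b : S) : CompactSpace (ShrinkingWedge ι b) := by
  have hclosed : IsClosed {w : ι → S | ∀ ⦃i j⦄, i ≠ j → w i = b ∨ w j = b} := by
    simp only [Set.ofPred_forall, Set.ofPred_or]
    exact isClosed_iInter fun i => isClosed_iInter fun j => isClosed_iInter fun _ =>
      (isClosed_singleton.preimage (continuous_apply i)).union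
        (isClosed_singleton.preimage (continuous_apply j))
  exact isCompact_iff_compactSpace.mp hclosed.isCompact

/-- The homotopies of the coordinates fit together because each is constant wherever its
coordinate is at the base point. -/
lemma exists_homotopicRel_coord_comp_eq (f : C(Z, ShrinkingWedge ι b)) (g : ι → C(Z, S))
    (h : ∀ i, ((coord i).comp f).HomotopicRel (g i) {z | coord i (f z) = b}) :
    ∃ f' : C(Z, ShrinkingWedge ι b), (∀ i, (coord i).comp f' = g i) ∧
      f.HomotopicRel f' {z | f z = pt} := by
  let H i := (h i).some
  let F : C(I × Z, ShrinkingWedge ι b) := lift (fun i => (H i).toContinuousMap) fun p i j hij =>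
    ((f p.2).2 hij).imp (fun hi => ((H i).eq_fst p.1 hi).trans hi)
      fun hj => ((H j).eq_fst p.1 hj).trans hj
  refine ⟨F.curry 1, fun i => ContinuousMap.ext (H i).map_one_left, ⟨⟨⟨F, ?_, fun _ => rfl⟩, ?_⟩⟩⟩
  · exact fun z => ext fun i => (H i).map_zero_left z
  · exact fun t z hz => ext fun i => (H i).eq_fst t (congrArg (coord i) hz)

/-- The homotopy `c` moves the other coordinates out of the way of the contraction `F`. -/
lemma exists_homotopicRel_coord_eq_base {f : C(Z, ShrinkingWedge ι b)} {s : Set Z} {k : ι}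
    (hf : ∀ z ∈ s, f z = pt)
    (F : ((coord k).comp f).HomotopyRel (.const Z b) s) {c₁ : C(Z, Z)}
    (c : (ContinuousMap.id Z).Homotopy c₁) (hcs : ∀ t, ∀ z ∈ s, c (t, z) ∈ s)
    (hslide : ∀ t z, coord k (f z) ≠ b → ∀ j ≠ k, coord j (f (c (t, z))) = b)
    (hend : ∀ t z, F (t, z) ≠ b → ∀ j ≠ k, coord j (f (c₁ z)) = b) :
    ∃ g : C(Z, ShrinkingWedge ι b), f.HomotopicRel g s ∧ ∀ z, coord k (g z) = b := by
  let slide : C(I × Z, ShrinkingWedge ι b) :=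
    insertAt k (((coord k).comp f).comp .snd) (f.comp c.toContinuousMap)
      fun p => or_iff_not_imp_left.mpr (hslide p.1 p.2)
  let contract : C(I × Z, ShrinkingWedge ι b) :=
    insertAt k F.toContinuousMap (f.comp (c₁.comp .snd))
      fun p => or_iff_not_imp_left.mpr (hend p.1 p.2)
  have slide_zero : slide.curry 0 = f := by
    ext z i
    by_cases hi : i = k
    · subst hi; simp [slide]
    · simp [slide, hi]
  have slide_one : slide.curry 1 = contract.curry 0 := by
    ext z i
    by_cases hi : i = k
    · subst hi; simp [slide, contract]
    · simp [slide, contract, hi]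
  have slide_rel : ∀ t, ∀ z ∈ s, slide (t, z) = pt := fun t z hz => by
    ext i
    by_cases hi : i = k
    · subst hi; simp [slide, hf z hz]
    · simp [slide, hi, hf _ (hcs t z hz)]
  have contract_rel : ∀ t, ∀ z ∈ s, contract (t, z) = contract (0, z) := fun t z hz => by
    ext i
    by_cases hi : i = k
    · subst hi; simpa [contract] using F.eq_fst t hz
    · simp [contract, hi]
  refine ⟨contract.curry 1, ?_, fun z => by simp [contract]⟩
  have := homotopicRel_curry slide fun t z hz => (slide_rel t z hz).trans (slide_rel 0 z hz).symm
  rw [slide_zero, slide_one] at this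
  exact this.trans (homotopicRel_curry contract contract_rel)

end ShrinkingWedge

section Avoiding

open Metric Module

lemma isClosedEmbedding_cube_val (N : Type*) :
    Topology.IsClosedEmbedding fun (x : N → I) i => (x i : ℝ) :=
  Continuous.isClosedEmbedding (by fun_prop) fun x y h => funext fun i =>
    Subtype.ext (congrFun h i)

lemma isClosedEmbedding_cylinder_val (N : Type*) :
    Topology.IsClosedEmbedding fun p : I × (N → I) => ((p.1 : ℝ), fun i => (p.2 i : ℝ)) :=
  Continuous.isClosedEmbedding (by fun_prop) fun p q h => Prod.ext
    (Subtype.ext (congrArg Prod.fst h))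
    (funext fun i => Subtype.ext (congrFun (congrArg Prod.snd h) i))

namespace ShrinkingWedge

variable {ι E N : Type*} [NormedAddCommGroup E] [InnerProductSpace ℝ E]
  {b : sphere (0 : E) 1}

variable [FiniteDimensional ℝ E] [Fintype N]

lemma exists_homotopicRel_avoiding {T₁ : Set (ℝ × (N → ℝ))} {T₂ : Set (N → ℝ)}
    (hT₁ : IsClosed T₁) (hT₂ : IsClosed T₂) (hdim₁ : dimH T₁ + 1 < finrank ℝ E)
    (hdim₂ : dimH T₂ + 1 < finrank ℝ E) {f : C(N → I, ShrinkingWedge ι b)}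
    (hf : ∀ x ∈ Cube.boundary N, f x = pt) {k : ι}
    (hk : ((coord k).comp f).HomotopicRel (.const _ b) (Cube.boundary N)) :
    ∃ (f' : C(N → I, ShrinkingWedge ι b))
      (F : ((coord k).comp f').HomotopyRel (.const _ b) (Cube.boundary N)),
      f.HomotopicRel f' (Cube.boundary N) ∧
      (∀ x, coord k (f' x) ≠ b → inner ℝ (coord (b := b) k (f x) : E) b < 0) ∧
      (∀ j ≠ k, ∀ x, coord j (f x) = b → coord j (f' x) = b) ∧
      (∀ j ≠ k, ∀ x, (fun i => (x i : ℝ)) ∈ T₂ → coord j (f' x) = b) ∧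
      ∀ p ∈ closure {p | F p ≠ b}, ((p.1 : ℝ), fun i => (p.2 i : ℝ)) ∉ T₁ := by
  classical
  obtain ⟨F⟩ := hk
  obtain ⟨F', hFF', hF'⟩ := exists_homotopicRel_closure_subset
    (isClosedEmbedding_cylinder_val N) hT₁ hdim₁ b F.toContinuousMap
  choose g hg hgT using fun j => exists_homotopicRel_closure_subset
    (isClosedEmbedding_cube_val N) hT₂ hdim₂ b ((coord j).comp f)
  have hF0 : ∀ x, F (0, x) = coord k (f x) := F.map_zero_left
  have hk' : ((coord k).comp f).HomotopicRel (F'.curry 0) {x | coord k (f x) = b} :=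
    homotopicRel_mono ((homotopicRel_comp_preimage hFF' ⟨fun x => ((0 : I), x), by fun_prop⟩).map
      fun H => H.cast (ContinuousMap.ext hF0) rfl)
      fun x hx => (hF0 x).trans hx
  obtain ⟨f', hf', hff'⟩ := exists_homotopicRel_coord_comp_eq f
    (Function.update g k (F'.curry 0)) fun j => by
      rcases eq_or_ne j k with rfl | hj
      · simpa using hk'
      · simpa [hj] using hg j
  have hf'k : (coord k).comp f' = F'.curry 0 := by simp [hf']
  have hf'j : ∀ j ≠ k, (coord j).comp f' = g j := fun j hj => by simp [hf', hj]
  have hF'b : ∀ p, F p = b → F' p = b := fun p hp => (hFF'.some.fst_eq_snd hp).symm.trans hp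
  refine ⟨f', ⟨⟨F', fun x => (DFunLike.congr_fun hf'k x).symm, fun x => hF'b _ (F.map_one_left x)⟩,
    fun t x hx => ?_⟩, homotopicRel_mono hff' hf, fun x hx => ?_, fun j hj x hx => ?_,
    fun j hj x hx => ?_, fun p hp => (hF' hp).2⟩
  · have hFx : ∀ t, F (t, x) = b := fun t =>
      (F.eq_fst t hx).trans (congrArg (coord k) (hf x hx))
    exact (hF'b _ (hFx t)).trans ((hF'b _ (hFx 0)).symm.trans (DFunLike.congr_fun hf'k x).symm)
  · have hF'x : F' (0, x) ≠ b := fun h => hx ((DFunLike.congr_fun hf'k x).trans h)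
    have hFx : inner ℝ (F (0, x) : E) b < 0 := (hF' (subset_closure hF'x)).1
    rwa [hF0] at hFx
  · exact (DFunLike.congr_fun (hf'j j hj) x).trans (((hg j).some.fst_eq_snd hx).symm.trans hx)
  · by_contra h
    exact (hgT j (subset_closure fun hgx => h ((DFunLike.congr_fun (hf'j j hj) x).trans hgx))).2 hx

variable [Nonempty N]

/-- Off `T₁`, the contraction of the `k`-th coordinate can be slid into `T₂`, where the other
coordinates rest at the base point. -/
lemma exists_homotopicRel_coord_eq_base_of_homotopicRel_const (hE : 2 < finrank ℝ E)
    (hN : Fintype.card N < finrank ℝ E) {f : C(N → I, ShrinkingWedge ι b)}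
    (hf : ∀ x ∈ Cube.boundary N, f x = pt) {k : ι}
    (hk : ((coord k).comp f).HomotopicRel (.const _ b) (Cube.boundary N)) :
    ∃ g : C(N → I, ShrinkingWedge ι b), f.HomotopicRel g (Cube.boundary N) ∧
      ∀ x, coord k (g x) = b := by
  obtain ⟨δ, hδ, hfδ⟩ := exists_pos_forall_ne_of_inner_neg b ((coord k).comp f)
  obtain ⟨T₁, T₂, hT₁, hT₂, hdim₁, hdim₂, hτ⟩ := exists_skeleta_forall_exists_map N hδ
  have hdim₁' : dimH T₁ + 1 < finrank ℝ E := by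
    refine (add_le_add_left hdim₁ 1).trans_lt ?_
    have := Fintype.card_pos (α := N)
    exact_mod_cast (by omega : Fintype.card N - 1 + 1 < finrank ℝ E)
  have hdim₂' : dimH T₂ + 1 < finrank ℝ E := by
    refine (add_le_add_left hdim₂ 1).trans_lt ?_
    exact_mod_cast hE
  obtain ⟨f', F, hff', hf'k, hf'j, hf'T, hF⟩ :=
    exists_homotopicRel_avoiding hT₁ hT₂ hdim₁' hdim₂' hf hk
  obtain ⟨τ, hτ0, hτ1, hτδ, hτT⟩ := hτ _ isClosed_closure hF
  have hf' : ∀ x ∈ Cube.boundary N, f' x = pt := fun x hx =>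
    (hff'.some.fst_eq_snd hx).symm.trans (hf x hx)
  obtain ⟨g, hf'g, hg⟩ := exists_homotopicRel_coord_eq_base hf' F (cubeLine fun _ => τ)
    (fun t x hx => cubeLine_mem_boundary (fun _ => hτ0) (fun _ => hτ1) t hx)
    (fun t x hx j hj => hf'j j hj _ <| ((f _).2 hj).resolve_right <|
      hfδ x _ (hf'k x hx) (dist_cubeLine_le hδ.le (fun _ => hτδ) t x))
    (fun t x hx j hj => hf'T j hj _ (hτT (t, x) (subset_closure hx)))
  exact ⟨g, hff'.trans hf'g, hg⟩

end ShrinkingWedge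

end Avoiding

section Concatenation

/-- The map of the unit interval that is `0` up to `k / (k + 1)`, is `1` from `(k + 1) / (k + 2)`
on, and is affine in between. -/
def ramp (k : ℕ) : C(I, I) where
  toFun t := Set.projIcc (0 : ℝ) 1 zero_le_one ((k + 2) * ((k + 1) * t - k))
  continuous_toFun := continuous_projIcc.comp (by fun_prop)

lemma ramp_of_le {k : ℕ} {t : I} (h : (t : ℝ) ≤ k / (k + 1)) : ramp k t = 0 := by
  rw [le_div_iff₀ (by positivity)] at h
  exact Set.projIcc_of_le_left zero_le_one <|
    mul_nonpos_of_nonneg_of_nonpos (by positivity) (by linarith)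

lemma ramp_of_ge {k : ℕ} {t : I} (h : ((k : ℝ) + 1) / (k + 2) ≤ t) : ramp k t = 1 := by
  rw [div_le_iff₀ (by positivity)] at h
  exact Set.projIcc_of_right_le zero_le_one (by nlinarith [(k.cast_nonneg : (0 : ℝ) ≤ k)])

@[simp] lemma ramp_zero (k : ℕ) : ramp k 0 = 0 := ramp_of_le (by positivity)

@[simp] lemma ramp_one (k : ℕ) : ramp k 1 = 1 :=
  ramp_of_ge ((div_le_one (by positivity)).mpr (by linarith))

lemma ramp_eq_one_or_eq_zero {i j : ℕ} (hij : i < j) (t : I) :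
    ramp i t = 1 ∨ ramp j t = 0 := by
  refine (le_total _ _).imp ramp_of_ge fun h => ramp_of_le (h.trans ?_)
  have : (i : ℝ) + 1 ≤ j := by exact_mod_cast hij
  rw [div_le_div_iff₀ (by positivity) (by positivity)]
  nlinarith

variable {Y Z : Type*} [TopologicalSpace Y] [TopologicalSpace Z]

open Classical in
/-- The concatenation of the homotopies `h 0, …, h n`, the `k`-th one being run during
`[k / (k + 1), (k + 1) / (k + 2)]`. -/
def concatUpTo (h : ℕ → C(I × Z, Y)) : ℕ → I × Z → Y
  | 0, p => h 0 (ramp 0 p.1, p.2)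
  | n + 1, p => if (p.1 : ℝ) ≤ ((n : ℝ) + 1) / (n + 2) then concatUpTo h n p
      else h (n + 1) (ramp (n + 1) p.1, p.2)

variable {h : ℕ → C(I × Z, Y)}

lemma concatUpTo_of_ge {n : ℕ} {p : I × Z} (hp : ((n : ℝ) + 1) / (n + 2) ≤ p.1) :
    concatUpTo h n p = h n (1, p.2) := by
  cases n with
  | zero => rw [concatUpTo, ramp_of_ge hp]
  | succ n =>
    have hlt : ((n : ℝ) + 1) / (n + 2) < ((n + 1 : ℕ) + 1) / ((n + 1 : ℕ) + 2) := by
      rw [div_lt_div_iff₀ (by positivity) (by positivity)]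
      push_cast
      nlinarith
    rw [concatUpTo, if_neg (hlt.trans_le hp).not_ge, ramp_of_ge hp]

lemma continuous_concatUpTo (hh : ∀ k z, h k (1, z) = h (k + 1) (0, z)) (n : ℕ) :
    Continuous (concatUpTo h n) := by
  induction n with
  | zero => simp only [concatUpTo]; fun_prop
  | succ n ih =>
    simp only [concatUpTo]
    refine Continuous.if_le ih (by fun_prop) (by fun_prop) continuous_const fun p hp => ?_
    rw [concatUpTo_of_ge hp.ge, hh, ramp_of_le]
    rw [hp]; push_cast; apply le_of_eq; ring

lemma concatUpTo_zero (n : ℕ) (z : Z) : concatUpTo h n (0, z) = h 0 (0, z) := by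
  induction n with
  | zero => rw [concatUpTo, ramp_zero]
  | succ n ih => rw [concatUpTo, if_pos (by push_cast; positivity), ih]

lemma concatUpTo_eq_of_forall_eq {y : Y} {z : Z} (hz : ∀ k t, h k (t, z) = y) (n : ℕ) (t : I) :
    concatUpTo h n (t, z) = y := by
  induction n with
  | zero => rw [concatUpTo, hz]
  | succ n ih => rw [concatUpTo, hz, ih, ite_self]

end Concatenation

namespace ShrinkingWedge

variable {S Z : Type*} [TopologicalSpace S] [TopologicalSpace Z] {b : S}

lemma coord_concatUpTo_of_le {h : ℕ → C(I × Z, ShrinkingWedge ℕ b)}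
    (hh : ∀ k z, h k (1, z) = h (k + 1) (0, z)) (hb : ∀ k, ∀ j < k, ∀ p, coord j (h k p) = b)
    {j n : ℕ} (hjn : j ≤ n) (p : I × Z) :
    coord j (concatUpTo h n p) = coord j (concatUpTo h j p) := by
  induction n, hjn using Nat.le_induction with
  | base => rfl
  | succ n hn ih =>
    rw [← ih, concatUpTo]
    split_ifs with hp
    · rfl
    · rw [hb _ _ (by omega), concatUpTo_of_ge (not_le.mp hp).le, hh, hb _ _ (by omega)]

/-- Infinitely many homotopies can be concatenated in the shrinking wedge if the `k`-th one stays
in the copies with index at least `k`, as each coordinate moves during finitely many of them. -/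
lemma homotopicRel_pt_of_forall_homotopy {h : ℕ → C(I × Z, ShrinkingWedge ℕ b)}
    (hh : ∀ k z, h k (1, z) = h (k + 1) (0, z)) (hb : ∀ k, ∀ j < k, ∀ p, coord j (h k p) = b)
    {s : Set Z} (hs : ∀ k t, ∀ z ∈ s, h k (t, z) = pt) :
    ((h 0).curry 0).HomotopicRel (.const Z pt) s := by
  have hle {j n : ℕ} (hjn : j ≤ n) := coord_concatUpTo_of_le hh hb hjn
  let H : C(I × Z, ShrinkingWedge ℕ b) :=
    lift (fun j => (coord j).comp ⟨concatUpTo h j, continuous_concatUpTo hh j⟩) fun p i j hij =>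
      ((concatUpTo h (max i j) p).2 hij).imp (hle (le_max_left i j) p).symm.trans
        (hle (le_max_right i j) p).symm.trans
  have hH0 : H.curry 0 = (h 0).curry 0 := by
    ext z j; simp [H, concatUpTo_zero]
  have hH1 : H.curry 1 = .const Z pt := by
    ext z j
    have hj : ((j : ℝ) + 1) / (j + 2) ≤ (1 : I) := (div_le_one (by positivity)).mpr (by linarith)
    simp [H, concatUpTo_of_ge (p := (1, z)) hj, hh, hb]
  rw [← hH0, ← hH1]
  refine homotopicRel_curry H fun t z hz => ext fun j => ?_
  simp [H, concatUpTo_eq_of_forall_eq fun k t => hs k t z hz]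

lemma ret_comp_homotopicRel_of_homotopicRel {f g : C(Z, ShrinkingWedge ℕ b)} {s : Set Z} {k : ℕ}
    (hfg : f.HomotopicRel g s) (hg : ∀ z, coord k (g z) = b) :
    ((ret (Set.Ici k)).comp f).HomotopicRel ((ret (Set.Ici (k + 1))).comp f) s := by
  have hret : (ret (Set.Ici k)).comp g = (ret (Set.Ici (k + 1))).comp g := by
    ext z j
    rcases lt_trichotomy j k with hj | rfl | hj
    · simp [coord_ret, hj.not_ge, hj.le.trans_lt k.lt_succ_self |>.not_ge]
    · simp [coord_ret, hg]
    · simp [coord_ret, hj.le, Nat.succ_le_of_lt hj]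
  have hk := hfg.comp_continuousMap (ret (Set.Ici k))
  rw [hret] at hk
  exact hk.trans (hfg.comp_continuousMap (ret (Set.Ici (k + 1)))).symm

lemma homotopicRel_pt_of_forall_exists_coord_eq {f : C(Z, ShrinkingWedge ℕ b)} {s : Set Z}
    (hf : ∀ z ∈ s, f z = pt)
    (hg : ∀ k, ∃ g : C(Z, ShrinkingWedge ℕ b), f.HomotopicRel g s ∧ ∀ z, coord k (g z) = b) :
    f.HomotopicRel (.const Z pt) s := by
  choose g hfg hg using hg
  let H k := (ret_comp_homotopicRel_of_homotopicRel (hfg k) (hg k)).some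
  let h k : C(I × Z, ShrinkingWedge ℕ b) := (ret (Set.Ici k)).comp (H k).toContinuousMap
  have hret k l (w : ShrinkingWedge ℕ b) :
      ret (Set.Ici k) (ret (Set.Ici l) w) = ret (Set.Ici (max k l)) w := by
    ext j; simp only [coord_ret, Set.mem_Ici, max_le_iff, ite_and]
  have hzero : (h 0).curry 0 = f := by
    ext z j
    simp [h, H, coord_ret]
  rw [← hzero]
  refine homotopicRel_pt_of_forall_homotopy (fun k z => ?_) (fun k j hj p => ?_)
    fun k t z hz => ?_
  · simp [h, hret]
  · simp [h, coord_ret, hj]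
  · have hH : H k (t, z) = pt := ((H k).eq_fst t hz).trans (by simp [hf z hz])
    exact (congrArg _ hH).trans (ret_pt _)

end ShrinkingWedge

section Induced

variable {N X Y Z : Type*} [TopologicalSpace X] [TopologicalSpace Y] [TopologicalSpace Z]
  {x : X} {y : Y} {z : Z}

lemma piInduced_piInduced {φ : C(X, Y)} {ψ : C(Y, Z)} {χ : C(X, Z)} (hφ : φ x = y) (hψ : ψ y = z)
    (hχ : χ x = z) (h : ψ.comp φ = χ) (a : HomotopyGroup N X x) :
    piInduced N ψ hψ (piInduced N φ hφ a) = piInduced N χ hχ a := by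
  subst h
  induction a using Quotient.inductionOn with | _ f => rfl

lemma piInduced_id (a : HomotopyGroup N X x) : piInduced N (.id X) rfl a = a := by
  induction a using Quotient.inductionOn with | _ f => rfl

lemma piInduced_const_eq (hφ : ContinuousMap.const X y x = y) (a a' : HomotopyGroup N X x) :
    piInduced N (.const X y) hφ a = piInduced N (.const X y) hφ a' := by
  induction a, a' using Quotient.inductionOn₂ with | _ f _ => rfl

lemma continuous_piInduced (φ : C(X, Y)) (hφ : φ x = y) : Continuous (piInduced N φ hφ) :=
  Continuous.quotient_map'
    (((ContinuousMap.continuous_postcomp φ).comp continuous_subtype_val).subtype_mk _) _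

/-- A homeomorphism of pointed spaces induces a homeomorphism of homotopy groups. -/
def piInducedHomeomorph (N : Type*) (φ : X ≃ₜ Y) (hφ : φ x = y) :
    HomotopyGroup N X x ≃ₜ HomotopyGroup N Y y where
  toFun := piInduced N φ hφ
  invFun := piInduced N φ.symm (φ.symm_apply_eq.mpr hφ.symm)
  left_inv a := (piInduced_piInduced _ _ rfl (by ext; simp) a).trans (piInduced_id a)
  right_inv a := (piInduced_piInduced _ _ rfl (by ext; simp) a).trans (piInduced_id a)
  continuous_toFun := continuous_piInduced _ _
  continuous_invFun := continuous_piInduced _ _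

lemma compCM_transAt [DecidableEq N] (φ : C(X, Y)) (hφ : φ x = y) (i : N) (f g : Ω^ N X x) :
    GenLoop.compCM φ hφ (GenLoop.transAt i f g) =
      GenLoop.transAt i (GenLoop.compCM φ hφ f) (GenLoop.compCM φ hφ g) := by
  refine GenLoop.ext _ _ fun t => ?_
  change φ (GenLoop.transAt i f g t) = _
  simp only [GenLoop.transAt, GenLoop.coe_copy]
  split_ifs <;> rfl

/-- `piInduced` as a homomorphism of groups. -/
def piInducedHom (N : Type*) [DecidableEq N] [Nonempty N] (φ : C(X, Y)) (hφ : φ x = y) :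
    HomotopyGroup N X x →* HomotopyGroup N Y y :=
  MonoidHom.mk' (piInduced N φ hφ) fun a b => by
    induction a, b using Quotient.inductionOn₂ with | _ f g => ?_
    let i := Classical.arbitrary N
    have hX := HomotopyGroup.mul_spec (i := i) (p := f) (q := g)
    have hY := HomotopyGroup.mul_spec (i := i) (p := GenLoop.compCM φ hφ f)
      (q := GenLoop.compCM φ hφ g)
    rw [← compCM_transAt] at hY
    exact (congrArg (piInduced N φ hφ) hX).trans hY.symm

end Induced

section Reparametrization

variable {N X : Type*} [TopologicalSpace X] {x : X}

/-- The precomposition of a generalized loop with the product of the maps `τ i`. -/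
def reparam (τ : N → C(I, I)) (h0 : ∀ i, τ i 0 = 0) (h1 : ∀ i, τ i 1 = 1) (p : Ω^ N X x) :
    Ω^ N X x :=
  ⟨p.1.comp (.piMap τ), fun y hy => p.2 _ <| by
    simpa using cubeLine_mem_boundary h0 h1 1 hy⟩

lemma homotopic_reparam {τ : N → C(I, I)} (h0 : ∀ i, τ i 0 = 0) (h1 : ∀ i, τ i 1 = 1)
    (p : Ω^ N X x) : GenLoop.Homotopic p (reparam τ h0 h1 p) :=
  ⟨⟨(ContinuousMap.Homotopy.refl p.1).comp (cubeLine τ), fun t y hy =>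
    (p.2 _ (cubeLine_mem_boundary h0 h1 t hy)).trans (p.2 y hy).symm⟩⟩

variable [Nonempty N]

open Classical in
/-- The maps that apply `ramp j` to one coordinate of the cube. -/
def rampAt (N : Type*) [Nonempty N] (j : ℕ) : N → C(I, I) :=
  Function.update (fun _ => .id I) (Classical.arbitrary N) (ramp j)

lemma rampAt_zero (j : ℕ) (i : N) : rampAt N j i 0 = 0 := by
  rcases eq_or_ne i (Classical.arbitrary N) with rfl | hi <;> simp [rampAt, *]

lemma rampAt_one (j : ℕ) (i : N) : rampAt N j i 1 = 1 := by
  rcases eq_or_ne i (Classical.arbitrary N) with rfl | hi <;> simp [rampAt, *]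

lemma reparam_rampAt_eq_or {i j : ℕ} (hij : i < j) (p q : Ω^ N X x) (y : N → I) :
    reparam (rampAt N i) (rampAt_zero i) (rampAt_one i) p y = x ∨
      reparam (rampAt N j) (rampAt_zero j) (rampAt_one j) q y = x :=
  (ramp_eq_one_or_eq_zero hij (y (Classical.arbitrary N))).imp
    (fun h => p.2 _ ⟨Classical.arbitrary N, Or.inr (by simpa [rampAt] using h)⟩)
    fun h => q.2 _ ⟨Classical.arbitrary N, Or.inl (by simpa [rampAt] using h)⟩

end Reparametrization

namespace ShrinkingWedge

section Interleave

variable {N S : Type*} [Nonempty N] [TopologicalSpace S] {b : S}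

/-- The loop in the wedge that runs through infinitely many loops, one in each copy of `S`, after
each other along one coordinate of the cube. -/
def interleave (p : ℕ → Ω^ N S b) : Ω^ N (ShrinkingWedge ℕ b) pt :=
  ⟨lift (fun j => (reparam (rampAt N j) (rampAt_zero j) (rampAt_one j) (p j)).1)
    fun y i j hij => hij.lt_or_gt.elim (fun h => reparam_rampAt_eq_or h (p i) (p j) y)
      fun h => (reparam_rampAt_eq_or h (p j) (p i) y).symm,
    fun y hy => ext fun j => (reparam _ (rampAt_zero j) (rampAt_one j) (p j)).2 y hy⟩

lemma continuous_interleave [Finite N] :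
    Continuous (interleave : (ℕ → Ω^ N S b) → Ω^ N (ShrinkingWedge ℕ b) pt) := by
  refine Continuous.subtype_mk (ContinuousMap.continuous_of_continuous_uncurry _ ?_) _
  refine Continuous.subtype_mk (continuous_pi fun j => ?_) _
  refine Continuous.eval (f := fun q : (ℕ → Ω^ N S b) × (N → I) => (q.1 j).1) ?_ ?_
  · fun_prop
  · exact (map_continuous (ContinuousMap.piMap (rampAt N j))).comp continuous_snd

/-- The coordinates of an element of a homotopy group of a wedge. -/
def piCoord (N : Type*) (a : HomotopyGroup N (ShrinkingWedge ℕ b) pt) (j : ℕ) :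
    HomotopyGroup N S b :=
  piInduced N (coord j) (coord_pt j) a

lemma piCoord_interleave (p : ℕ → Ω^ N S b) (j : ℕ) :
    piCoord N (Quotient.mk _ (interleave p)) j = Quotient.mk _ (p j) :=
  Quotient.sound (homotopic_reparam (rampAt_zero j) (rampAt_one j) (p j)).symm

end Interleave

open Metric Module

variable {E N : Type*} [NormedAddCommGroup E] [InnerProductSpace ℝ E] [FiniteDimensional ℝ E]
  {b : sphere (0 : E) 1} [Fintype N] [Nonempty N]

lemma piCoord_injective (hE : 2 < finrank ℝ E) (hN : Fintype.card N < finrank ℝ E) :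
    Function.Injective (piCoord (b := b) N) := by
  classical
  refine fun a a' h => mul_inv_eq_one.mp ?_
  have hcoord : ∀ j, piInducedHom N (coord j) (coord_pt j) (a * a'⁻¹) = 1 := fun j => by
    rw [map_mul, map_inv, mul_inv_eq_one]
    exact congrFun h j
  generalize a * a'⁻¹ = d at hcoord
  induction d using Quotient.inductionOn with | _ f => ?_
  rw [HomotopyGroup.one_def]
  refine Quotient.sound (homotopicRel_pt_of_forall_exists_coord_eq f.2 fun k =>
    exists_homotopicRel_coord_eq_base_of_homotopicRel_const hE hN f.2 ?_)
  have := hcoord k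
  rw [HomotopyGroup.one_def] at this
  exact Quotient.exact this

/-- The coordinates identify a homotopy group of a wedge of spheres with a product, as a
topological space. -/
def piCoordHomeomorph (hE : 2 < finrank ℝ E) (hN : Fintype.card N < finrank ℝ E) :
    HomotopyGroup N (ShrinkingWedge ℕ b) pt ≃ₜ (ℕ → HomotopyGroup N (sphere (0 : E) 1) b) where
  toFun := piCoord N
  invFun c := Quotient.mk _ (interleave fun j => (c j).out)
  left_inv _ := piCoord_injective hE hN <| funext fun j =>
    (piCoord_interleave _ j).trans (Quotient.out_eq _)
  right_inv _ := funext fun j => (piCoord_interleave _ j).trans (Quotient.out_eq _)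
  continuous_toFun := continuous_pi fun _ => continuous_piInduced _ _
  continuous_invFun := continuous_quotient_mk'.comp <| continuous_interleave.comp <|
    continuous_pi fun j => continuous_of_discreteTopology.comp (continuous_apply j)

end ShrinkingWedge

section InverseLimit

variable {J A : Type*} {B C : J → Type*} [LinearOrder J] [TopologicalSpace A]
  [∀ i, TopologicalSpace (B i)] [∀ i, TopologicalSpace (C i)]

/-- A space `A` with product coordinates `e` is the inverse limit of retracts `B i` if `B i` carries
exactly the coordinates up to `i`. The inverse of the canonical map reads off the `i`-th coordinate
of a compatible family from its `i`-th member. -/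
def homeomorphInvLim (e : A ≃ₜ ∀ i, C i) (ρ : ∀ i, C(A, B i)) (incl : ∀ i, C(B i, A))
    (r : ∀ i k, k ≤ i → B i → B k) (hρ : ∀ i y, ρ i (incl i y) = y)
    (hr : ∀ i k (h : k ≤ i) a, r i k h (ρ i a) = ρ k a)
    (he : ∀ i a, e (incl i (ρ i a)) i = e a i)
    (he' : ∀ i j, i < j → ∀ y y', e (incl i y) j = e (incl i y') j) :
    A ≃ₜ {y : ∀ i, B i // ∀ k i (h : k ≤ i), r i k h (y i) = y k} where
  toFun a := ⟨fun i => ρ i a, fun k i h => hr i k h a⟩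
  invFun y := e.symm fun i => e (incl i (y.1 i)) i
  left_inv a := e.symm_apply_eq.mpr (funext fun i => he i a)
  right_inv y := by
    refine Subtype.ext (funext fun i => ?_)
    have hfactor : ∀ j (h : j ≤ i) (z : B i), e (incl i z) j = e (incl j (r i j h z)) j :=
      fun j h z => by rw [← he, ← hr i j h, hρ]
    have hincl : ∀ a, (∀ j, e a j = e (incl j (y.1 j)) j) → incl i (ρ i a) = incl i (y.1 i) := by
      refine fun a ha => e.injective (funext fun j => ?_)
      rcases le_or_gt j i with h | h
      · rw [hfactor j h, hr, he, ha, hfactor j h, y.2]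
      · exact he' i j h _ _
    have := hincl (e.symm fun i => e (incl i (y.1 i)) i) fun j => by rw [e.apply_symm_apply]
    simpa only [hρ] using congrArg (ρ i) this
  continuous_toFun := by fun_prop
  continuous_invFun := e.symm.continuous.comp <| continuous_pi fun i =>
    (continuous_apply i).comp <| e.continuous.comp <| (map_continuous (incl i)).comp <|
      (continuous_apply i).comp continuous_subtype_val

end InverseLimit

section Earring

open Metric RealInnerProductSpace

variable {E : Type*} [NormedAddCommGroup E]

section NormedSpace

variable [NormedSpace ℝ E]

/-- The homothety from the unit sphere onto the `j`-th sphere of the earring, which carries `b` to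
`0`. The `j`-th sphere has radius `1 / (j + 1)`. -/
def earringSphereMap (b : sphere (0 : E) 1) (j : ℕ) (v : sphere (0 : E) 1) : E :=
  ((j : ℝ) + 1)⁻¹ • ((v : E) - b)

variable {b : sphere (0 : E) 1}

lemma earringSphereMap_eq_zero_iff {j : ℕ} {v : sphere (0 : E) 1} :
    earringSphereMap b j v = 0 ↔ v = b := by
  rw [earringSphereMap, smul_eq_zero_iff_right (by positivity), sub_eq_zero, Subtype.coe_inj]

lemma continuous_earringSphereMap (j : ℕ) : Continuous (earringSphereMap b j) := by
  unfold earringSphereMap; fun_prop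

lemma norm_earringSphereMap_le (j : ℕ) (v : sphere (0 : E) 1) :
    ‖earringSphereMap b j v‖ ≤ 2 * (1 / ((j : ℝ) + 1)) := by
  have hvb : ‖(v : E) - b‖ ≤ 2 := by
    simpa only [norm_eq_of_mem_sphere, one_add_one_eq_two] using norm_sub_le (v : E) b
  rw [earringSphereMap, norm_smul, norm_inv, Real.norm_of_nonneg (by positivity), mul_comm,
    one_div]
  gcongr

lemma range_earringSphereMap (j : ℕ) : Set.range (earringSphereMap b j) =
    sphere (((j : ℝ) + 1)⁻¹ • -(b : E)) ((j : ℝ) + 1)⁻¹ := by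
  have hj : (0 : ℝ) < (j : ℝ) + 1 := by positivity
  ext z
  rw [mem_sphere_iff_norm]
  constructor
  · rintro ⟨v, rfl⟩
    rw [earringSphereMap, ← smul_sub, sub_neg_eq_add, sub_add_cancel, norm_smul,
      norm_eq_of_mem_sphere, mul_one, Real.norm_of_nonneg (by positivity)]
  · intro hz
    refine ⟨⟨((j : ℝ) + 1) • z + b, mem_sphere_zero_iff_norm.mpr ?_⟩, ?_⟩
    · have hz' : ((j : ℝ) + 1) • z + b = ((j : ℝ) + 1) • (z - ((j : ℝ) + 1)⁻¹ • -(b : E)) := by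
        rw [smul_sub, smul_inv_smul₀ hj.ne', sub_neg_eq_add]
      rw [hz', norm_smul, hz, Real.norm_of_nonneg hj.le, mul_inv_cancel₀ hj.ne']
    · rw [earringSphereMap, add_sub_cancel_right, inv_smul_smul₀ hj.ne']

/-- The map from the wedge of spheres to the earring. At most one summand is nonzero. -/
def earringMap (w : ShrinkingWedge ℕ b) : E := ∑' j, earringSphereMap b j (w.1 j)

lemma earringMap_eq {w : ShrinkingWedge ℕ b} {k : ℕ} (hk : ∀ j ≠ k, w.1 j = b) :
    earringMap w = earringSphereMap b k (w.1 k) :=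
  tsum_eq_single k fun j hj => earringSphereMap_eq_zero_iff.mpr (hk j hj)

lemma continuous_earringMap : Continuous (earringMap (b := b)) := by
  have hunif : TendstoUniformly (fun (n : ℕ) (w : ShrinkingWedge ℕ b) =>
      ∑ j ∈ Finset.range n, earringSphereMap b j (w.1 j)) earringMap Filter.atTop := by
    rw [Metric.tendstoUniformly_iff]
    intro ε hε
    have hlim := (tendsto_one_div_add_atTop_nhds_zero_nat (𝕜 := ℝ)).const_mul 2
    rw [mul_zero] at hlim
    filter_upwards [hlim.eventually (gt_mem_nhds hε)] with n hn w
    obtain ⟨k, hk⟩ := w.exists_forall_ne_eq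
    have hzero : ∀ j ≠ k, earringSphereMap b j (w.1 j) = 0 := fun j hj =>
      earringSphereMap_eq_zero_iff.mpr (hk j hj)
    rw [earringMap_eq hk]
    by_cases h : k ∈ Finset.range n
    · rwa [Finset.sum_eq_single_of_mem k h fun j _ hj => hzero j hj, dist_self]
    · rw [Finset.sum_eq_zero fun j hj => hzero j (ne_of_mem_of_not_mem hj h), dist_zero_right]
      refine ((norm_earringSphereMap_le k _).trans ?_).trans_lt hn
      rw [Finset.mem_range, not_lt] at h
      gcongr
  refine hunif.continuous (.of_forall fun n => continuous_finsetSum _ fun j _ => ?_)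
  exact (continuous_earringSphereMap j).comp (map_continuous (ShrinkingWedge.coord j))

lemma range_earringMap :
    Set.range (earringMap (b := b)) = ⋃ j, Set.range (earringSphereMap b j) := by
  refine Set.Subset.antisymm ?_ (Set.iUnion_subset fun j => ?_)
  · rintro _ ⟨w, rfl⟩
    obtain ⟨k, hk⟩ := w.exists_forall_ne_eq
    exact Set.mem_iUnion.mpr ⟨k, w.1 k, (earringMap_eq hk).symm⟩
  · rintro _ ⟨v, rfl⟩
    obtain ⟨w, rfl, hw⟩ := ShrinkingWedge.exists_coord_eq (b := b) j v
    exact ⟨w, earringMap_eq hw⟩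

end NormedSpace

variable [InnerProductSpace ℝ E] {b : sphere (0 : E) 1}

lemma norm_earringSphereMap_sq (j : ℕ) (v : sphere (0 : E) 1) :
    ‖earringSphereMap b j v‖ ^ 2 = -2 * ((j : ℝ) + 1)⁻¹ * ⟪earringSphereMap b j v, (b : E)⟫ := by
  rw [earringSphereMap, norm_smul, mul_pow, norm_sub_sq_real, real_inner_smul_left,
    inner_sub_left, real_inner_self_eq_norm_sq, norm_eq_of_mem_sphere, norm_eq_of_mem_sphere,
    Real.norm_of_nonneg (by positivity)]
  ring

lemma earringSphereMap_ne {j k : ℕ} (hjk : j ≠ k) {u v : sphere (0 : E) 1} (hu : u ≠ b) :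
    earringSphereMap b j u ≠ earringSphereMap b k v := by
  intro h
  have hj := norm_earringSphereMap_sq (b := b) j u
  have hk := norm_earringSphereMap_sq (b := b) k v
  rw [← h, hj] at hk
  have hradius : ((j : ℝ) + 1)⁻¹ ≠ ((k : ℝ) + 1)⁻¹ := by simpa using hjk
  have hinner : ⟪earringSphereMap b j u, (b : E)⟫ = 0 := by
    by_contra hne
    exact hradius (mul_left_cancel₀ (by norm_num) (mul_right_cancel₀ hne hk))
  rw [hinner, mul_zero, sq_eq_zero_iff, norm_eq_zero, earringSphereMap_eq_zero_iff] at hj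
  exact hu hj

lemma coord_eq_base_of_earringMap_mem {w : ShrinkingWedge ℕ b} {k : ℕ}
    (hw : earringMap w ∈ Set.range (earringSphereMap b k)) {j : ℕ} (hj : j ≠ k) :
    ShrinkingWedge.coord j w = b := by
  obtain ⟨v, hv⟩ := hw
  by_contra hne
  exact earringSphereMap_ne hj hne
    (hv.trans (earringMap_eq fun i hi => (w.2 hi).resolve_right hne)).symm

lemma earringMap_injective : Function.Injective (earringMap (b := b)) := by
  intro w w' h
  obtain ⟨k, hk⟩ := w.exists_forall_ne_eq
  have hk' : ∀ j ≠ k, w'.1 j = b := fun j hj =>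
    coord_eq_base_of_earringMap_mem ⟨w.1 k, (earringMap_eq hk).symm.trans h⟩ hj
  have hkk : w.1 k = w'.1 k := by
    rw [earringMap_eq hk, earringMap_eq hk'] at h
    exact Subtype.ext (sub_left_injective (smul_right_injective E (by positivity) h))
  refine Subtype.ext (funext fun j => ?_)
  by_cases hj : j = k
  · rw [hj, hkk]
  · rw [hk j hj, hk' j hj]

/-- The earring is the shrinking wedge of its spheres. -/
def earringHomeomorph [FiniteDimensional ℝ E] (b : sphere (0 : E) 1) :
    ShrinkingWedge ℕ b ≃ₜ ⋃ j, Set.range (earringSphereMap b j) :=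
  (continuous_earringMap.isClosedEmbedding earringMap_injective).isEmbedding.toHomeomorph.trans
    (.setCongr range_earringMap)

end Earring

section Hawaiian

open Metric Module ShrinkingWedge

/-- The point of the unit sphere that the homotheties onto the spheres `hawSphere n j` carry
to `0`. -/
def hawaiianBase (n : ℕ) : sphere (0 : EuclideanSpace ℝ (Fin (n + 1))) 1 :=
  -⟨EuclideanSpace.single 0 1, by simp⟩

variable {n : ℕ} {z : EuclideanSpace ℝ (Fin (n + 1))}

lemma range_earringSphereMap_hawaiianBase (j : ℕ) :
    Set.range (earringSphereMap (hawaiianBase n) j) = hawSphere n (j + 1) := by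
  have hcenter : ((j : ℝ) + 1)⁻¹ • EuclideanSpace.single (0 : Fin (n + 1)) (1 : ℝ) =
      EuclideanSpace.single 0 ((j : ℝ) + 1)⁻¹ := by
    ext i; simp [PiLp.single_apply]
  rw [range_earringSphereMap, hawSphere, hawaiianBase, coe_neg_sphere, neg_neg, hcenter,
    Nat.cast_succ, one_div]

lemma mem_hawaiian_iff : z ∈ hawaiian n ↔ ∃ k : ℕ, z ∈ hawSphere n (k + 1) := by
  simp only [hawaiian, Set.mem_iUnion, Set.mem_ofPred_eq, exists_prop]
  exact ⟨fun ⟨j, hj, hz⟩ => ⟨j - 1, by rwa [Nat.sub_add_cancel hj]⟩,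
    fun ⟨k, hz⟩ => ⟨k + 1, k.succ_pos, hz⟩⟩

lemma mem_Ysub_iff {i : ℕ} : z ∈ Ysub n i ↔ ∃ k < i, z ∈ hawSphere n (k + 1) := by
  simp only [Ysub, Set.mem_iUnion, Finset.mem_Icc, exists_prop]
  exact ⟨fun ⟨j, hj, hz⟩ => ⟨j - 1, by lia, by rwa [Nat.sub_add_cancel hj.1]⟩,
    fun ⟨k, hk, hz⟩ => ⟨k + 1, by lia, hz⟩⟩

/-- The inclusion of a finite union of spheres in the Hawaiian earring. -/
def inclHawaiian (n i : ℕ) : C(Ysub n i, hawaiian n) :=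
  .inclusion fun _ hz =>
    let ⟨k, _, hk⟩ := mem_Ysub_iff.mp hz
    mem_hawaiian_iff.mpr ⟨k, hk⟩

lemma inclHawaiian_YsubPt {i : ℕ} : inclHawaiian n (i + 1) (YsubPt n i) = hawaiianPt n := rfl

/-- The Hawaiian earring as a shrinking wedge of spheres. The `j`-th coordinate is that of
`hawSphere n (j + 1)`. -/
def hawaiianHomeomorph (n : ℕ) : hawaiian n ≃ₜ ShrinkingWedge ℕ (hawaiianBase n) :=
  ((earringHomeomorph (hawaiianBase n)).trans <| .setCongr <| Set.ext fun _ => by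
    simp only [range_earringSphereMap_hawaiianBase, Set.mem_iUnion, mem_hawaiian_iff]).symm

lemma earringMap_hawaiianHomeomorph (z : hawaiian n) : earringMap (hawaiianHomeomorph n z) = z :=
  congrArg Subtype.val ((hawaiianHomeomorph n).symm_apply_apply z)

/-- The projection of the Hawaiian earring onto its sphere `hawSphere n (j + 1)`, rescaled to the
unit sphere. -/
def hawaiianCoord (n j : ℕ) : C(hawaiian n, sphere (0 : EuclideanSpace ℝ (Fin (n + 1))) 1) :=
  (coord j).comp (hawaiianHomeomorph n : C(hawaiian n, ShrinkingWedge ℕ (hawaiianBase n)))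

lemma hawaiianCoord_of_ne {z : hawaiian n} {j k : ℕ} (hz : z.1 ∈ hawSphere n (k + 1))
    (hj : j ≠ k) : hawaiianCoord n j z = hawaiianBase n :=
  coord_eq_base_of_earringMap_mem (w := hawaiianHomeomorph n z)
    (by rwa [earringMap_hawaiianHomeomorph, range_earringSphereMap_hawaiianBase]) hj

lemma hawaiianCoord_pt (j : ℕ) : hawaiianCoord n j (hawaiianPt n) = hawaiianBase n :=
  hawaiianCoord_of_ne (zero_mem_hawSphere n (j + 1 + 1)) j.succ_ne_self.symm

lemma hawaiianCoord_comp_inclusion_of_le {i j : ℕ} (hj : i ≤ j) :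
    (hawaiianCoord n j).comp (inclHawaiian n i) = .const _ (hawaiianBase n) :=
  ContinuousMap.ext fun y =>
    let ⟨_, hl, hy⟩ := mem_Ysub_iff.mp y.2
    hawaiianCoord_of_ne hy (hl.trans_le hj).ne'

/-- The coordinates identify the homotopy groups of the Hawaiian earring in dimensions at most `n`
with products of homotopy groups of a sphere. -/
def piHawaiianHomeomorph (hn : 2 ≤ n) {N : Type*} [Fintype N] [Nonempty N]
    (hN : Fintype.card N ≤ n) : HomotopyGroup N (hawaiian n) (hawaiianPt n) ≃ₜ
      (ℕ → HomotopyGroup N (sphere (0 : EuclideanSpace ℝ (Fin (n + 1))) 1) (hawaiianBase n)) :=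
  (piInducedHomeomorph N (hawaiianHomeomorph n) (ShrinkingWedge.ext hawaiianCoord_pt)).trans
    (piCoordHomeomorph (by rw [finrank_euclideanSpace_fin]; lia)
      (by rw [finrank_euclideanSpace_fin]; lia))

lemma piHawaiianHomeomorph_apply (hn : 2 ≤ n) {N : Type*} [Fintype N] [Nonempty N]
    (hN : Fintype.card N ≤ n) (a : HomotopyGroup N (hawaiian n) (hawaiianPt n)) (j : ℕ) :
    piHawaiianHomeomorph hn hN a j = piInduced N (hawaiianCoord n j) (hawaiianCoord_pt j) a :=
  piInduced_piInduced (ShrinkingWedge.ext hawaiianCoord_pt) (coord_pt j) (hawaiianCoord_pt j) rfl a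

lemma piHawaiianHomeomorph_inclusion_eq (hn : 2 ≤ n) {N : Type*} [Fintype N] [Nonempty N]
    (hN : Fintype.card N ≤ n) {i j : ℕ} (hij : i < j)
    (a a' : HomotopyGroup N (Ysub n (i + 1)) (YsubPt n i)) :
    piHawaiianHomeomorph hn hN
        (piInduced N (inclHawaiian n (i + 1)) inclHawaiian_YsubPt a) j =
      piHawaiianHomeomorph hn hN
        (piInduced N (inclHawaiian n (i + 1)) inclHawaiian_YsubPt a') j := by
  have hconst := hawaiianCoord_comp_inclusion_of_le (n := n) (i := i + 1) hij
  simp only [piHawaiianHomeomorph_apply,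
    piInduced_piInduced inclHawaiian_YsubPt (hawaiianCoord_pt j) rfl hconst]
  exact piInduced_const_eq rfl a a'

/-- The retractions of the earring and of the `Ysub n i` onto `Ysub n k`: a map is of this kind if
it fixes `Ysub n k` and sends all other points to `0`. -/
structure IsCollapse {X : Set (EuclideanSpace ℝ (Fin (n + 1)))} {k : ℕ} (ρ : C(X, Ysub n k)) :
    Prop where
  apply_of_mem : ∀ z : X, z.1 ∈ Ysub n k → (ρ z : EuclideanSpace ℝ (Fin (n + 1))) = z
  apply_of_notMem : ∀ z : X, z.1 ∉ Ysub n k → (ρ z : EuclideanSpace ℝ (Fin (n + 1))) = 0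

namespace IsCollapse

variable {i k : ℕ}

lemma of_hawaiian {ρ : C(hawaiian n, Ysub n k)}
    (hfix : ∀ z : hawaiian n, z.1 ∈ Ysub n k → (ρ z : EuclideanSpace ℝ (Fin (n + 1))) = z)
    (hcoll : ∀ j, k < j → ∀ z : hawaiian n, z.1 ∈ hawSphere n j →
      (ρ z : EuclideanSpace ℝ (Fin (n + 1))) = 0) : IsCollapse ρ where
  apply_of_mem := hfix
  apply_of_notMem z hz :=
    let ⟨l, hl⟩ := mem_hawaiian_iff.mp z.2
    hcoll (l + 1) (not_le.mp fun hlk => hz (mem_Ysub_iff.mpr ⟨l, hlk, hl⟩)) z hl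

lemma of_Ysub {r : C(Ysub n i, Ysub n k)}
    (hfix : ∀ z : Ysub n i, z.1 ∈ Ysub n k → (r z : EuclideanSpace ℝ (Fin (n + 1))) = z)
    (hcoll : ∀ j, k < j → j ≤ i → ∀ z : Ysub n i, z.1 ∈ hawSphere n j →
      (r z : EuclideanSpace ℝ (Fin (n + 1))) = 0) : IsCollapse r where
  apply_of_mem := hfix
  apply_of_notMem z hz :=
    let ⟨l, hli, hl⟩ := mem_Ysub_iff.mp z.2
    hcoll (l + 1) (not_le.mp fun hlk => hz (mem_Ysub_iff.mpr ⟨l, hlk, hl⟩)) hli z hl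

lemma apply_zero {X : Set (EuclideanSpace ℝ (Fin (n + 1)))} {ρ : C(X, Ysub n (k + 1))}
    (hρ : IsCollapse ρ) (h0 : 0 ∈ X) : ρ ⟨0, h0⟩ = YsubPt n k :=
  Subtype.ext (hρ.apply_of_mem _ (zero_mem_Ysub n k))

variable {ρ : C(hawaiian n, Ysub n i)}

lemma comp_inclusion (hρ : IsCollapse ρ) :
    ρ.comp (inclHawaiian n i) = .id (Ysub n i) :=
  ContinuousMap.ext fun y => Subtype.ext (hρ.apply_of_mem _ y.2)

lemma hawaiianCoord_comp (hρ : IsCollapse ρ) {j : ℕ} (hj : j < i) :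
    (hawaiianCoord n j).comp ((inclHawaiian n i).comp ρ) =
      hawaiianCoord n j := by
  ext1 z
  by_cases hz : z.1 ∈ Ysub n i
  · exact congrArg (hawaiianCoord n j) (Subtype.ext (hρ.apply_of_mem z hz))
  · obtain ⟨l, hl⟩ := mem_hawaiian_iff.mp z.2
    have hjl : j ≠ l := by rintro rfl; exact hz (mem_Ysub_iff.mpr ⟨j, hj, hl⟩)
    have hρz : inclHawaiian n i (ρ z) = hawaiianPt n :=
      Subtype.ext (hρ.apply_of_notMem z hz)
    exact (congrArg (hawaiianCoord n j) hρz).trans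
      ((hawaiianCoord_pt j).trans (hawaiianCoord_of_ne hl hjl).symm)

lemma comp {X : Set (EuclideanSpace ℝ (Fin (n + 1)))} {ρ : C(X, Ysub n (i + 1))}
    {r : C(Ysub n (i + 1), Ysub n (k + 1))} {ρ' : C(X, Ysub n (k + 1))} (hki : k ≤ i)
    (hρ : IsCollapse ρ) (hr : IsCollapse r) (hρ' : IsCollapse ρ') : r.comp ρ = ρ' := by
  refine ContinuousMap.ext fun z => Subtype.ext ?_
  change (r (ρ z)).1 = _
  by_cases hi : z.1 ∈ Ysub n (i + 1)
  · have hρz := hρ.apply_of_mem z hi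
    by_cases hk : z.1 ∈ Ysub n (k + 1)
    · rw [hr.apply_of_mem _ (hρz ▸ hk), hρz, hρ'.apply_of_mem z hk]
    · rw [hr.apply_of_notMem _ (hρz ▸ hk), hρ'.apply_of_notMem z hk]
  · have hk : z.1 ∉ Ysub n (k + 1) := fun hk =>
      let ⟨l, hlk, hl⟩ := mem_Ysub_iff.mp hk
      hi (mem_Ysub_iff.mpr ⟨l, hlk.trans_le (by lia), hl⟩)
    have hρz := hρ.apply_of_notMem z hi
    rw [hr.apply_of_mem _ (hρz ▸ zero_mem_Ysub n k), hρz, hρ'.apply_of_notMem z hk]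

lemma piHawaiianHomeomorph_inclusion_retraction {ρ : C(hawaiian n, Ysub n (i + 1))}
    (hρ : IsCollapse ρ) (hn : 2 ≤ n) {N : Type*} [Fintype N] [Nonempty N]
    (hN : Fintype.card N ≤ n) (hρ0 : ρ (hawaiianPt n) = YsubPt n i)
    (a : HomotopyGroup N (hawaiian n) (hawaiianPt n)) :
    piHawaiianHomeomorph hn hN (piInduced N (inclHawaiian n (i + 1)) inclHawaiian_YsubPt
      (piInduced N ρ hρ0 a)) i = piHawaiianHomeomorph hn hN a i := by
  have hcomp : (inclHawaiian n (i + 1)).comp ρ (hawaiianPt n) = hawaiianPt n := by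
    rw [ContinuousMap.comp_apply, hρ0, inclHawaiian_YsubPt]
  rw [piHawaiianHomeomorph_apply, piHawaiianHomeomorph_apply,
    piInduced_piInduced hρ0 inclHawaiian_YsubPt hcomp rfl,
    piInduced_piInduced hcomp _ _ (hρ.hawaiianCoord_comp i.lt_succ_self)]

end IsCollapse

end Hawaiian

theorem beta_homeomorph_onto_invLim_general {n : ℕ} (hn : 2 ≤ n) {N : Type*} [Fintype N]
    [Nonempty N] (hN : Fintype.card N ≤ n) (R : ∀ i : ℕ, C(hawaiian n, Ysub n (i + 1)))
    (hR : ∀ i, IsCollapse (R i)) (r : ∀ i k : ℕ, k ≤ i → C(Ysub n (i + 1), Ysub n (k + 1)))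
    (hr : ∀ i k hki, IsCollapse (r i k hki)) :
    ∃ e : HomotopyGroup N (hawaiian n) (hawaiianPt n) ≃ₜ
      {γ : ∀ i : ℕ, HomotopyGroup N (Ysub n (i + 1)) (YsubPt n i) // ∀ (k i : ℕ) (hki : k ≤ i),
        piInduced N (r i k hki) ((hr i k hki).apply_zero (zero_mem_Ysub n i)) (γ i) = γ k},
      ∀ g i, (e g).1 i = piInduced N (R i) ((hR i).apply_zero (zero_mem_hawaiian n)) g := by
  have hR0 i : R i (hawaiianPt n) = YsubPt n i := (hR i).apply_zero (zero_mem_hawaiian n)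
  refine ⟨homeomorphInvLim (piHawaiianHomeomorph hn hN)
    (fun i => ⟨piInduced N (R i) (hR0 i), continuous_piInduced _ _⟩)
    (fun i => ⟨piInduced N (inclHawaiian n (i + 1)) inclHawaiian_YsubPt, continuous_piInduced _ _⟩)
    (fun i k hki => piInduced N (r i k hki) _) ?_ ?_ ?_ ?_, fun _ _ => rfl⟩
  · exact fun i y =>
      (piInduced_piInduced _ (hR0 i) rfl (hR i).comp_inclusion y).trans (piInduced_id y)
  · exact fun i k hki a => piInduced_piInduced _ _ _ ((hR i).comp hki (hr i k hki) (hR k)) a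
  · exact fun i a => (hR i).piHawaiianHomeomorph_inclusion_retraction hn hN (hR0 i) a
  · exact fun i j hij y y' => piHawaiianHomeomorph_inclusion_eq hn hN hij y y'

/-- For `n = m+2 ≥ 2`, the map `β_n : π_n^{top}(ℋ_n, 0) → ∏_{i} π_n^{top}(Y_{i+1}^{(n)}, 0)`,
`γ ↦ ((R_i)_*(γ))_i`, is a homeomorphism onto the inverse-limit subspace of families
compatible under the retractions `r_k^i` (product and subspace topologies). -/
theorem beta_homeomorph_onto_invLim (m : ℕ)
    (R : ∀ i : ℕ, C(↥(hawaiian (m+2)), ↥(Ysub (m+2) (i+1))))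
    (hRfix : ∀ (i : ℕ) (z : ↥(hawaiian (m+2))),
      (z : EuclideanSpace ℝ (Fin (m+3))) ∈ Ysub (m+2) (i+1) →
      ((R i z : ↥(Ysub (m+2) (i+1))) : EuclideanSpace ℝ (Fin (m+3))) = z)
    (hRcoll : ∀ (i j : ℕ), i + 1 < j → ∀ z : ↥(hawaiian (m+2)),
      (z : EuclideanSpace ℝ (Fin (m+3))) ∈ hawSphere (m+2) j →
      ((R i z : ↥(Ysub (m+2) (i+1))) : EuclideanSpace ℝ (Fin (m+3))) = 0)
    (hR0 : ∀ i : ℕ, R i (hawaiianPt (m+2)) = YsubPt (m+2) i)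
    (r : ∀ i k : ℕ, k ≤ i → C(↥(Ysub (m+2) (i+1)), ↥(Ysub (m+2) (k+1))))
    (hrfix : ∀ (i k : ℕ) (hki : k ≤ i) (z : ↥(Ysub (m+2) (i+1))),
      (z : EuclideanSpace ℝ (Fin (m+3))) ∈ Ysub (m+2) (k+1) →
      ((r i k hki z : ↥(Ysub (m+2) (k+1))) : EuclideanSpace ℝ (Fin (m+3))) = z)
    (hrcoll : ∀ (i k : ℕ) (hki : k ≤ i) (j : ℕ), k + 1 < j → j ≤ i + 1 →
      ∀ z : ↥(Ysub (m+2) (i+1)),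
      (z : EuclideanSpace ℝ (Fin (m+3))) ∈ hawSphere (m+2) j →
      ((r i k hki z : ↥(Ysub (m+2) (k+1))) : EuclideanSpace ℝ (Fin (m+3))) = 0)
    (hr0 : ∀ (i k : ℕ) (hki : k ≤ i), r i k hki (YsubPt (m+2) i) = YsubPt (m+2) k)
    :
    ∃ e : HomotopyGroup (Fin (m+2)) (hawaiian (m+2)) (hawaiianPt (m+2)) ≃ₜ
      {γ : ∀ i : ℕ, HomotopyGroup (Fin (m+2)) (Ysub (m+2) (i+1)) (YsubPt (m+2) i) //
        ∀ (k i : ℕ) (hki : k ≤ i),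
          piInduced (Fin (m+2)) (r i k hki) (hr0 i k hki) (γ i) = γ k},
      ∀ g (i : ℕ), (e g : ∀ i : ℕ,
          HomotopyGroup (Fin (m+2)) (Ysub (m+2) (i+1)) (YsubPt (m+2) i)) i =
        piInduced (Fin (m+2)) (R i) (hR0 i) g :=
  beta_homeomorph_onto_invLim_general (Nat.le_add_left 2 m) (Fintype.card_fin _).le
    R (fun i => .of_hawaiian (hRfix i) (hRcoll i))
    r fun i k hki => .of_Ysub (hrfix i k hki) (hrcoll i k hki)
end
end
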